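/- arXiv:2406.12720 — 5 statements merged into one kernel-verified Lean document; each statement's English description precedes it below -/
import Mathlib

section
/- Let 0 < s < 1 and 0 < α < 2s. Define c_α = ∫₀^∞ [(1+t)₊^α + (1-t)₊^α - 2] t^{-(1+2s)} dt. Then the integral converges absolutely, and c_α < 0 for 0 < α < s, c_α = 0 for α = s, and c_α > 0 for s < α < 2s. -/
open MeasureTheory

theorem abs_rpow_one_add_sub_le {α t : ℝ} (hα0 : 0 < α) (hα2 : α < 2) (ht : -1 ≤ t) :
    |(1 + t) ^ α - (1 + α * t)| ≤ t ^ 2 := by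
  have hx : 0 ≤ 1 + t := by linarith
  rcases le_total α 1 with h | h
  · have h1 := rpow_one_add_le_one_add_mul_self ht hα0.le h
    have h2 := rpow_one_add_le_one_add_mul_self ht (p := 1 - α) (by linarith) (by linarith)
    have h3 : (1 + t) ^ α * (1 + t) ^ (1 - α) = 1 + t := by
      rw [← Real.rpow_add_of_nonneg hx hα0.le (by linarith)]; simp
    have h4 : (1 + t) ≤ (1 + t) ^ α * (1 + (1 - α) * t) := by
      conv_lhs => rw [← h3]
      gcongr
    have h5 : 0 < 1 + (1 - α) * t := by nlinarith
    have h6 : 1 + α * t - t ^ 2 ≤ (1 + t) ^ α := by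
      by_contra! hc
      nlinarith [mul_lt_mul_of_pos_right hc h5, mul_nonneg (sq_nonneg t) hα0.le,
        mul_nonneg (sq_nonneg t) hx, mul_nonneg (mul_nonneg (sq_nonneg t) hx) (sub_nonneg.2 h)]
    rw [abs_le]; constructor <;> nlinarith [sq_nonneg t]
  · have h1 := one_add_mul_self_le_rpow_one_add ht h
    have h2 := rpow_one_add_le_one_add_mul_self ht (p := α - 1) (by linarith) (by linarith)
    have h3 : (1 + t) ^ α = (1 + t) * (1 + t) ^ (α - 1) := by
      nth_rewrite 2 [← Real.rpow_one (1 + t)]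
      rw [← Real.rpow_add_of_nonneg hx (by linarith) (by linarith)]; simp
    have h4 := mul_le_mul_of_nonneg_left h2 hx
    rw [← h3] at h4
    rw [abs_le]; constructor <;> nlinarith [sq_nonneg t]

theorem continuousOn_truncatedPower_integrand {s α : ℝ} (hα0 : 0 < α) :
    ContinuousOn (fun t : ℝ =>
      (max (1 + t) 0 ^ α + max (1 - t) 0 ^ α - 2) / t ^ (1 + 2 * s)) (Set.Ioi 0) := by
  refine ContinuousOn.div ?_ ?_ fun t ht => (Real.rpow_pos_of_pos ht _).ne'
  · refine Continuous.continuousOn ?_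
    refine ((Continuous.rpow_const (by fun_prop) fun _ => Or.inr hα0.le).add
      (Continuous.rpow_const (by fun_prop) fun _ => Or.inr hα0.le)).sub continuous_const
  · exact continuousOn_id.rpow_const fun t ht => Or.inl (ne_of_gt ht)

theorem integrableOn_truncatedPower {s α : ℝ} (hs0 : 0 < s) (hs1 : s < 1) (hα0 : 0 < α)
    (hα2 : α < 2 * s) :
    IntegrableOn (fun t : ℝ =>
      (max (1 + t) 0 ^ α + max (1 - t) 0 ^ α - 2) / t ^ (1 + 2 * s)) (Set.Ioi 0) := by
  have hc := continuousOn_truncatedPower_integrand (s := s) hα0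
  rw [← Set.Ioc_union_Ioi_eq_Ioi zero_le_one, integrableOn_union]
  constructor
  · have hint : IntegrableOn (fun t : ℝ => 2 * t ^ (1 - 2 * s)) (Set.Ioc 0 1) :=
      ((intervalIntegrable_iff_integrableOn_Ioc_of_le zero_le_one).1
        (intervalIntegral.intervalIntegrable_rpow' (by linarith))).const_mul 2
    refine hint.mono'
      ((hc.mono Set.Ioc_subset_Ioi_self).aestronglyMeasurable measurableSet_Ioc) ?_
    refine (ae_restrict_mem measurableSet_Ioc).mono fun t ht => ?_
    have h1 := abs_rpow_one_add_sub_le hα0 (by linarith) (t := t) (by linarith [ht.1])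
    have h2 := abs_rpow_one_add_sub_le hα0 (by linarith) (t := -t) (by linarith [ht.2])
    rw [max_eq_left (by linarith [ht.1]), max_eq_left (by linarith [ht.2]), Real.norm_eq_abs,
      abs_div, abs_of_pos (Real.rpow_pos_of_pos ht.1 _),
      div_le_iff₀ (Real.rpow_pos_of_pos ht.1 _), mul_assoc, ← Real.rpow_add ht.1,
      show 1 - 2 * s + (1 + 2 * s) = (2 : ℕ) by push_cast; ring, Real.rpow_natCast]
    rw [← sub_eq_add_neg] at h2
    rw [abs_le] at *
    constructor <;> linarith [h1.1, h1.2, h2.1, h2.2]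
  · have hint : IntegrableOn (fun t : ℝ => 6 * t ^ (α - (1 + 2 * s))) (Set.Ioi 1) :=
      (integrableOn_Ioi_rpow_of_lt (by linarith) one_pos).const_mul 6
    refine hint.mono'
      ((hc.mono (Set.Ioi_subset_Ioi zero_le_one)).aestronglyMeasurable measurableSet_Ioi) ?_
    refine (ae_restrict_mem measurableSet_Ioi).mono fun t (ht : 1 < t) => ?_
    have ht0 : 0 < t := one_pos.trans ht
    rw [max_eq_left (by linarith), max_eq_right (by linarith), Real.zero_rpow hα0.ne',
      Real.norm_eq_abs, abs_div, abs_of_pos (Real.rpow_pos_of_pos ht0 _),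
      div_le_iff₀ (Real.rpow_pos_of_pos ht0 _), mul_assoc, ← Real.rpow_add ht0, sub_add_cancel]
    have h1 : 1 ≤ t ^ α := Real.one_le_rpow ht.le hα0.le
    have h2 : (1 + t) ^ α ≤ (2 * t) ^ α := by gcongr; linarith
    have h3 : (2 : ℝ) ^ α ≤ 4 := by
      calc (2 : ℝ) ^ α ≤ 2 ^ (2 : ℝ) := by gcongr <;> linarith
        _ = 4 := by norm_num
    rw [Real.mul_rpow zero_le_two ht0.le] at h2
    have h4 : 0 ≤ (1 + t) ^ α := by positivity
    rw [abs_le]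
    constructor <;> nlinarith

theorem rpow_le_convex_comb {x α β : ℝ} (hx : 0 ≤ x) (hα0 : 0 < α) (hαβ : α < β) :
    x ^ α ≤ α / β * x ^ β + (1 - α / β) := by
  have hβ : 0 < β := hα0.trans hαβ
  have h := rpow_one_add_le_one_add_mul_self (s := x ^ β - 1) (p := α / β)
    (by linarith [Real.rpow_nonneg hx β]) (by positivity) (by rw [div_le_one hβ]; exact hαβ.le)
  rw [add_sub_cancel, ← Real.rpow_mul hx, mul_div_cancel₀ _ hβ.ne'] at h
  linarith

theorem integral_Ioi_one_inv_rpow {s : ℝ} (hs0 : 0 < s) :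
    ∫ t in Set.Ioi (1 : ℝ), 1 / t ^ (1 + 2 * s) = 1 / (2 * s) := by
  have h := integral_Ioi_rpow_of_lt (a := -(1 + 2 * s)) (by linarith) one_pos
  rw [Real.one_rpow, show -(1 + 2 * s) + 1 = -(2 * s) by ring, neg_div_neg_eq] at h
  rw [← h]
  refine setIntegral_congr_fun measurableSet_Ioi fun t (ht : 1 < t) => ?_
  simp only [Real.rpow_neg (one_pos.trans ht).le, one_div]

theorem integrableOn_Ioi_one_inv_rpow {s : ℝ} (hs0 : 0 < s) :
    IntegrableOn (fun t : ℝ => 1 / t ^ (1 + 2 * s)) (Set.Ioi 1) := by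
  refine (integrableOn_Ioi_rpow_of_lt (a := -(1 + 2 * s)) (by linarith) one_pos).congr_fun
    (fun t (ht : 1 < t) => ?_) measurableSet_Ioi
  simp only [Real.rpow_neg (one_pos.trans ht).le, one_div]

theorem integral_truncatedPower_le {s α β : ℝ} (hs0 : 0 < s) (hs1 : s < 1) (hα0 : 0 < α)
    (hαβ : α < β) (hβ2 : β < 2 * s) :
    (∫ t in Set.Ioi (0 : ℝ),
        (max (1 + t) 0 ^ α + max (1 - t) 0 ^ α - 2) / t ^ (1 + 2 * s)) ≤
      α / β * (∫ t in Set.Ioi (0 : ℝ),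
        (max (1 + t) 0 ^ β + max (1 - t) 0 ^ β - 2) / t ^ (1 + 2 * s)) -
        (1 - α / β) * (1 / (2 * s)) := by
  have hβ0 := hα0.trans hαβ
  have hI : IntegrableOn ((Set.Ioi (1 : ℝ)).indicator fun t : ℝ => 1 / t ^ (1 + 2 * s))
      (Set.Ioi 0) :=
    ((integrableOn_Ioi_one_inv_rpow hs0).integrable_indicator measurableSet_Ioi).integrableOn
  have hIe : (∫ t in Set.Ioi (0 : ℝ), (Set.Ioi (1 : ℝ)).indicator
      (fun t : ℝ => 1 / t ^ (1 + 2 * s)) t) = 1 / (2 * s) := by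
    rw [setIntegral_indicator measurableSet_Ioi,
      Set.inter_eq_right.2 (Set.Ioi_subset_Ioi zero_le_one), integral_Ioi_one_inv_rpow hs0]
  rw [← hIe, ← integral_const_mul, ← integral_const_mul, ← integral_sub
    ((integrableOn_truncatedPower hs0 hs1 hβ0 hβ2).const_mul _) (hI.const_mul _)]
  refine setIntegral_mono_on (integrableOn_truncatedPower hs0 hs1 hα0 (hαβ.trans hβ2))
    (((integrableOn_truncatedPower hs0 hs1 hβ0 hβ2).const_mul _).sub (hI.const_mul _))
    measurableSet_Ioi fun t (ht : 0 < t) => ?_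
  have hp : 0 < t ^ (1 + 2 * s) := Real.rpow_pos_of_pos ht _
  have h1 := rpow_le_convex_comb (le_max_right (1 + t) 0) hα0 hαβ
  by_cases h : t ∈ Set.Ioi (1 : ℝ)
  · rw [Set.indicator_of_mem h, max_eq_right (a := 1 - t) (by linarith [Set.mem_Ioi.1 h]),
      Real.zero_rpow hα0.ne', Real.zero_rpow hβ0.ne', ← mul_div_assoc, ← mul_div_assoc,
      ← sub_div]
    exact div_le_div_of_nonneg_right (by linarith) hp.le
  · have h2 := rpow_le_convex_comb (le_max_right (1 - t) 0) hα0 hαβ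
    rw [Set.indicator_of_notMem h, mul_zero, sub_zero, ← mul_div_assoc]
    exact div_le_div_of_nonneg_right (by linarith) hp.le

open Filter Set Topology in
theorem integral_truncatedPower_self {s : ℝ} (hs0 : 0 < s) (hs1 : s < 1) :
    (∫ t in Set.Ioi (0 : ℝ),
        (max (1 + t) 0 ^ s + max (1 - t) 0 ^ s - 2) / t ^ (1 + 2 * s)) = 0 := by
  have hfint := integrableOn_truncatedPower hs0 hs1 hs0 (by linarith)
  set f : ℝ → ℝ := fun t =>
    (max (1 + t) 0 ^ s + max (1 - t) 0 ^ s - 2) / t ^ (1 + 2 * s) with hf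
  set g : ℝ → ℝ := fun t => (max (1 + t) 0 ^ s - 1) / t ^ (1 + 2 * s) with hg
  set h : ℝ → ℝ := fun t => (1 - max (1 - t) 0 ^ s) / t ^ (1 + 2 * s) with hh
  have hfgh : ∀ t, f t = g t - h t := fun t => by simp only [hf, hg, hh]; ring
  have hden : ContinuousOn (fun t : ℝ => t ^ (1 + 2 * s)) (Ioi 0) :=
    continuousOn_id.rpow_const fun t ht => Or.inl (ne_of_gt ht)
  have hgc : ContinuousOn g (Ioi 0) :=
    (((Continuous.rpow_const (by fun_prop) fun _ => Or.inr hs0.le).sub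
      continuous_const).continuousOn).div hden fun t ht => (Real.rpow_pos_of_pos ht _).ne'
  have hhc : ContinuousOn h (Ioi 0) :=
    ((continuous_const.sub (Continuous.rpow_const (by fun_prop) fun _ =>
      Or.inr hs0.le)).continuousOn).div hden fun t ht => (Real.rpow_pos_of_pos ht _).ne'
  have hsub : ∀ {a b : ℝ}, 0 < a → 0 < b → uIcc a b ⊆ Ioi 0 := fun ha hb x hx =>
    (lt_min ha hb).trans_le hx.1
  have hgi : ∀ {a b : ℝ}, 0 < a → 0 < b → IntervalIntegrable g volume a b := fun ha hb =>
    (hgc.mono (hsub ha hb)).intervalIntegrable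
  have hhi : ∀ {a b : ℝ}, 0 < a → 0 < b → IntervalIntegrable h volume a b := fun ha hb =>
    (hhc.mono (hsub ha hb)).intervalIntegrable
  have hgd : ∀ {x : ℝ}, 0 < x → HasDerivAt (fun u => ∫ t in (1 : ℝ)..u, g t) (g x) x :=
    fun hx => intervalIntegral.integral_hasDerivAt_right (hgi one_pos hx)
      (hgc.stronglyMeasurableAtFilter isOpen_Ioi _ hx) (hgc.continuousAt (Ioi_mem_nhds hx))
  have hhd : ∀ {x : ℝ}, 0 < x → HasDerivAt (fun u => ∫ t in (1 : ℝ)..u, h t) (h x) x :=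
    fun hx => intervalIntegral.integral_hasDerivAt_right (hhi one_pos hx)
      (hhc.stronglyMeasurableAtFilter isOpen_Ioi _ hx) (hhc.continuousAt (Ioi_mem_nhds hx))
  have hh1 : EqOn h (fun t => 1 / t ^ (1 + 2 * s)) (Ioi 1) := fun t (ht : 1 < t) => by
    simp only [hh, max_eq_right (a := 1 - t) (b := 0) (by linarith), Real.zero_rpow hs0.ne',
      sub_zero]
  have hhint : IntegrableOn h (Ioi 1) :=
    (integrableOn_Ioi_one_inv_rpow hs0).congr_fun hh1.symm measurableSet_Ioi
  have hf1 : IntegrableOn f (Ioi 1) := hfint.mono_set (Ioi_subset_Ioi zero_le_one)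
  have hgint : IntegrableOn g (Ioi 1) := by
    refine (hf1.add hhint).congr_fun (fun t _ => ?_) measurableSet_Ioi
    simp [hfgh]
  have hfI : ∫ t in Ioi 1, f t = (∫ t in Ioi 1, g t) - 1 / (2 * s) := by
    rw [← integral_Ioi_one_inv_rpow hs0, ← setIntegral_congr_fun measurableSet_Ioi hh1,
      ← integral_sub hgint hhint]
    simp only [hfgh]
  set F : ℝ → ℝ := fun u => (1 - (1 - u) ^ s) ^ 2 / u ^ (2 * s) / (2 * s) with hF
  set D : ℝ → ℝ := fun u =>
    (∫ t in (1 : ℝ)..(u / (1 - u)), g t) - (∫ t in (1 : ℝ)..u, h t) - F u with hD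
  have hφ : ∀ {u : ℝ}, u < 1 → HasDerivAt (fun u : ℝ => u / (1 - u)) (1 / (1 - u) ^ 2) u := by
    intro u hu
    have h1 : (1 - u) ≠ 0 := by linarith
    refine ((hasDerivAt_id' u).div ((hasDerivAt_id' u).const_sub 1) h1).congr_deriv ?_
    ring
  have hDd : ∀ u ∈ Ioo (0 : ℝ) 1, HasDerivAt D 0 u := by
    intro u ⟨hu0, hu1⟩
    have hv : 0 < 1 - u := by linarith
    have hφ0 : 0 < u / (1 - u) := by positivity
    have d1 := (hgd hφ0).comp u (hφ hu1)
    have d3 : HasDerivAt (fun u : ℝ => (1 - u) ^ s) (-(s * (1 - u) ^ (s - 1))) u := by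
      refine (((hasDerivAt_id' u).const_sub 1).rpow_const (p := s)
        (Or.inl hv.ne')).congr_deriv ?_
      ring
    have d4 : HasDerivAt (fun u : ℝ => u ^ (2 * s)) (2 * s * u ^ (2 * s - 1)) u :=
      Real.hasDerivAt_rpow_const (Or.inl hu0.ne')
    have d5 := (((d3.const_sub 1).pow 2).div d4
      (Real.rpow_pos_of_pos hu0 _).ne').div_const (2 * s)
    refine ((d1.sub (hhd hu0)).sub d5).congr_deriv ?_
    have e1 : 1 + u / (1 - u) = (1 - u)⁻¹ := by field_simp; ring
    simp only [hg, hh, e1, Pi.pow_apply, max_eq_left (inv_pos.2 hv).le, max_eq_left hv.le,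
      Real.inv_rpow hv.le, Real.div_rpow hu0.le hv.le]
    rw [Real.rpow_sub hv, Real.rpow_sub hu0, Real.rpow_add hu0, Real.rpow_add hv,
      show 2 * s = s + s by ring, Real.rpow_add hu0, Real.rpow_add hv]
    simp only [Real.rpow_one]
    have p1 := Real.rpow_pos_of_pos hu0 s
    have p2 := Real.rpow_pos_of_pos hv s
    generalize u ^ s = a at *
    generalize (1 - u) ^ s = b at *
    field_simp
    ring
  obtain ⟨C, hC⟩ := isOpen_Ioo.exists_is_const_of_deriv_eq_zero
    (isPreconnected_Ioo (a := (0 : ℝ)) (b := 1)) (f := D)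
    (fun u hu => (hDd u hu).differentiableAt.differentiableWithinAt)
    (fun u hu => (hDd u hu).deriv)
  have hright : C = ∫ t in Ioi 1, f t := by
    have t1 : Tendsto D (𝓝[<] 1) (𝓝 ((∫ t in Ioi 1, g t) - 0 - 1 / (2 * s))) := by
      refine (Tendsto.sub ?_ ?_).sub ?_
      · refine intervalIntegral_tendsto_integral_Ioi 1 hgint ?_
        have a1 : Tendsto (fun u : ℝ => 1 - u) (𝓝[<] 1) (𝓝[>] 0) := by
          refine tendsto_nhdsWithin_iff.2 ⟨?_, ?_⟩
          · have : Tendsto (fun u : ℝ => 1 - u) (𝓝 1) (𝓝 (1 - 1)) :=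
              (continuous_const.sub continuous_id).tendsto 1
            rw [sub_self] at this
            exact this.mono_left nhdsWithin_le_nhds
          · filter_upwards [self_mem_nhdsWithin] with u hu
            exact sub_pos.2 (mem_Iio.1 hu)
        exact Tendsto.pos_mul_atTop one_pos (tendsto_id.mono_left nhdsWithin_le_nhds)
          a1.inv_tendsto_nhdsGT_zero
      · have := (hhd one_pos).continuousAt.tendsto
        simp only [intervalIntegral.integral_same] at this
        exact this.mono_left nhdsWithin_le_nhds
      · have : ContinuousAt F 1 := by
          refine ContinuousAt.div_const (ContinuousAt.div ?_ ?_ (by simp)) _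
          · exact (continuousAt_const.sub ((continuousAt_const.sub continuousAt_id).rpow_const
              (Or.inr hs0.le))).pow 2
          · exact continuousAt_id.rpow_const (Or.inl one_ne_zero)
        have h2 := this.tendsto
        simp only [hF, sub_self, Real.zero_rpow hs0.ne', sub_zero, Real.one_rpow, one_pow,
          div_one] at h2
        exact h2.mono_left nhdsWithin_le_nhds
    have t2 : Tendsto D (𝓝[<] 1) (𝓝 C) := by
      refine tendsto_const_nhds.congr' ?_
      filter_upwards [Ioo_mem_nhdsLT zero_lt_one] with u hu
      exact (hC u hu).symm
    rw [tendsto_nhds_unique t2 t1, hfI, sub_zero]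
  have hleft : C = -∫ t in Ioc 0 1, f t := by
    have hpow : Tendsto (fun u : ℝ => u ^ (2 - 2 * s)) (𝓝[>] 0) (𝓝 0) := by
      have : ContinuousAt (fun u : ℝ => u ^ (2 - 2 * s)) 0 :=
        continuousAt_id.rpow_const (Or.inr (by linarith))
      have h2 := this.tendsto
      rw [Real.zero_rpow (by linarith)] at h2
      exact h2.mono_left nhdsWithin_le_nhds
    have hF0 : Tendsto F (𝓝[>] 0) (𝓝 0) := by
      have hb : Tendsto (fun u : ℝ => u ^ (2 - 2 * s) / (2 * s)) (𝓝[>] 0) (𝓝 0) := by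
        simpa using hpow.div_const (2 * s)
      refine squeeze_zero' ?_ ?_ hb
      · filter_upwards [self_mem_nhdsWithin] with u (hu : 0 < u)
        simp only [hF]
        positivity
      · filter_upwards [Ioo_mem_nhdsGT zero_lt_one] with u ⟨hu0, hu1⟩
        have b1 : 1 - u ≤ (1 - u) ^ s :=
          Real.self_le_rpow_of_le_one (by linarith) (by linarith) hs1.le
        have b2 : (1 - u) ^ s ≤ 1 := Real.rpow_le_one (by linarith) (by linarith) hs0.le
        simp only [hF]
        rw [Real.rpow_sub hu0, Real.rpow_two]
        gcongr
        linarith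
    have hE : Tendsto (fun u => ∫ t in u..(u / (1 - u)), g t) (𝓝[>] 0) (𝓝 0) := by
      have hb : Tendsto (fun u : ℝ => 2 * u ^ (2 - 2 * s)) (𝓝[>] 0) (𝓝 0) := by
        simpa using hpow.const_mul 2
      refine squeeze_zero_norm' ?_ hb
      filter_upwards [Ioo_mem_nhdsGT (show (0 : ℝ) < 1 / 2 by norm_num)] with u ⟨hu0, hu1⟩
      have hv : 0 < 1 - u := by linarith
      have hle : u ≤ u / (1 - u) := by rw [le_div_iff₀ hv]; nlinarith
      have hbd : ∀ t ∈ uIoc u (u / (1 - u)), ‖g t‖ ≤ u ^ (-(2 * s)) := by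
        intro t ht
        rw [uIoc_of_le hle] at ht
        have ht0 : 0 < t := hu0.trans ht.1
        have b1 := rpow_one_add_le_one_add_mul_self (s := t) (by linarith) hs0.le hs1.le
        have b2 : 1 ≤ (1 + t) ^ s := Real.one_le_rpow (by linarith) hs0.le
        simp only [hg]
        rw [max_eq_left (by linarith), Real.norm_eq_abs, abs_of_nonneg
          (div_nonneg (by linarith) (by positivity))]
        calc ((1 + t) ^ s - 1) / t ^ (1 + 2 * s) ≤ t / t ^ (1 + 2 * s) := by
              gcongr; nlinarith
          _ = t ^ (-(2 * s)) := by
              rw [Real.rpow_add ht0, Real.rpow_one, Real.rpow_neg ht0.le]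
              field_simp
          _ ≤ u ^ (-(2 * s)) :=
              Real.rpow_le_rpow_of_nonpos hu0 ht.1.le (by linarith)
      refine (intervalIntegral.norm_integral_le_of_norm_le_const hbd).trans ?_
      rw [abs_of_nonneg (by linarith), show 2 - 2 * s = -(2 * s) + 2 by ring,
        Real.rpow_add hu0, Real.rpow_two]
      have : u / (1 - u) - u ≤ 2 * u ^ 2 := by
        rw [sub_le_iff_le_add, div_le_iff₀ hv]; nlinarith [mul_pos hu0 hu0]
      nlinarith [mul_le_mul_of_nonneg_left this (Real.rpow_nonneg hu0.le (-(2 * s)))]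
    have hP : Tendsto (fun u => ∫ t in (1 : ℝ)..u, f t) (𝓝[>] 0) (𝓝 (-∫ t in Ioc 0 1, f t)) := by
      have hi : IntegrableOn f (Ioc 0 1) := hfint.mono_set Ioc_subset_Ioi_self
      have := (aecover_Ioc_of_Ioc (μ := volume) (A := (0 : ℝ)) (B := 1) (l := 𝓝[>] (0 : ℝ))
        (a := id) (b := fun _ => 1) (tendsto_id.mono_left nhdsWithin_le_nhds)
        tendsto_const_nhds).integral_tendsto_of_countably_generated hi
      refine this.neg.congr' ?_
      filter_upwards [Ioo_mem_nhdsGT zero_lt_one] with u ⟨hu0, hu1⟩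
      rw [intervalIntegral.integral_of_ge hu1.le, Measure.restrict_restrict measurableSet_Ioc,
        id, inter_eq_left.2 (Ioc_subset_Ioc_left hu0.le)]
    have t2 : Tendsto (fun u => (∫ t in (1 : ℝ)..u, f t) + (∫ t in u..(u / (1 - u)), g t) - F u)
        (𝓝[>] 0) (𝓝 C) := by
      refine tendsto_const_nhds.congr' ?_
      filter_upwards [Ioo_mem_nhdsGT zero_lt_one] with u hu
      have hv : 0 < 1 - u := by linarith [hu.2]
      have hφ0 : 0 < u / (1 - u) := div_pos hu.1 hv
      rw [← hC u hu]
      simp only [hD, hfgh]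
      rw [intervalIntegral.integral_sub (hgi one_pos hu.1) (hhi one_pos hu.1),
        ← intervalIntegral.integral_add_adjacent_intervals (hgi one_pos hu.1) (hgi hu.1 hφ0)]
      ring
    have t1 := (hP.add hE).sub hF0
    rw [add_zero, sub_zero] at t1
    exact tendsto_nhds_unique t2 t1
  rw [← Ioc_union_Ioi_eq_Ioi zero_le_one, setIntegral_union (Ioc_disjoint_Ioi le_rfl)
    measurableSet_Ioi (hfint.mono_set Ioc_subset_Ioi_self) hf1]
  linarith

/-- The one-dimensional constant `c_α = ∫₀^∞ [(1+t)₊^α + (1-t)₊^α - 2] t^{-(1+2s)} dt`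
is well-defined (absolutely convergent) and its sign is that of `α - s`. -/
theorem stmt5 (s α : ℝ) (hs0 : 0 < s) (hs1 : s < 1) (hα0 : 0 < α) (hα2 : α < 2 * s) :
    IntegrableOn (fun t : ℝ =>
        (max (1 + t) 0 ^ α + max (1 - t) 0 ^ α - 2) / t ^ (1 + 2 * s)) (Set.Ioi 0) ∧
      (α < s → (∫ t in Set.Ioi (0 : ℝ),
        (max (1 + t) 0 ^ α + max (1 - t) 0 ^ α - 2) / t ^ (1 + 2 * s)) < 0) ∧
      (α = s → (∫ t in Set.Ioi (0 : ℝ),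
        (max (1 + t) 0 ^ α + max (1 - t) 0 ^ α - 2) / t ^ (1 + 2 * s)) = 0) ∧
      (s < α → 0 < ∫ t in Set.Ioi (0 : ℝ),
        (max (1 + t) 0 ^ α + max (1 - t) 0 ^ α - 2) / t ^ (1 + 2 * s)) := by
  have hself := integral_truncatedPower_self hs0 hs1
  refine ⟨integrableOn_truncatedPower hs0 hs1 hα0 hα2, fun h => ?_, fun h => ?_, fun h => ?_⟩
  · have hle := integral_truncatedPower_le hs0 hs1 hα0 h (by linarith)
    rw [hself, mul_zero, zero_sub] at hle
    have h1 : 0 < 1 - α / s := by rw [sub_pos, div_lt_one hs0]; exact h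
    have h2 : 0 < (1 - α / s) * (1 / (2 * s)) := by positivity
    linarith
  · rw [h]
    exact hself
  · have hle := integral_truncatedPower_le hs0 hs1 hs0 h hα2
    rw [hself] at hle
    have h1 : 0 < 1 - s / α := by rw [sub_pos, div_lt_one hα0]; exact h
    have h2 : 0 < (1 - s / α) * (1 / (2 * s)) := by positivity
    exact pos_of_mul_pos_right (by linarith) (div_pos hs0 hα0).le
end

section
/- Let 0 < s < 1, 0 < α < 2s, and let a ∈ L^∞(𝕊^{N-1}) be nonnegative and even with ∫_{𝕊^{N-1}} |θ_N|^{2s} a(θ) dθ > 0. Let w_α(x) = (x_N)₊^α and L be the operator Lu(x) = ∫_{ℝ^N} [u(x+y)+u(x-y)-2u(x)]|y|^{-(N+2s)} a(y/|y|) dy. Then for every x with x_N > 0, L w_α(x) = C_α x_N^{α-2s} where C_α = c_α ∫_{𝕊^{N-1}} |θ_N|^{2s} a(θ) dθ and c_α = ∫₀^∞ [(1+t)₊^α + (1-t)₊^α - 2] t^{-(1+2s)} dt. Consequently C_α < 0 if α < s, C_α = 0 if α = s, and C_α > 0 if s < α < 2s. -/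
open MeasureTheory

/-- The second difference at `1` of the function `x ↦ x₊^α`. -/
noncomputable def posPowSecondDiff (α t : ℝ) : ℝ :=
  max (1 + t) 0 ^ α + max (1 - t) 0 ^ α - 2

lemma posPowSecondDiff_abs (α t : ℝ) : posPowSecondDiff α |t| = posPowSecondDiff α t := by
  rcases abs_choice t with h | h <;> rw [h]
  simp only [posPowSecondDiff, sub_neg_eq_add, ← sub_eq_add_neg]
  ring

lemma continuous_posPowSecondDiff {α : ℝ} (hα : 0 ≤ α) : Continuous (posPowSecondDiff α) := by
  unfold posPowSecondDiff
  have h1 : Continuous fun t : ℝ ↦ max (1 + t) 0 ^ α :=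
    (by fun_prop : Continuous fun t : ℝ ↦ max (1 + t) 0).rpow_const fun _ ↦ Or.inr hα
  have h2 : Continuous fun t : ℝ ↦ max (1 - t) 0 ^ α :=
    (by fun_prop : Continuous fun t : ℝ ↦ max (1 - t) 0).rpow_const fun _ ↦ Or.inr hα
  fun_prop

lemma rpow_le_of_le_two {α b : ℝ} (hα0 : 0 ≤ α) (hα2 : α ≤ 2) (hb : 0 ≤ b) :
    b ^ α ≤ 1 + α / 2 * (b ^ 2 - 1) := by
  have h := rpow_one_add_le_one_add_mul_self (s := b ^ 2 - 1) (by nlinarith) (p := α / 2)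
    (by linarith) (by linarith)
  have e : (1 + (b ^ 2 - 1)) ^ (α / 2) = b ^ α := by
    rw [add_sub_cancel, ← Real.rpow_natCast, ← Real.rpow_mul hb]
    congr 1
    push_cast
    ring
  rwa [e] at h

lemma abs_posPowSecondDiff_le_of_le_one {α t : ℝ} (hα0 : 0 ≤ α) (hα2 : α ≤ 2) (ht0 : 0 ≤ t)
    (ht1 : t ≤ 1) : |posPowSecondDiff α t| ≤ 2 * t ^ 2 := by
  have hp : 0 ≤ 1 + t := by linarith
  have hm : 0 ≤ 1 - t := by linarith
  rw [posPowSecondDiff, max_eq_left hp, max_eq_left hm, abs_le]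
  constructor
  · have key : 1 - t ^ 2 ≤ (1 - t ^ 2) ^ (α / 2) :=
      Real.self_le_rpow_of_le_one (by nlinarith) (by nlinarith) (by linarith)
    have e : ((1 + t) ^ (α / 2)) * (1 - t) ^ (α / 2) = (1 - t ^ 2) ^ (α / 2) := by
      rw [← Real.mul_rpow hp hm]
      ring_nf
    have sq : ∀ b : ℝ, 0 ≤ b → b ^ α = (b ^ (α / 2)) ^ 2 := fun b hb ↦ by
      rw [← Real.rpow_natCast, ← Real.rpow_mul hb]
      congr 1
      push_cast
      ring
    rw [sq _ hp, sq _ hm]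
    nlinarith [sq_nonneg ((1 + t) ^ (α / 2) - (1 - t) ^ (α / 2))]
  · have h1 := rpow_le_of_le_two hα0 hα2 hp
    have h2 := rpow_le_of_le_two hα0 hα2 hm
    nlinarith [mul_nonneg (sub_nonneg.2 hα2) (sq_nonneg t)]

lemma abs_posPowSecondDiff_le_of_one_le {α t : ℝ} (hα0 : 0 < α) (ht1 : 1 ≤ t) :
    |posPowSecondDiff α t| ≤ (2 ^ α + 2) * t ^ α := by
  have hp : 0 ≤ 1 + t := by linarith
  have hm : 1 - t ≤ 0 := by linarith
  rw [posPowSecondDiff, max_eq_left hp, max_eq_right hm, Real.zero_rpow hα0.ne', abs_le]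
  have h1 : 1 ≤ t ^ α := Real.one_le_rpow ht1 hα0.le
  have h2 : (1 + t) ^ α ≤ 2 ^ α * t ^ α := by
    rw [← Real.mul_rpow (by norm_num) (by linarith)]
    exact Real.rpow_le_rpow hp (by linarith) hα0.le
  have h3 : 0 ≤ (1 + t) ^ α := Real.rpow_nonneg hp _
  constructor <;> nlinarith

/-- The integrand of the one-dimensional constant `c_α`. -/
noncomputable def barrierKernel (s α t : ℝ) : ℝ := posPowSecondDiff α t / t ^ (1 + 2 * s)

lemma measurable_barrierKernel (s : ℝ) {α : ℝ} (hα : 0 ≤ α) : Measurable (barrierKernel s α) :=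
  (continuous_posPowSecondDiff hα).measurable.div (by fun_prop)

lemma integrableOn_barrierKernel {s α : ℝ} (hs1 : s < 1) (hα0 : 0 < α)
    (hα2 : α < 2 * s) : IntegrableOn (barrierKernel s α) (Set.Ioi 0) := by
  have hmeas := measurable_barrierKernel s hα0.le
  rw [← Set.Ioc_union_Ioi_eq_Ioi (zero_le_one' ℝ)]
  refine IntegrableOn.union ?_ ?_
  · have hint : IntegrableOn (fun t : ℝ ↦ 2 * t ^ (1 - 2 * s)) (Set.Ioc 0 1) :=
      ((intervalIntegrable_iff_integrableOn_Ioc_of_le zero_le_one).1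
        (intervalIntegral.intervalIntegrable_rpow' (by linarith))).const_mul 2
    refine Integrable.mono' hint hmeas.aestronglyMeasurable ?_
    filter_upwards [ae_restrict_mem measurableSet_Ioc] with t ht
    rw [barrierKernel, norm_div, Real.norm_eq_abs, Real.norm_of_nonneg (Real.rpow_nonneg ht.1.le _),
      div_le_iff₀ (Real.rpow_pos_of_pos ht.1 _), mul_assoc, ← Real.rpow_add ht.1]
    convert! abs_posPowSecondDiff_le_of_le_one hα0.le (by linarith) ht.1.le ht.2 using 2
    rw [← Real.rpow_natCast]
    congr 1
    push_cast
    ring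
  · have hint : IntegrableOn (fun t : ℝ ↦ (2 ^ α + 2) * t ^ (α - (1 + 2 * s))) (Set.Ioi 1) :=
      (integrableOn_Ioi_rpow_of_lt (by linarith) one_pos).const_mul _
    refine Integrable.mono' hint hmeas.aestronglyMeasurable ?_
    filter_upwards [ae_restrict_mem measurableSet_Ioi] with t ht
    have ht0 : 0 < t := one_pos.trans ht
    rw [barrierKernel, norm_div, Real.norm_eq_abs, Real.norm_of_nonneg (Real.rpow_nonneg ht0.le _),
      div_le_iff₀ (Real.rpow_pos_of_pos ht0 _), mul_assoc, ← Real.rpow_add ht0, sub_add_cancel]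
    exact abs_posPowSecondDiff_le_of_one_le hα0 (le_of_lt ht)

lemma rpow_le_convex_combination {α β b : ℝ} (hβ : 0 < β) (hβα : β ≤ α) (hb : 0 ≤ b) :
    b ^ β ≤ 1 + β / α * (b ^ α - 1) := by
  have hα : 0 < α := hβ.trans_le hβα
  have h := rpow_one_add_le_one_add_mul_self (s := b ^ α - 1)
    (by linarith [Real.rpow_nonneg hb α]) (p := β / α)
    (by positivity) ((div_le_one hα).2 hβα)
  rwa [add_sub_cancel, ← Real.rpow_mul hb, mul_div_cancel₀ _ hα.ne'] at h

/-- Interpolation in the exponent between `c_α` and the limit of `c_γ` as `γ → 0`. -/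
lemma integral_barrierKernel_lt {s α β : ℝ} (hs1 : s < 1) (hβ : 0 < β)
    (hβα : β < α) (hα2 : α < 2 * s) :
    ∫ t in Set.Ioi (0 : ℝ), barrierKernel s β t <
      β / α * ∫ t in Set.Ioi (0 : ℝ), barrierKernel s α t := by
  have hα : 0 < α := hβ.trans hβα
  have hl0 : 0 < β / α := by positivity
  have hl1 : β / α < 1 := (div_lt_one hα).2 hβα
  have hint := (integrableOn_barrierKernel hs1 hα hα2).const_mul (β / α)
  have hintβ := integrableOn_barrierKernel hs1 hβ (hβα.trans hα2)
  have htail : IntegrableOn (fun t : ℝ ↦ (1 - β / α) * t ^ (-(1 + 2 * s))) (Set.Ioi 1) :=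
    (integrableOn_Ioi_rpow_of_lt (by linarith) one_pos).const_mul _
  have hind : IntegrableOn ((Set.Ioi (1 : ℝ)).indicator
      fun t : ℝ ↦ (1 - β / α) * t ^ (-(1 + 2 * s))) (Set.Ioi 0) :=
    ((integrable_indicator_iff measurableSet_Ioi).2 htail).integrableOn
  have hle : ∫ t in Set.Ioi (0 : ℝ), barrierKernel s β t ≤
      ∫ t in Set.Ioi (0 : ℝ), (β / α * barrierKernel s α t - (Set.Ioi (1 : ℝ)).indicator
        (fun t : ℝ ↦ (1 - β / α) * t ^ (-(1 + 2 * s))) t) := by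
    refine setIntegral_mono_on hintβ (hint.sub hind) measurableSet_Ioi fun t ht ↦ ?_
    have ht0 : (0 : ℝ) < t := ht
    have hk : 0 < t ^ (1 + 2 * s) := Real.rpow_pos_of_pos ht0 _
    have h1 := rpow_le_convex_combination hβ hβα.le (le_max_right (1 + t) 0)
    have h2 := rpow_le_convex_combination hβ hβα.le (le_max_right (1 - t) 0)
    by_cases h : t ∈ Set.Ioi (1 : ℝ)
    · rw [Set.indicator_of_mem h, Real.rpow_neg ht0.le, barrierKernel, barrierKernel, ← mul_div_assoc,
        ← div_eq_mul_inv, ← sub_div]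
      gcongr
      rw [Set.mem_Ioi] at h
      simp only [posPowSecondDiff]
      rw [max_eq_right (by linarith : 1 - t ≤ 0), Real.zero_rpow hα.ne', Real.zero_rpow hβ.ne']
      linarith
    · rw [Set.indicator_of_notMem h, sub_zero, barrierKernel, barrierKernel, ← mul_div_assoc]
      gcongr
      simp only [posPowSecondDiff]
      linarith
  rw [integral_sub hint hind, integral_const_mul, setIntegral_indicator measurableSet_Ioi,
    Set.inter_eq_self_of_subset_right (Set.Ioi_subset_Ioi zero_le_one), integral_const_mul,
    integral_Ioi_rpow_of_lt (by linarith) one_pos, Real.one_rpow] at hle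
  have : 0 < (1 - β / α) * (-1 / (-(1 + 2 * s) + 1)) :=
    mul_pos (by linarith) (div_pos_of_neg_of_neg (by norm_num) (by linarith))
  linarith

/-- The part of the integrand of `c_s` coming from the points to the left of `1`. -/
noncomputable def leftKernel (s t : ℝ) : ℝ := (max (1 - t) 0 ^ s - 1) / t ^ (1 + 2 * s)

lemma continuousOn_leftKernel {s : ℝ} (hs0 : 0 < s) :
    ContinuousOn (leftKernel s) (Set.Ioi 0) := by
  have h1 : Continuous fun t : ℝ ↦ max (1 - t) 0 ^ s :=
    (by fun_prop : Continuous fun t : ℝ ↦ max (1 - t) 0).rpow_const fun _ ↦ Or.inr hs0.le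
  refine (h1.sub continuous_const).continuousOn.div ?_ fun t ht ↦ (Real.rpow_pos_of_pos ht _).ne'
  exact continuousOn_id.rpow_const fun t ht ↦ Or.inl (ne_of_gt ht)

lemma intervalIntegrable_leftKernel {s a b : ℝ} (hs0 : 0 < s) (ha : 0 < a) (hb : 0 < b) :
    IntervalIntegrable (leftKernel s) volume a b :=
  ((continuousOn_leftKernel hs0).mono fun _ hx ↦ (lt_min ha hb).trans_le hx.1).intervalIntegrable

lemma hasDerivAt_integral_leftKernel {s x : ℝ} (hs0 : 0 < s) (hx : 0 < x) :
    HasDerivAt (fun u ↦ ∫ t in (1 : ℝ)..u, leftKernel s t) (leftKernel s x) x :=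
  intervalIntegral.integral_hasDerivAt_right (intervalIntegrable_leftKernel hs0 one_pos hx)
    ((continuousOn_leftKernel hs0).stronglyMeasurableAtFilter isOpen_Ioi x hx)
    ((continuousOn_leftKernel hs0).continuousAt (Ioi_mem_nhds hx))

lemma abs_leftKernel_le {s t : ℝ} (hs0 : 0 < s) (hs1 : s < 1) (ht0 : 0 < t) (ht1 : t ≤ 1) :
    |leftKernel s t| ≤ t ^ (-(2 * s)) := by
  have hm : 0 ≤ 1 - t := by linarith
  rw [leftKernel, max_eq_left hm, abs_div, abs_of_pos (Real.rpow_pos_of_pos ht0 _),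
    div_le_iff₀ (Real.rpow_pos_of_pos ht0 _), ← Real.rpow_add ht0]
  have e : -(2 * s) + (1 + 2 * s) = 1 := by ring
  rw [e, Real.rpow_one, abs_le]
  have h1 : 1 - t ≤ (1 - t) ^ s := Real.self_le_rpow_of_le_one hm (by linarith) hs1.le
  have h2 : (1 - t) ^ s ≤ 1 := Real.rpow_le_one hm (by linarith) hs0.le
  constructor <;> linarith

/-- A primitive of the integrand of `c_s`: the first term is elementary, and the difference of
the last two is an integral of `leftKernel s` over the short interval `[x / (1 + x), x]`. -/
noncomputable def barrierPrimitive (s x : ℝ) : ℝ :=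
  ((1 + x) ^ s - 1) ^ 2 * x ^ (-(2 * s)) / (2 * s) +
    ((∫ t in (1 : ℝ)..x, leftKernel s t) - ∫ t in (1 : ℝ)..(x / (1 + x)), leftKernel s t)

lemma hasDerivAt_barrierPrimitive {s x : ℝ} (hs0 : 0 < s) (hx : 0 < x) :
    HasDerivAt (barrierPrimitive s) (barrierKernel s s x) x := by
  have hx1 : 0 < 1 + x := by linarith
  have hδ : HasDerivAt (fun x : ℝ ↦ x / (1 + x)) (1 / (1 + x) ^ 2) x := by
    convert! (hasDerivAt_id x).div ((hasDerivAt_id x).const_add 1) hx1.ne' using 1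
    simp
  have h1 : HasDerivAt (fun x : ℝ ↦ (1 + x) ^ s) (1 * s * (1 + x) ^ (s - 1)) x :=
    ((hasDerivAt_id x).const_add 1).rpow_const (Or.inl hx1.ne')
  have h2 : HasDerivAt (fun x : ℝ ↦ x ^ (-(2 * s))) (1 * -(2 * s) * x ^ (-(2 * s) - 1)) x :=
    (hasDerivAt_id x).rpow_const (Or.inl hx.ne')
  have h3 := (((h1.sub_const 1).pow 2).mul h2).div_const (2 * s)
  have h4 := (hasDerivAt_integral_leftKernel hs0 hx).sub
    ((hasDerivAt_integral_leftKernel hs0 (div_pos hx hx1)).comp x hδ)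
  refine (h3.add h4).congr_deriv ?_
  have hxp : 0 < x ^ (2 * s) := Real.rpow_pos_of_pos hx _
  have hA : 0 < (1 + x) ^ s := Real.rpow_pos_of_pos hx1 _
  have e1 : x ^ (1 + 2 * s) = x * x ^ (2 * s) := by rw [Real.rpow_add hx, Real.rpow_one]
  have e2 : x ^ (-(2 * s) - 1) = (x * x ^ (2 * s))⁻¹ := by
    rw [← e1, ← Real.rpow_neg hx.le]; ring_nf
  have e3 : x ^ (-(2 * s)) = (x ^ (2 * s))⁻¹ := Real.rpow_neg hx.le _
  have e4 : (1 + x) ^ (s - 1) = (1 + x) ^ s / (1 + x) := Real.rpow_sub_one hx1.ne' _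
  have e5 : 1 - x / (1 + x) = (1 + x)⁻¹ := by field_simp; ring
  have e6 : (1 + x) ^ (1 + 2 * s) = (1 + x) * ((1 + x) ^ s) ^ 2 := by
    rw [Real.rpow_add hx1, Real.rpow_one, mul_comm 2 s, Real.rpow_mul hx1.le]
    norm_cast
  simp only [leftKernel, barrierKernel, posPowSecondDiff, e5, Pi.pow_apply]
  rw [max_eq_left hx1.le, max_eq_left (inv_nonneg.2 hx1.le), Real.inv_rpow hx1.le,
    Real.div_rpow hx.le hx1.le, e1, e2, e3, e4, e6]
  field_simp
  push_cast
  ring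

lemma barrierPrimitive_zero {s : ℝ} : barrierPrimitive s 0 = 0 := by
  simp [barrierPrimitive]

lemma continuousWithinAt_barrierPrimitive_zero {s : ℝ} (hs0 : 0 < s) (hs1 : s < 1) :
    ContinuousWithinAt (barrierPrimitive s) (Set.Ici 0) 0 := by
  rw [ContinuousWithinAt, barrierPrimitive_zero, ← Set.Ioi_insert, nhdsWithin_insert]
  refine Filter.Tendsto.sup ?_ ?_
  · simpa [barrierPrimitive_zero] using
      tendsto_pure_nhds (barrierPrimitive s) (0 : ℝ)
  have hlim : Filter.Tendsto (fun x : ℝ ↦ (1 / (2 * s) + 2 ^ (2 * s)) * x ^ (2 - 2 * s))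
      (nhdsWithin 0 (Set.Ioi 0)) (nhds 0) := by
    have h : ContinuousAt (fun x : ℝ ↦ (1 / (2 * s) + 2 ^ (2 * s)) * x ^ (2 - 2 * s)) 0 :=
      continuousAt_const.mul (Real.continuousAt_rpow_const _ _ (Or.inr (by linarith)))
    have h0 := h.tendsto
    rw [Real.zero_rpow (by linarith), mul_zero] at h0
    exact h0.mono_left nhdsWithin_le_nhds
  refine squeeze_zero_norm' ?_ hlim
  filter_upwards [Ioo_mem_nhdsGT (zero_lt_one' ℝ)] with x hx
  obtain ⟨hx0, hx1⟩ := hx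
  have hx2 : 0 < 1 + x := by linarith
  have hδ0 : 0 < x / (1 + x) := div_pos hx0 hx2
  have hδx : x / (1 + x) ≤ x := div_le_self hx0.le (by linarith)
  have hδ2 : x / 2 ≤ x / (1 + x) := by gcongr; linarith
  have hlen : x - x / (1 + x) ≤ x ^ 2 := by
    have : x - x / (1 + x) = x ^ 2 / (1 + x) := by field_simp; ring
    rw [this]
    exact div_le_self (by positivity) (by linarith)
  have hpow : x ^ 2 * x ^ (-(2 * s)) = x ^ (2 - 2 * s) := by
    rw [← Real.rpow_natCast, ← Real.rpow_add hx0]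
    norm_num
    ring_nf
  have hint : |(∫ t in (1 : ℝ)..x, leftKernel s t) -
      ∫ t in (1 : ℝ)..(x / (1 + x)), leftKernel s t| ≤ 2 ^ (2 * s) * x ^ (2 - 2 * s) := by
    rw [intervalIntegral.integral_interval_sub_left
      (intervalIntegrable_leftKernel hs0 one_pos hx0)
      (intervalIntegrable_leftKernel hs0 one_pos hδ0)]
    have hb := intervalIntegral.norm_integral_le_of_norm_le_const (a := x / (1 + x)) (b := x)
      (f := leftKernel s) (C := 2 ^ (2 * s) * x ^ (-(2 * s))) fun t ht ↦ by
        rw [Set.uIoc_of_le hδx] at ht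
        have ht0 : 0 < t := hδ0.trans ht.1
        refine (abs_leftKernel_le hs0 hs1 ht0 (ht.2.trans hx1.le)).trans ?_
        have : 2 ^ (2 * s) * x ^ (-(2 * s)) = (x / 2) ^ (-(2 * s)) := by
          rw [Real.div_rpow hx0.le zero_le_two, Real.rpow_neg zero_le_two, div_inv_eq_mul, mul_comm]
        rw [this]
        exact Real.rpow_le_rpow_of_nonpos (by positivity) (hδ2.trans ht.1.le) (by linarith)
    refine hb.trans ?_
    rw [abs_of_nonneg (sub_nonneg.2 hδx), ← hpow, mul_assoc, mul_comm (x ^ 2)]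
    gcongr
  have hG : |((1 + x) ^ s - 1) ^ 2 * x ^ (-(2 * s)) / (2 * s)| ≤ 1 / (2 * s) * x ^ (2 - 2 * s) := by
    have hp : 0 < x ^ (-(2 * s)) := Real.rpow_pos_of_pos hx0 _
    rw [abs_of_nonneg (by positivity), ← hpow, div_mul_eq_mul_div, one_mul]
    have h1 : 1 ≤ (1 + x) ^ s := Real.one_le_rpow (by linarith) hs0.le
    have h2 : (1 + x) ^ s ≤ 1 + x := by
      simpa using Real.rpow_le_rpow_of_exponent_le (by linarith : 1 ≤ 1 + x) hs1.le
    gcongr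
    linarith
  rw [barrierPrimitive, Real.norm_eq_abs, add_mul]
  exact (abs_add_le _ _).trans (add_le_add hG hint)

lemma integral_leftKernel_of_one_le {s x : ℝ} (hs0 : 0 < s) (hx : 1 ≤ x) :
    ∫ t in (1 : ℝ)..x, leftKernel s t = (x ^ (-(2 * s)) - 1) / (2 * s) := by
  have h0 : (0 : ℝ) ∉ Set.uIcc 1 x := by
    rw [Set.uIcc_of_le hx]
    exact fun h ↦ absurd h.1 (by norm_num)
  have : ∫ t in (1 : ℝ)..x, leftKernel s t = ∫ t in (1 : ℝ)..x, -(t ^ (-(1 + 2 * s))) := by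
    refine intervalIntegral.integral_congr fun t ht ↦ ?_
    rw [Set.uIcc_of_le hx] at ht
    have h1 : 1 ≤ t := ht.1
    simp only [leftKernel]
    rw [max_eq_right (by linarith), Real.zero_rpow hs0.ne', Real.rpow_neg (by linarith)]
    ring
  rw [this, intervalIntegral.integral_neg, integral_rpow (Or.inr ⟨by linarith, h0⟩)]
  have e : -(1 + 2 * s) + 1 = -(2 * s) := by ring
  rw [e, Real.one_rpow, div_neg, neg_neg]

lemma tendsto_barrierPrimitive_atTop {s : ℝ} (hs0 : 0 < s) :
    Filter.Tendsto (barrierPrimitive s) Filter.atTop (nhds 0) := by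
  have hinv : Filter.Tendsto (fun x : ℝ ↦ x ^ (-s)) Filter.atTop (nhds 0) :=
    tendsto_rpow_neg_atTop hs0
  have hinv2 : Filter.Tendsto (fun x : ℝ ↦ x ^ (-(2 * s))) Filter.atTop (nhds 0) :=
    tendsto_rpow_neg_atTop (by linarith)
  have hone : Filter.Tendsto (fun x : ℝ ↦ 1 + x⁻¹) Filter.atTop (nhds 1) := by
    simpa using tendsto_inv_atTop_zero.const_add (1 : ℝ)
  have hδ : Filter.Tendsto (fun x : ℝ ↦ x / (1 + x)) Filter.atTop (nhds 1) := by
    have h := hone.inv₀ one_ne_zero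
    rw [inv_one] at h
    refine h.congr' ?_
    filter_upwards [Filter.eventually_gt_atTop 0] with x hx
    field_simp
    ring
  have h1 : Filter.Tendsto (fun x : ℝ ↦ ((1 + x⁻¹) ^ s - x ^ (-s)) ^ 2 / (2 * s)) Filter.atTop
      (nhds ((1 ^ s - 0) ^ 2 / (2 * s))) :=
    (((hone.rpow_const (Or.inl one_ne_zero)).sub hinv).pow 2).div_const _
  have h2 : Filter.Tendsto (fun x : ℝ ↦ (x ^ (-(2 * s)) - 1) / (2 * s)) Filter.atTop
      (nhds ((0 - 1) / (2 * s))) := (hinv2.sub_const 1).div_const _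
  have h3 : Filter.Tendsto (fun x : ℝ ↦ ∫ t in (1 : ℝ)..(x / (1 + x)), leftKernel s t)
      Filter.atTop (nhds 0) := by
    have := (hasDerivAt_integral_leftKernel hs0 one_pos).continuousAt.tendsto.comp hδ
    rwa [intervalIntegral.integral_same] at this
  have h := h1.add (h2.sub h3)
  have e : (((1 : ℝ) ^ s - 0) ^ 2 / (2 * s)) + ((0 - 1) / (2 * s) - 0) = 0 := by
    rw [Real.one_rpow]; ring
  rw [e] at h
  refine h.congr' ?_
  filter_upwards [Filter.eventually_ge_atTop 1] with x hx
  have hx0 : 0 < x := by linarith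
  have hx1 : 0 < 1 + x := by linarith
  rw [barrierPrimitive, integral_leftKernel_of_one_le hs0 hx]
  congr 2
  have e1 : 1 + x⁻¹ = (1 + x) * x⁻¹ := by field_simp; ring
  have e2 : x ^ (-(2 * s)) = (x ^ (-s)) ^ 2 := by
    rw [← Real.rpow_natCast, ← Real.rpow_mul hx0.le]
    congr 1
    push_cast
    ring
  rw [e1, Real.mul_rpow hx1.le (inv_nonneg.2 hx0.le), Real.inv_rpow hx0.le, ← Real.rpow_neg hx0.le,
    e2]
  ring

lemma integral_barrierKernel_self {s : ℝ} (hs0 : 0 < s) (hs1 : s < 1) :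
    ∫ t in Set.Ioi (0 : ℝ), barrierKernel s s t = 0 := by
  rw [integral_Ioi_of_hasDerivAt_of_tendsto (continuousWithinAt_barrierPrimitive_zero hs0 hs1)
    (fun x hx ↦ hasDerivAt_barrierPrimitive hs0 hx)
    (integrableOn_barrierKernel hs1 hs0 (by linarith)) (tendsto_barrierPrimitive_atTop hs0),
    barrierPrimitive_zero, sub_zero]

lemma integral_barrierKernel_neg {s α : ℝ} (hs1 : s < 1) (hα : 0 < α) (h : α < s) :
    ∫ t in Set.Ioi (0 : ℝ), barrierKernel s α t < 0 := by
  have hs0 := hα.trans h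
  simpa [integral_barrierKernel_self hs0 hs1] using
    integral_barrierKernel_lt hs1 hα h (by linarith)

lemma integral_barrierKernel_pos {s α : ℝ} (hs0 : 0 < s) (hs1 : s < 1) (h : s < α)
    (hα2 : α < 2 * s) : 0 < ∫ t in Set.Ioi (0 : ℝ), barrierKernel s α t := by
  have h1 := integral_barrierKernel_lt hs1 hs0 h hα2
  rw [integral_barrierKernel_self hs0 hs1] at h1
  exact (pos_iff_pos_of_mul_pos h1).1 (div_pos hs0 (hs0.trans h))

section Polar

open Measure

lemma integrable_volumeIoiPow_iff (n : ℕ) (f : ℝ → ℝ) :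
    Integrable (fun r : Set.Ioi (0 : ℝ) ↦ f r) (volumeIoiPow n) ↔
      IntegrableOn (fun r ↦ r ^ n * f r) (Set.Ioi 0) := by
  rw [integrableOn_iff_comap_subtypeVal measurableSet_Ioi, volumeIoiPow,
    integrable_withDensity_iff_integrable_smul' (by fun_prop) (by simp)]
  refine integrable_congr (.of_forall ?_)
  rintro ⟨r, hr : 0 < r⟩
  simp [ENNReal.toReal_ofReal (pow_nonneg hr.le n)]

lemma integral_volumeIoiPow (n : ℕ) (f : ℝ → ℝ) :
    ∫ r : Set.Ioi (0 : ℝ), f r ∂(volumeIoiPow n) = ∫ r in Set.Ioi (0 : ℝ), r ^ n * f r := by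
  rw [volumeIoiPow, integral_withDensity_eq_integral_toReal_smul (by fun_prop) (by simp),
    ← integral_subtype_comap measurableSet_Ioi]
  refine integral_congr_ae (.of_forall ?_)
  rintro ⟨r, hr : 0 < r⟩
  simp [ENNReal.toReal_ofReal (pow_nonneg hr.le n)]

variable {E : Type*} [NormedAddCommGroup E] [NormedSpace ℝ E] [MeasurableSpace E] [BorelSpace E]
  [Nontrivial E] [FiniteDimensional ℝ E]

/-- Integration in polar coordinates. -/
lemma integral_eq_integral_prod_toSphere (μ : Measure E) [μ.IsAddHaarMeasure] (f : E → ℝ) :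
    ∫ y, f y ∂μ = ∫ p : Metric.sphere (0 : E) 1 × Set.Ioi (0 : ℝ), f ((p.2 : ℝ) • (p.1 : E))
      ∂(μ.toSphere.prod (volumeIoiPow (Module.finrank ℝ E - 1))) := by
  calc
    ∫ y, f y ∂μ = ∫ y : ({(0)}ᶜ : Set E), f y ∂(μ.comap (↑)) := by
      rw [integral_subtype_comap (measurableSet_singleton _).compl f, restrict_compl_singleton]
    _ = _ := by
      rw [← μ.measurePreserving_homeomorphUnitSphereProd.integral_comp
        (Homeomorph.measurableEmbedding _)]
      refine integral_congr_ae (.of_forall ?_)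
      rintro ⟨y, hy⟩
      have hy0 : ‖y‖ ≠ 0 := norm_ne_zero_iff.2 hy
      simp [smul_smul, hy0]

end Polar

lemma integral_dilation (f : ℝ → ℝ) {p m : ℝ} (hp : 0 < p) (hm : 0 ≤ m) :
    ∫ r in Set.Ioi (0 : ℝ), m ^ (1 + p) * f (m * r) =
      m ^ p * ∫ t in Set.Ioi (0 : ℝ), f t := by
  rcases hm.eq_or_lt with rfl | hm
  · simp [Real.zero_rpow hp.ne', Real.zero_rpow (by linarith : 1 + p ≠ 0)]
  · rw [integral_const_mul, integral_comp_mul_left_Ioi f 0 hm, mul_zero, smul_eq_mul, ← mul_assoc,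
      Real.rpow_add hm, Real.rpow_one]
    field_simp

lemma integrableOn_dilation {f : ℝ → ℝ} {p m : ℝ} (hp : 0 < p) (hm : 0 ≤ m)
    (hf : IntegrableOn f (Set.Ioi 0)) :
    IntegrableOn (fun r ↦ m ^ (1 + p) * f (m * r)) (Set.Ioi 0) := by
  rcases hm.eq_or_lt with rfl | hm
  · simp [Real.zero_rpow (by linarith : 1 + p ≠ 0)]
  · refine Integrable.const_mul ?_ _
    exact (integrableOn_Ioi_comp_mul_left_iff f 0 hm).2 (by rwa [mul_zero])

lemma posPow_secondDiff_eq {α X z : ℝ} (hX : 0 < X) :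
    max (X + z) 0 ^ α + max (X - z) 0 ^ α - 2 * max X 0 ^ α =
      X ^ α * posPowSecondDiff α (z / X) := by
  have h (w : ℝ) : max (X * w) 0 ^ α = X ^ α * max w 0 ^ α := by
    rw [← Real.mul_rpow hX.le (le_max_right _ _), mul_max_of_nonneg _ _ hX.le, mul_zero]
  have e1 : X + z = X * (1 + z / X) := by field_simp
  have e2 : X - z = X * (1 - z / X) := by field_simp
  rw [e1, e2, h, h, max_eq_left hX.le, posPowSecondDiff]
  ring

lemma pow_mul_radial_eq {n : ℕ} {s α X m r : ℝ} (hm : 0 ≤ m) (hr : 0 < r)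
    (A : ℝ) :
    r ^ n * (X ^ α * posPowSecondDiff α (m * r) * r ^ (-((n + 1 : ℝ) + 2 * s)) * A) =
      X ^ α * A * (m ^ (1 + 2 * s) * barrierKernel s α (m * r)) := by
  have hrp := Real.rpow_pos_of_pos hr (1 + 2 * s)
  have e : r ^ (-((n + 1 : ℝ) + 2 * s)) = (r ^ n * r ^ (1 + 2 * s))⁻¹ := by
    rw [Real.rpow_neg hr.le, add_assoc, Real.rpow_add hr, Real.rpow_natCast]
  rw [e, barrierKernel]
  rcases hm.eq_or_lt with rfl | hm
  · simp [posPowSecondDiff, one_add_one_eq_two]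
  · have hmp := Real.rpow_pos_of_pos hm (1 + 2 * s)
    rw [Real.mul_rpow hm.le hr.le]
    field_simp

/-- The polar form of the integrand defining `L w_α`. -/
lemma integral_prod_radial {S : Type*} [MeasurableSpace S] (σ : Measure S) [IsFiniteMeasure σ]
    (n : ℕ) {s α X D M : ℝ} (hs0 : 0 < s) (hs1 : s < 1) (hα0 : 0 < α) (hα2 : α < 2 * s)
    {A m : S → ℝ} (hA : Measurable A) (hm : Measurable m) (hA0 : ∀ θ, 0 ≤ A θ)
    (hAD : ∀ θ, A θ ≤ D) (hm0 : ∀ θ, 0 ≤ m θ) (hmM : ∀ θ, m θ ≤ M) :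
    ∫ p : S × Set.Ioi (0 : ℝ), X ^ α * posPowSecondDiff α (m p.1 * p.2) *
        (p.2 : ℝ) ^ (-((n + 1 : ℝ) + 2 * s)) * A p.1 ∂(σ.prod (Measure.volumeIoiPow n)) =
      X ^ α * ((∫ t in Set.Ioi (0 : ℝ), barrierKernel s α t) *
        ∫ θ, m θ ^ (2 * s) * A θ ∂σ) := by
  have hk := integrableOn_barrierKernel hs1 hα0 hα2
  have h2s : 0 < 2 * s := by linarith
  have hrad (θ : S) : Set.EqOn
      (fun r : ℝ ↦ r ^ n * (X ^ α * posPowSecondDiff α (m θ * r) *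
        r ^ (-((n + 1 : ℝ) + 2 * s)) * A θ))
      (fun r ↦ X ^ α * A θ * (m θ ^ (1 + 2 * s) * barrierKernel s α (m θ * r))) (Set.Ioi 0) :=
    fun r hr ↦ pow_mul_radial_eq (hm0 θ) hr _
  have hmeas : Measurable fun p : S × Set.Ioi (0 : ℝ) ↦
      X ^ α * posPowSecondDiff α (m p.1 * p.2) *
        (p.2 : ℝ) ^ (-((n + 1 : ℝ) + 2 * s)) * A p.1 := by
    have h1 : Measurable fun p : S × Set.Ioi (0 : ℝ) ↦ posPowSecondDiff α (m p.1 * p.2) :=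
      (continuous_posPowSecondDiff hα0.le).measurable.comp (by fun_prop)
    fun_prop
  have hint : Integrable (fun p : S × Set.Ioi (0 : ℝ) ↦
      X ^ α * posPowSecondDiff α (m p.1 * p.2) *
        (p.2 : ℝ) ^ (-((n + 1 : ℝ) + 2 * s)) * A p.1) (σ.prod (Measure.volumeIoiPow n)) := by
    rw [integrable_prod_iff hmeas.aestronglyMeasurable]
    constructor
    · refine .of_forall fun θ ↦ ?_
      rw [integrable_volumeIoiPow_iff n fun r ↦ X ^ α * posPowSecondDiff α (m θ * r) *
        r ^ (-((n + 1 : ℝ) + 2 * s)) * A θ, integrableOn_congr_fun (hrad θ) measurableSet_Ioi]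
      exact (integrableOn_dilation h2s (hm0 θ) hk).const_mul _
    · have hnorm (θ : S) : ∫ r : Set.Ioi (0 : ℝ), ‖X ^ α * posPowSecondDiff α (m θ * r) *
          (r : ℝ) ^ (-((n + 1 : ℝ) + 2 * s)) * A θ‖ ∂(Measure.volumeIoiPow n) =
          |X ^ α| * (∫ t in Set.Ioi (0 : ℝ), |barrierKernel s α t|) * (m θ ^ (2 * s) * A θ) := by
        rw [integral_volumeIoiPow n fun r ↦ ‖X ^ α * posPowSecondDiff α (m θ * r) *
          r ^ (-((n + 1 : ℝ) + 2 * s)) * A θ‖]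
        have : Set.EqOn (fun r : ℝ ↦ r ^ n * ‖X ^ α * posPowSecondDiff α (m θ * r) *
            r ^ (-((n + 1 : ℝ) + 2 * s)) * A θ‖)
            (fun r ↦ |X ^ α| * A θ * (m θ ^ (1 + 2 * s) * |barrierKernel s α (m θ * r)|))
            (Set.Ioi 0) := fun r hr ↦ by
          have h := congrArg abs (hrad θ hr)
          have hrn : 0 ≤ r ^ n := pow_nonneg (le_of_lt hr) n
          simp only [abs_mul, abs_of_nonneg (hA0 θ), abs_of_nonneg hrn,
            abs_of_nonneg (Real.rpow_nonneg (hm0 θ) (1 + 2 * s))] at h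
          simpa only [Real.norm_eq_abs, abs_mul, abs_of_nonneg (hA0 θ)] using h
        rw [setIntegral_congr_fun measurableSet_Ioi this, integral_const_mul,
          integral_dilation (fun t ↦ |barrierKernel s α t|) h2s (hm0 θ)]
        ring
      simp only [hnorm]
      refine Integrable.const_mul ?_ _
      refine Integrable.of_bound (C := M ^ (2 * s) * D) (by fun_prop) (.of_forall fun θ ↦ ?_)
      rw [Real.norm_of_nonneg (mul_nonneg (Real.rpow_nonneg (hm0 θ) _) (hA0 θ))]
      have := hm0 θ
      have := hA0 θ
      have := hmM θ
      have := hAD θ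
      have : 0 ≤ M := by linarith
      gcongr
  rw [integral_prod _ hint]
  have hin (θ : S) : ∫ r : Set.Ioi (0 : ℝ), X ^ α * posPowSecondDiff α (m θ * r) *
      (r : ℝ) ^ (-((n + 1 : ℝ) + 2 * s)) * A θ ∂(Measure.volumeIoiPow n) =
      X ^ α * (∫ t in Set.Ioi (0 : ℝ), barrierKernel s α t) * (m θ ^ (2 * s) * A θ) := by
    rw [integral_volumeIoiPow n fun r ↦ X ^ α * posPowSecondDiff α (m θ * r) *
      r ^ (-((n + 1 : ℝ) + 2 * s)) * A θ, setIntegral_congr_fun measurableSet_Ioi (hrad θ),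
      integral_const_mul, integral_dilation (barrierKernel s α) h2s (hm0 θ)]
    ring
  simp only [hin]
  rw [integral_const_mul, mul_assoc]

lemma integral_stable_barrier (n : ℕ) {s α D : ℝ} (hs0 : 0 < s) (hs1 : s < 1) (hα0 : 0 < α)
    (hα2 : α < 2 * s) {a : EuclideanSpace ℝ (Fin (n + 1)) → ℝ} (ha : Measurable a)
    (hanonneg : ∀ θ, 0 ≤ a θ) (habd : ∀ θ, a θ ≤ D)
    {x : EuclideanSpace ℝ (Fin (n + 1))} (hx : 0 < x (Fin.last n)) :
    ∫ y : EuclideanSpace ℝ (Fin (n + 1)),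
        (max ((x + y) (Fin.last n)) 0 ^ α + max ((x - y) (Fin.last n)) 0 ^ α -
            2 * max (x (Fin.last n)) 0 ^ α) *
          ‖y‖ ^ (-((n + 1 : ℝ) + 2 * s)) * a (‖y‖⁻¹ • y) =
      ((∫ t in Set.Ioi (0 : ℝ), barrierKernel s α t) *
        ∫ θ : Metric.sphere (0 : EuclideanSpace ℝ (Fin (n + 1))) 1,
          |(θ : EuclideanSpace ℝ (Fin (n + 1))) (Fin.last n)| ^ (2 * s) * a θ
            ∂((volume : Measure (EuclideanSpace ℝ (Fin (n + 1)))).toSphere)) *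
        x (Fin.last n) ^ (α - 2 * s) := by
  set X := x (Fin.last n) with hX
  rw [integral_eq_integral_prod_toSphere, finrank_euclideanSpace_fin, Nat.add_sub_cancel]
  have hcoord : Measurable fun θ : Metric.sphere (0 : EuclideanSpace ℝ (Fin (n + 1))) 1 ↦
      |(θ : EuclideanSpace ℝ (Fin (n + 1))) (Fin.last n)| / X := by fun_prop
  have key := integral_prod_radial
    ((volume : Measure (EuclideanSpace ℝ (Fin (n + 1)))).toSphere) n (X := X) (D := D)
    (M := 1 / X) hs0 hs1 hα0 hα2
    (A := fun θ : Metric.sphere (0 : EuclideanSpace ℝ (Fin (n + 1))) 1 ↦ a θ)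
    (ha.comp measurable_subtype_coe) hcoord (fun θ ↦ hanonneg _) (fun θ ↦ habd _)
    (fun θ ↦ by positivity) (fun θ ↦ by
      gcongr
      have h := PiLp.norm_apply_le (θ : EuclideanSpace ℝ (Fin (n + 1))) (Fin.last n)
      rwa [norm_eq_of_mem_sphere, Real.norm_eq_abs] at h)
  convert! key using 1
  · refine integral_congr_ae (.of_forall fun p ↦ ?_)
    have hr : (0 : ℝ) < p.2 := p.2.2
    have hn : ‖(p.2 : ℝ) • (p.1 : EuclideanSpace ℝ (Fin (n + 1)))‖ = p.2 := by
      rw [norm_smul, norm_eq_of_mem_sphere, mul_one, Real.norm_of_nonneg hr.le]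
    simp only [hn, smul_smul, inv_mul_cancel₀ hr.ne', one_smul, PiLp.add_apply, PiLp.sub_apply,
      PiLp.smul_apply, smul_eq_mul, ← hX]
    rw [posPow_secondDiff_eq hx, ← posPowSecondDiff_abs, abs_div, abs_mul, abs_of_pos hr,
      abs_of_pos hx]
    congr 4
    ring
  · have hdiv (θ : Metric.sphere (0 : EuclideanSpace ℝ (Fin (n + 1))) 1) :
        (|(θ : EuclideanSpace ℝ (Fin (n + 1))) (Fin.last n)| / X) ^ (2 * s) * a θ =
        (X ^ (2 * s))⁻¹ *
          (|(θ : EuclideanSpace ℝ (Fin (n + 1))) (Fin.last n)| ^ (2 * s) * a θ) := by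
      rw [Real.div_rpow (abs_nonneg _) hx.le]
      ring
    simp only [hdiv]
    rw [integral_const_mul, Real.rpow_sub hx]
    ring

/-- Action of the stable operator `L` on the barrier `w_α(x) = (x_N)₊^α`:
`L w_α (x) = C_α x_N^{α-2s}` on the upper half-space, with
`C_α = c_α ∫_{𝕊^{N-1}} |θ_N|^{2s} a(θ) dθ`, whose sign is that of `α - s`. -/
theorem stmt6 (n : ℕ) (s α : ℝ) (hs0 : 0 < s) (hs1 : s < 1) (hα0 : 0 < α) (hα2 : α < 2 * s)
    (a : EuclideanSpace ℝ (Fin (n + 1)) → ℝ) (ha : Measurable a)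
    (hanonneg : ∀ θ, 0 ≤ a θ) (D : ℝ) (habd : ∀ θ, a θ ≤ D)
    (haeven : ∀ θ, a (-θ) = a θ)
    (hκpos : 0 < ∫ θ : Metric.sphere (0 : EuclideanSpace ℝ (Fin (n + 1))) 1,
      |(θ : EuclideanSpace ℝ (Fin (n + 1))) (Fin.last n)| ^ (2 * s) * a θ
        ∂((volume : Measure (EuclideanSpace ℝ (Fin (n + 1)))).toSphere)) :
    ∀ x : EuclideanSpace ℝ (Fin (n + 1)), 0 < x (Fin.last n) →
      (∫ y : EuclideanSpace ℝ (Fin (n + 1)),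
          (max ((x + y) (Fin.last n)) 0 ^ α + max ((x - y) (Fin.last n)) 0 ^ α -
              2 * max (x (Fin.last n)) 0 ^ α) *
            ‖y‖ ^ (-((n + 1 : ℝ) + 2 * s)) * a (‖y‖⁻¹ • y)) =
        ((∫ t in Set.Ioi (0 : ℝ),
            (max (1 + t) 0 ^ α + max (1 - t) 0 ^ α - 2) / t ^ (1 + 2 * s)) *
          ∫ θ : Metric.sphere (0 : EuclideanSpace ℝ (Fin (n + 1))) 1,
            |(θ : EuclideanSpace ℝ (Fin (n + 1))) (Fin.last n)| ^ (2 * s) * a θ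
              ∂((volume : Measure (EuclideanSpace ℝ (Fin (n + 1)))).toSphere)) *
          x (Fin.last n) ^ (α - 2 * s) ∧
      (α < s →
        (∫ t in Set.Ioi (0 : ℝ),
            (max (1 + t) 0 ^ α + max (1 - t) 0 ^ α - 2) / t ^ (1 + 2 * s)) *
          (∫ θ : Metric.sphere (0 : EuclideanSpace ℝ (Fin (n + 1))) 1,
            |(θ : EuclideanSpace ℝ (Fin (n + 1))) (Fin.last n)| ^ (2 * s) * a θ
              ∂((volume : Measure (EuclideanSpace ℝ (Fin (n + 1)))).toSphere)) < 0) ∧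
      (α = s →
        (∫ t in Set.Ioi (0 : ℝ),
            (max (1 + t) 0 ^ α + max (1 - t) 0 ^ α - 2) / t ^ (1 + 2 * s)) *
          (∫ θ : Metric.sphere (0 : EuclideanSpace ℝ (Fin (n + 1))) 1,
            |(θ : EuclideanSpace ℝ (Fin (n + 1))) (Fin.last n)| ^ (2 * s) * a θ
              ∂((volume : Measure (EuclideanSpace ℝ (Fin (n + 1)))).toSphere)) = 0) ∧
      (s < α →
        0 < (∫ t in Set.Ioi (0 : ℝ),
            (max (1 + t) 0 ^ α + max (1 - t) 0 ^ α - 2) / t ^ (1 + 2 * s)) *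
          ∫ θ : Metric.sphere (0 : EuclideanSpace ℝ (Fin (n + 1))) 1,
            |(θ : EuclideanSpace ℝ (Fin (n + 1))) (Fin.last n)| ^ (2 * s) * a θ
              ∂((volume : Measure (EuclideanSpace ℝ (Fin (n + 1)))).toSphere)) := by
  intro x hx
  have h := integral_stable_barrier n hs0 hs1 hα0 hα2 ha hanonneg habd hx
  simp only [barrierKernel, posPowSecondDiff] at h
  refine ⟨h, fun hlt ↦ ?_, fun heq ↦ ?_, fun hgt ↦ ?_⟩
  · exact mul_neg_of_neg_of_pos (integral_barrierKernel_neg hs1 hα0 hlt) hκpos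
  · rw [heq]
    exact mul_eq_zero_of_left (integral_barrierKernel_self hs0 hs1) _
  · exact mul_pos (integral_barrierKernel_pos hs0 hs1 hgt hα2) hκpos
end

section
/- The function (x_N)₊^s (positive part of the last coordinate raised to the power s) is s-harmonic in the upper half-space: for every x ∈ ℝ^N with x_N > 0, the fractional Laplacian (-Δ)^s applied to w_s(x) = (x_N)₊^s equals zero. -/
open MeasureTheory

open Set Filter Topology

/-- `(1 + t) ^ s * t ^ (-(1 + 2 s))`. -/
noncomputable def shiftKernel (s t : ℝ) : ℝ := (1 + t) ^ s * t ^ (-(1 + 2 * s))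

/-- The radial profile of the second difference of `t ↦ t₊ ^ s` at `1`. -/
noncomputable def secondDiffKernel (s t : ℝ) : ℝ :=
  (max (1 + t) 0 ^ s + max (1 - t) 0 ^ s - 2) * t ^ (-(1 + 2 * s))

/-- Minus an antiderivative of `secondDiffKernel s` on `(0, 1)`. -/
noncomputable def secondDiffPrimitive (s e : ℝ) : ℝ :=
  ((1 - e) ^ s - 1) / s * e ^ (-(2 * s)) +
    ((∫ t in (1 : ℝ)..(e / (1 - e)), shiftKernel s t) - ∫ t in (1 : ℝ)..e, shiftKernel s t)

lemma continuousOn_shiftKernel (s : ℝ) : ContinuousOn (shiftKernel s) (Ioi 0) := by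
  intro t (ht : 0 < t)
  unfold shiftKernel
  refine ContinuousAt.continuousWithinAt (ContinuousAt.mul ?_ ?_)
  · exact ContinuousAt.rpow_const (by fun_prop) (Or.inl (by positivity))
  · exact ContinuousAt.rpow_const (by fun_prop) (Or.inl ht.ne')

lemma intervalIntegrable_shiftKernel (s : ℝ) {a b : ℝ} (ha : 0 < a) (hb : 0 < b) :
    IntervalIntegrable (shiftKernel s) volume a b :=
  ((continuousOn_shiftKernel s).mono fun _ ht => (lt_min ha hb).trans_le ht.1).intervalIntegrable

lemma hasDerivAt_integral_shiftKernel (s : ℝ) {u : ℝ} (hu : 0 < u) :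
    HasDerivAt (fun v => ∫ t in (1 : ℝ)..v, shiftKernel s t) (shiftKernel s u) u :=
  intervalIntegral.integral_hasDerivAt_right (intervalIntegrable_shiftKernel s one_pos hu)
    ((continuousOn_shiftKernel s).stronglyMeasurableAtFilter isOpen_Ioi u hu)
    ((continuousOn_shiftKernel s).continuousAt (Ioi_mem_nhds hu))

lemma shiftKernel_div_one_sub (s : ℝ) {e : ℝ} (h0 : 0 < e) (h1 : e < 1) :
    shiftKernel s (e / (1 - e)) = e ^ (-(1 + 2 * s)) * (1 - e) ^ (1 + s) := by
  have h2 : 0 < 1 - e := by linarith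
  have h3 : 1 + e / (1 - e) = (1 - e)⁻¹ := by field_simp; ring
  rw [shiftKernel, h3, Real.div_rpow h0.le h2.le, Real.inv_rpow h2.le, ← Real.rpow_neg h2.le,
    div_eq_mul_inv, ← Real.rpow_neg h2.le, mul_left_comm, ← Real.rpow_add h2]
  congr 2; ring

lemma hasDerivAt_secondDiffPrimitive {s : ℝ} (hs : s ≠ 0) {e : ℝ} (h0 : 0 < e) (h1 : e < 1) :
    HasDerivAt (secondDiffPrimitive s) (-secondDiffKernel s e) e := by
  have h2 : 0 < 1 - e := by linarith
  have hd : HasDerivAt (fun e : ℝ => e / (1 - e)) (1 / (1 - e) ^ 2) e := by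
    convert! (hasDerivAt_id e).div ((hasDerivAt_id e).const_sub 1) h2.ne' using 1
    simp
  have hP := (hasDerivAt_integral_shiftKernel s (div_pos h0 h2)).comp e hd
  have hQ := hasDerivAt_integral_shiftKernel s h0
  have hA : HasDerivAt (fun e : ℝ => ((1 - e) ^ s - 1) / s) (-(1 - e) ^ (s - 1)) e := by
    convert! ((((hasDerivAt_id e).const_sub 1).rpow_const (p := s) (Or.inl h2.ne')).sub_const
      1).div_const s using 1
    simp; field_simp
  have hB : HasDerivAt (fun e : ℝ => e ^ (-(2 * s))) (-(2 * s) * e ^ (-(2 * s) - 1)) e :=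
    Real.hasDerivAt_rpow_const (Or.inl h0.ne')
  convert! (hA.mul hB).add (hP.sub hQ) using 1
  rw [shiftKernel_div_one_sub s h0 h1, shiftKernel, secondDiffKernel, max_eq_left h2.le,
    max_eq_left (by linarith : 0 ≤ 1 + e)]
  have e1 : e ^ (-(2 * s) - 1) = e ^ (-(1 + 2 * s)) := by congr 1; ring
  have e2 : e ^ (-(2 * s)) = e * e ^ (-(1 + 2 * s)) := by
    rw [← Real.rpow_one_add' h0.le] <;> ring_nf
    simpa using hs
  have e3 : (1 - e) ^ s = (1 - e) * (1 - e) ^ (s - 1) := by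
    rw [← Real.rpow_one_add' h2.le] <;> ring_nf
    simpa using hs
  have e4 : (1 - e) ^ (1 + s) = (1 - e) ^ 2 * (1 - e) ^ (s - 1) := by
    rw [← Real.rpow_natCast, ← Real.rpow_add h2]; congr 1; push_cast; ring
  rw [e1, e2, e3, e4]
  field_simp
  ring

lemma abs_secondDiffPrimitive_le {s : ℝ} (hs0 : 0 < s) (hs1 : s < 1) {e : ℝ} (h0 : 0 < e)
    (h1 : e ≤ 1 / 2) : |secondDiffPrimitive s e| ≤ 8 * e ^ (2 - 2 * s) := by
  have h2 : 0 < 1 - e := by linarith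
  have hδ : 0 < e / (1 - e) := by positivity
  have heδ : e ≤ e / (1 - e) := by rw [le_div_iff₀ h2]; nlinarith
  set A := e ^ (-(1 + 2 * s)) with hA
  have hApos : 0 < A := by positivity
  have e2 : e ^ (-(2 * s)) = e * A := by
    rw [hA, ← Real.rpow_one_add' h0.le] <;> ring_nf
    simpa using hs0.ne'
  have e3 : e ^ (2 - 2 * s) = e ^ 3 * A := by
    rw [hA, ← Real.rpow_natCast, ← Real.rpow_add h0]; congr 1; push_cast; ring
  have hlen : e / (1 - e) - e = e ^ 2 / (1 - e) := by field_simp; ring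
  have hup : ∫ t in e..(e / (1 - e)), shiftKernel s t ≤ A * e ^ 2 / (1 - e) ^ 2 := by
    calc _ ≤ ∫ t in e..(e / (1 - e)), (1 / (1 - e)) * A := by
          refine intervalIntegral.integral_mono_on heδ
            (intervalIntegrable_shiftKernel s h0 hδ) (by simp) fun t ht => ?_
          have ht0 : 0 < t := h0.trans_le ht.1
          refine mul_le_mul ?_ ?_ (by positivity) (by positivity)
          · calc (1 + t) ^ s ≤ (1 + t) ^ (1 : ℝ) :=
                  Real.rpow_le_rpow_of_exponent_le (by linarith) hs1.le
              _ ≤ 1 / (1 - e) := by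
                  have : 1 / (1 - e) = 1 + e / (1 - e) := by field_simp; ring
                  rw [this, Real.rpow_one]; linarith [ht.2]
          · exact Real.rpow_le_rpow_of_nonpos h0 ht.1 (by linarith)
      _ = _ := by
          rw [intervalIntegral.integral_const, hlen, smul_eq_mul]; field_simp
  have hlow : A * e ^ 2 * (1 - e) ^ 2 ≤ ∫ t in e..(e / (1 - e)), shiftKernel s t := by
    calc A * e ^ 2 * (1 - e) ^ 2 = ∫ t in e..(e / (1 - e)), A * (1 - e) ^ 3 := by
          rw [intervalIntegral.integral_const, hlen, smul_eq_mul]; field_simp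
      _ ≤ _ := by
          refine intervalIntegral.integral_mono_on heδ (by simp)
            (intervalIntegrable_shiftKernel s h0 hδ) fun t ht => ?_
          have ht0 : 0 < t := h0.trans_le ht.1
          calc A * (1 - e) ^ 3 ≤ A * (1 - e) ^ (1 + 2 * s) := by
                gcongr
                rw [← Real.rpow_natCast]
                exact Real.rpow_le_rpow_of_exponent_ge h2 (by linarith) (by push_cast; linarith)
            _ = (e / (1 - e)) ^ (-(1 + 2 * s)) := by
                rw [Real.div_rpow h0.le h2.le, Real.rpow_neg h2.le, div_inv_eq_mul]
            _ ≤ t ^ (-(1 + 2 * s)) := Real.rpow_le_rpow_of_nonpos ht0 ht.2 (by linarith)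
            _ ≤ shiftKernel s t :=
                le_mul_of_one_le_left (by positivity) (Real.one_le_rpow (by linarith) hs0.le)
  have hb1 : ((1 - e) ^ s - 1) / s ≤ -e := by
    have := rpow_one_add_le_one_add_mul_self (s := -e) (by linarith) hs0.le hs1.le
    rw [div_le_iff₀ hs0]
    rw [← sub_eq_add_neg] at this
    linarith
  have hb2 : -(e / (1 - e)) ≤ ((1 - e) ^ s - 1) / s := by
    have := rpow_one_add_le_one_add_mul_self (s := e / (1 - e)) (by linarith) hs0.le hs1.le
    rw [show 1 + e / (1 - e) = (1 - e)⁻¹ by field_simp; ring, Real.inv_rpow h2.le] at this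
    rw [le_div_iff₀ hs0]
    have hpos : 0 < (1 - e) ^ s := by positivity
    have h5 : 1 ≤ (1 + s * (e / (1 - e))) * (1 - e) ^ s := by
      rwa [inv_le_iff_one_le_mul₀ hpos] at this
    have h6 : 0 < s * (e / (1 - e)) := by positivity
    nlinarith [mul_pos h6 h6, Real.rpow_le_one h2.le (by linarith) hs0.le]
  have hdiff : (∫ t in (1 : ℝ)..(e / (1 - e)), shiftKernel s t) -
      ∫ t in (1 : ℝ)..e, shiftKernel s t = ∫ t in e..(e / (1 - e)), shiftKernel s t :=
    intervalIntegral.integral_interval_sub_left (intervalIntegrable_shiftKernel s one_pos hδ)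
      (intervalIntegrable_shiftKernel s one_pos h0)
  rw [secondDiffPrimitive, hdiff, e2, e3]
  set D := ((1 - e) ^ s - 1) / s
  set J := ∫ t in e..(e / (1 - e)), shiftKernel s t
  have hAe : 0 < A * e := by positivity
  have hD1 : D * (e * A) ≤ -(A * e ^ 2) := by nlinarith
  have hD2 : -(A * e ^ 2 * (1 / (1 - e))) ≤ D * (e * A) := by
    have := mul_le_mul_of_nonneg_left hb2 hAe.le
    calc _ = A * e * -(e / (1 - e)) := by ring
      _ ≤ _ := this
      _ = _ := by ring
  have hi1 : 1 / (1 - e) ≤ 1 + 2 * e := by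
    rw [div_le_iff₀ h2]; nlinarith
  have hi2 : 1 / (1 - e) ^ 2 ≤ 1 + 8 * e := by
    rw [div_le_iff₀ (by positivity)]; nlinarith [mul_pos h0 h0]
  have hAe2 : 0 < A * e ^ 2 := by positivity
  rw [abs_le]
  constructor
  · nlinarith [mul_le_mul_of_nonneg_left hi1 hAe2.le, mul_pos hAe2 h0, mul_pos (mul_pos hAe2 h0) h0]
  · have : A * e ^ 2 / (1 - e) ^ 2 ≤ A * e ^ 2 * (1 + 8 * e) := by
      rw [div_eq_mul_one_div]; gcongr
    nlinarith

lemma tendsto_secondDiffPrimitive_zero {s : ℝ} (hs0 : 0 < s) (hs1 : s < 1) :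
    Tendsto (secondDiffPrimitive s) (𝓝[>] 0) (𝓝 0) := by
  have hlim : Tendsto (fun e : ℝ => 8 * e ^ (2 - 2 * s)) (𝓝[>] 0) (𝓝 0) := by
    have h : ContinuousAt (fun e : ℝ => 8 * e ^ (2 - 2 * s)) 0 :=
      (Real.continuousAt_rpow_const _ _ (Or.inr (by linarith))).const_mul 8
    have h' := h.tendsto
    simp only [Real.zero_rpow (by linarith : 2 - 2 * s ≠ 0), mul_zero] at h'
    exact h'.mono_left nhdsWithin_le_nhds
  refine squeeze_zero_norm' ?_ hlim
  filter_upwards [Ioc_mem_nhdsGT (by norm_num : (0 : ℝ) < 1 / 2)] with e he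
  exact abs_secondDiffPrimitive_le hs0 hs1 he.1 he.2

lemma tendsto_secondDiffPrimitive_one {s : ℝ} (hs0 : 0 < s)
    (hk : IntegrableOn (shiftKernel s) (Ioi 1)) :
    Tendsto (secondDiffPrimitive s) (𝓝[<] 1) (𝓝 (-1 / s + ∫ t in Ioi 1, shiftKernel s t)) := by
  have h1 : Tendsto (fun e : ℝ => ((1 - e) ^ s - 1) / s * e ^ (-(2 * s))) (𝓝[<] 1)
      (𝓝 (-1 / s)) := by
    have h : ContinuousAt (fun e : ℝ => ((1 - e) ^ s - 1) / s * e ^ (-(2 * s))) 1 := by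
      refine ContinuousAt.mul (ContinuousAt.div_const (ContinuousAt.sub ?_ continuousAt_const) _)
        (Real.continuousAt_rpow_const _ _ (Or.inl one_ne_zero))
      exact ContinuousAt.rpow_const (by fun_prop) (Or.inr hs0.le)
    have h' := h.tendsto
    simp only [sub_self, Real.zero_rpow hs0.ne', Real.one_rpow, mul_one, zero_sub] at h'
    exact h'.mono_left nhdsWithin_le_nhds
  have h2 : Tendsto (fun e : ℝ => ∫ t in (1 : ℝ)..e, shiftKernel s t) (𝓝[<] 1) (𝓝 0) := by
    have h' := (hasDerivAt_integral_shiftKernel s one_pos).continuousAt.tendsto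
    rw [intervalIntegral.integral_same] at h'
    exact h'.mono_left nhdsWithin_le_nhds
  have h3 : Tendsto (fun e : ℝ => e / (1 - e)) (𝓝[<] 1) atTop := by
    refine Tendsto.pos_mul_atTop one_pos (tendsto_id.mono_left nhdsWithin_le_nhds)
      (tendsto_inv_nhdsGT_zero.comp ?_)
    refine tendsto_nhdsWithin_iff.2 ⟨?_, ?_⟩
    · have : Continuous fun e : ℝ => 1 - e := by fun_prop
      simpa using (this.tendsto 1).mono_left nhdsWithin_le_nhds
    · filter_upwards [self_mem_nhdsWithin] with e (he : e < 1)
      exact sub_pos.2 he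
  have h4 := intervalIntegral_tendsto_integral_Ioi 1 hk h3
  simpa only [sub_zero] using! h1.add (h4.sub h2)

lemma integral_secondDiffKernel {s : ℝ} (hs0 : 0 < s) (hs1 : s < 1) :
    ∫ t in Ioi 0, secondDiffKernel s t = 0 := by
  by_cases hint : IntegrableOn (secondDiffKernel s) (Ioi 0)
  swap
  · exact integral_undef hint
  have hsub : Ioi (1 : ℝ) ⊆ Ioi 0 := Ioi_subset_Ioi zero_le_one
  have hlt : -(1 + 2 * s) < -1 := by linarith
  have hpow := (integrableOn_Ioi_rpow_of_lt hlt one_pos).const_mul 2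
  have heq : EqOn (secondDiffKernel s)
      (fun t => shiftKernel s t - 2 * t ^ (-(1 + 2 * s))) (Ioi 1) := by
    intro t (ht : 1 < t)
    simp only [secondDiffKernel, shiftKernel]
    rw [max_eq_left (by linarith : 0 ≤ 1 + t), max_eq_right (by linarith : 1 - t ≤ 0),
      Real.zero_rpow hs0.ne']
    ring
  have hk : IntegrableOn (shiftKernel s) (Ioi 1) := by
    have h := ((hint.mono_set hsub).congr_fun heq measurableSet_Ioi).add hpow
    refine h.congr_fun (fun t _ => ?_) measurableSet_Ioi
    simp
  have hI1 : ∫ t in Ioi 1, secondDiffKernel s t = (∫ t in Ioi 1, shiftKernel s t) - 1 / s := by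
    rw [setIntegral_congr_fun measurableSet_Ioi heq, integral_sub hk hpow, integral_const_mul,
      integral_Ioi_rpow_of_lt hlt one_pos, Real.one_rpow]
    congr 1
    rw [show -(1 + 2 * s) + 1 = -(2 * s) by ring]
    field_simp
  have hI0 : ∫ t in (0 : ℝ)..1, secondDiffKernel s t =
      -(-1 / s + ∫ t in Ioi 1, shiftKernel s t) - -0 := by
    refine intervalIntegral.integral_eq_sub_of_hasDerivAt_of_tendsto
      (f := fun e => -secondDiffPrimitive s e) zero_lt_one (fun e he => ?_) ?_
      (tendsto_secondDiffPrimitive_zero hs0 hs1).neg (tendsto_secondDiffPrimitive_one hs0 hk).neg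
    · simpa using! (hasDerivAt_secondDiffPrimitive hs0.ne' he.1 he.2).neg
    · rw [intervalIntegrable_iff_integrableOn_Ioc_of_le zero_le_one]
      exact hint.mono_set Ioc_subset_Ioi_self
  rw [← intervalIntegral.integral_interval_add_Ioi hint (hint.mono_set hsub), hI0, hI1]
  ring

lemma integral_secondDiff_rpow {s a b : ℝ} (hs0 : 0 < s) (hs1 : s < 1) (ha : 0 < a) :
    ∫ r in Ioi 0, (max (a + r * b) 0 ^ s + max (a - r * b) 0 ^ s - 2 * max a 0 ^ s) *
      r ^ (-(1 + 2 * s)) = 0 := by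
  wlog hb : 0 ≤ b generalizing b
  · have h := this (b := -b) (by linarith)
    simp only [mul_neg, sub_neg_eq_add, ← sub_eq_add_neg] at h
    refine (integral_congr_ae (.of_forall fun r => ?_)).trans h
    ring
  rcases hb.eq_or_lt with rfl | hb
  · refine (setIntegral_congr_fun measurableSet_Ioi fun r _ => ?_).trans (integral_zero ℝ ℝ)
    simp
    left
    ring
  have hc : 0 < b / a := by positivity
  have key : EqOn (fun r : ℝ => (max (a + r * b) 0 ^ s + max (a - r * b) 0 ^ s -
      2 * max a 0 ^ s) * r ^ (-(1 + 2 * s)))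
      (fun r => a ^ s * (b / a) ^ (1 + 2 * s) * secondDiffKernel s (b / a * r)) (Ioi 0) := by
    intro r (hr : 0 < r)
    have h1 : max (a + r * b) 0 = a * max (1 + b / a * r) 0 := by
      rw [mul_max_of_nonneg _ _ ha.le, mul_zero]; congr 1; field_simp
    have h2 : max (a - r * b) 0 = a * max (1 - b / a * r) 0 := by
      rw [mul_max_of_nonneg _ _ ha.le, mul_zero]; congr 1; field_simp
    simp only [secondDiffKernel]
    rw [h1, h2, max_eq_left ha.le, Real.mul_rpow ha.le (le_max_right _ _),
      Real.mul_rpow ha.le (le_max_right _ _), Real.mul_rpow hc.le hr.le, Real.rpow_neg hc.le]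
    have : (b / a) ^ (1 + 2 * s) ≠ 0 := by positivity
    field_simp
  rw [setIntegral_congr_fun measurableSet_Ioi key, integral_const_mul,
    integral_comp_mul_left_Ioi _ _ hc, mul_zero, integral_secondDiffKernel hs0 hs1]
  simp

/-- A function on `E` whose integrals along all rays from the origin, taken against
`r ^ (dim E - 1)`, vanish has zero integral. -/
lemma integral_eq_zero_of_integral_ray_eq_zero {E : Type*} [NormedAddCommGroup E]
    [NormedSpace ℝ E] [MeasurableSpace E] [BorelSpace E] [FiniteDimensional ℝ E] [Nontrivial E]
    (μ : Measure E) [μ.IsAddHaarMeasure] (f : E → ℝ)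
    (hf : ∀ v : E, ‖v‖ = 1 →
      ∫ r in Ioi (0 : ℝ), r ^ (Module.finrank ℝ E - 1) * f (r • v) = 0) :
    ∫ y, f y ∂μ = 0 := by
  have h := (μ.measurePreserving_homeomorphUnitSphereProd.symm
    (homeomorphUnitSphereProd E).toMeasurableEquiv).integral_comp
    (homeomorphUnitSphereProd E).symm.measurableEmbedding (fun y => f y)
  rw [← restrict_compl_singleton (μ := μ) 0,
    ← integral_subtype_comap (measurableSet_singleton _).compl, ← h]
  by_cases hint : Integrable (fun p => f ((homeomorphUnitSphereProd E).symm p))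
    (μ.toSphere.prod (.volumeIoiPow (Module.finrank ℝ E - 1)))
  swap
  · exact integral_undef hint
  refine (integral_prod _ hint).trans (integral_eq_zero_of_ae (.of_forall fun v => ?_))
  simp only [homeomorphUnitSphereProd_symm_apply_coe, Measure.volumeIoiPow, ENNReal.ofReal]
  rw [integral_withDensity_eq_integral_smul
      (measurable_subtype_coe.pow_const _).real_toNNReal,
    integral_subtype_comap measurableSet_Ioi
      fun r : ℝ => Real.toNNReal (r ^ (Module.finrank ℝ E - 1)) • f (r • (v : E))]
  refine (setIntegral_congr_fun measurableSet_Ioi fun r hr => ?_).trans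
    (hf v (by simp))
  simp only [NNReal.smul_def, smul_eq_mul]
  rw [Real.coe_toNNReal _ (pow_nonneg (le_of_lt hr) _)]

/-- The function `w_s(x) = (x_N)₊^s` is `s`-harmonic in the upper half-space: the
second-difference integral defining `(-Δ)^s w_s` vanishes at every point with `x_N > 0`. -/
theorem stmt7 (n : ℕ) (s : ℝ) (hs0 : 0 < s) (hs1 : s < 1)
    (x : EuclideanSpace ℝ (Fin (n + 1))) (hx : 0 < x (Fin.last n)) :
    (∫ y : EuclideanSpace ℝ (Fin (n + 1)),
        (max ((x + y) (Fin.last n)) 0 ^ s + max ((x - y) (Fin.last n)) 0 ^ s -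
            2 * max (x (Fin.last n)) 0 ^ s) * ‖y‖ ^ (-((n + 1 : ℝ) + 2 * s))) = 0 := by
  refine integral_eq_zero_of_integral_ray_eq_zero
    (volume : Measure (EuclideanSpace ℝ (Fin (n + 1)))) _ fun v hv => ?_
  refine (setIntegral_congr_fun measurableSet_Ioi fun r (hr : 0 < r) => ?_).trans
    (integral_secondDiff_rpow (b := v (Fin.last n)) hs0 hs1 hx)
  have hpow : r ^ (-(1 + 2 * s)) = r ^ n * r ^ (-((n + 1 : ℝ) + 2 * s)) := by
    rw [← Real.rpow_natCast, ← Real.rpow_add hr]; congr 1; ring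
  simp only [finrank_euclideanSpace, Fintype.card_fin, Nat.add_sub_cancel, PiLp.add_apply,
    PiLp.sub_apply, PiLp.smul_apply, smul_eq_mul, norm_smul, hv, mul_one, Real.norm_eq_abs,
    abs_of_pos hr]
  rw [hpow]
  ring
end

section
/- Let 0 < s < 1, (2s-1)₊ < α < 2s, ψ ∈ C²_c(ℝ^N), v_α(x) = (x_N)₊^α ψ(x), and let a ∈ L^∞(𝕊^{N-1}) be nonnegative and even. Suppose u ∈ C²(ℝ^N_+), u is locally C² up to the boundary of ℝ^N_+, u = 0 on the closed lower half-space, and |u(x)| ≤ β(1 + |x|^{2s-δ}) for some δ ∈ (0,2s]. Then ∫_{ℝ^N} u · Lv_α dx = ∫_{ℝ^N} v_α · Lu dx, both integrals being absolutely convergent. -/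
open MeasureTheory

/-- The symmetric second difference `f (x + y) + f (x - y) - 2 f x`. -/
def symmSecondDiff {F : Type*} [AddGroup F] (f : F → ℝ) (x y : F) : ℝ :=
  f (x + y) + f (x - y) - 2 * f x

theorem abs_symmSecondDiff_le {F : Type*} [NormedAddCommGroup F] [NormedSpace ℝ F] {f : F → ℝ}
    {f' : F → F →L[ℝ] ℝ} {x y : F} {M : ℝ} (hM : 0 ≤ M)
    (hf : ∀ z ∈ Metric.closedBall x ‖y‖, HasFDerivAt f (f' z) z)
    (hlip : ∀ z ∈ Metric.closedBall x ‖y‖, ∀ w ∈ Metric.closedBall x ‖y‖,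
      ‖f' z - f' w‖ ≤ M * ‖z - w‖) :
    |symmSecondDiff f x y| ≤ 2 * M * ‖y‖ ^ 2 := by
  have hmem : ∀ h ∈ Metric.closedBall (0 : F) ‖y‖,
      x + h ∈ Metric.closedBall x ‖y‖ ∧ x - h ∈ Metric.closedBall x ‖y‖ := by
    intro h hh
    simpa [Metric.mem_closedBall, dist_eq_norm] using hh
  have hder : ∀ h ∈ Metric.closedBall (0 : F) ‖y‖,
      HasFDerivWithinAt (fun h => f (x + h) + f (x - h)) (f' (x + h) - f' (x - h))
        (Metric.closedBall (0 : F) ‖y‖) h := by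
    intro h hh
    have h1 : HasFDerivAt (fun h => f (x + h)) ((f' (x + h)).comp (.id ℝ F)) h :=
      (hf _ (hmem h hh).1).comp h ((hasFDerivAt_id h).const_add x)
    have h2 : HasFDerivAt (fun h => f (x - h)) ((f' (x - h)).comp (-.id ℝ F)) h :=
      (hf _ (hmem h hh).2).comp h ((hasFDerivAt_id h).const_sub x)
    refine ((h1.add h2).congr_fderiv ?_).hasFDerivWithinAt
    ext z
    simp [sub_eq_add_neg]
  have hbound : ∀ h ∈ Metric.closedBall (0 : F) ‖y‖,
      ‖f' (x + h) - f' (x - h)‖ ≤ 2 * M * ‖y‖ := by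
    intro h hh
    refine (hlip _ (hmem h hh).1 _ (hmem h hh).2).trans ?_
    have h3 : x + h - (x - h) = (2 : ℝ) • h := by rw [two_smul]; abel
    rw [h3, norm_smul]
    have : ‖h‖ ≤ ‖y‖ := by simpa using hh
    simp only [Real.norm_ofNat]
    nlinarith
  have := (convex_closedBall (0 : F) ‖y‖).norm_image_sub_le_of_norm_hasFDerivWithin_le hder hbound
    (x := 0) (y := y) (by simp) (by simp)
  simp only [add_zero, sub_zero, Real.norm_eq_abs] at this
  unfold symmSecondDiff
  calc _ = |f (x + y) + f (x - y) - (f x + f x)| := by congr 1; ring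
    _ ≤ _ := this
    _ = _ := by ring

theorem exists_rpow_one_add_bounds (α : ℝ) : ∃ C, 0 ≤ C ∧ ∀ t : ℝ, |t| ≤ 1 / 2 →
    |(1 + t) ^ α + (1 - t) ^ α - 2| ≤ C * t ^ 2 ∧ |(1 + t) ^ α - 1| ≤ C * |t| := by
  have hsm : ∀ p : ℝ, ∃ K, LipschitzOnWith K (fun x : ℝ => x ^ p) (Set.Icc (1 / 2) (3 / 2)) := by
    intro p
    refine ContDiffOn.exists_lipschitzOnWith (n := 1) ?_ one_ne_zero (convex_Icc _ _) isCompact_Icc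
    exact fun x hx => (contDiffAt_id.rpow_const_of_ne
      (by simpa using (by linarith [hx.1] : 0 < x).ne')).contDiffWithinAt
  obtain ⟨K₀, hK₀⟩ := hsm α
  obtain ⟨K₁, hK₁⟩ := hsm (α - 1)
  have hC₁ : 0 ≤ 2 * (|α| * (K₁ : ℝ)) := by positivity
  refine ⟨2 * (|α| * K₁) + K₀, by positivity, fun t ht => ⟨?_, ?_⟩⟩
  · have hball : ∀ z ∈ Metric.closedBall (1 : ℝ) ‖t‖, z ∈ Set.Icc (1 / 2 : ℝ) (3 / 2) := by
      intro z hz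
      rw [Metric.mem_closedBall, Real.dist_eq, Real.norm_eq_abs] at hz
      have := abs_le.1 (hz.trans ht)
      constructor <;> linarith [this.1, this.2]
    have := abs_symmSecondDiff_le (f := fun x : ℝ => x ^ α) (x := 1) (y := t)
      (f' := fun z => ContinuousLinearMap.toSpanSingleton ℝ (α * z ^ (α - 1)))
      (M := |α| * K₁) (by positivity)
      (fun z hz => (Real.hasDerivAt_rpow_const (.inl
        (by linarith [(hball z hz).1] : 0 < z).ne')).hasFDerivAt)
      (fun z hz w hw => by
        have hsub : ContinuousLinearMap.toSpanSingleton ℝ (α * z ^ (α - 1)) -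
            ContinuousLinearMap.toSpanSingleton ℝ (α * w ^ (α - 1)) =
            ContinuousLinearMap.toSpanSingleton ℝ (α * z ^ (α - 1) - α * w ^ (α - 1)) := by
          ext
          simp
        rw [hsub, ContinuousLinearMap.norm_toSpanSingleton, ← mul_sub, norm_mul, mul_assoc,
          Real.norm_eq_abs α]
        gcongr
        simpa [dist_eq_norm] using hK₁.dist_le_mul z (hball z hz) w (hball w hw))
    simp only [symmSecondDiff, Real.one_rpow, mul_one, Real.norm_eq_abs, sq_abs] at this
    nlinarith [sq_nonneg t, K₀.coe_nonneg]
  · have h := abs_le.1 ht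
    have := hK₀.dist_le_mul (1 + t) ⟨by linarith, by linarith⟩ 1 ⟨by norm_num, by norm_num⟩
    simp only [Real.dist_eq, Real.one_rpow, add_sub_cancel_left] at this
    nlinarith [abs_nonneg t]

theorem exists_bounds_of_contDiff_two {F : Type*} [NormedAddCommGroup F] [NormedSpace ℝ F]
    {ψ : F → ℝ} (hψ : ContDiff ℝ 2 ψ) (hψc : HasCompactSupport ψ) :
    ∃ C, 0 ≤ C ∧ ∀ x y, |ψ x| ≤ C ∧ |ψ (x + y) - ψ x| ≤ C * ‖y‖ ∧
      |symmSecondDiff ψ x y| ≤ C * ‖y‖ ^ 2 := by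
  obtain ⟨C₀, hC₀⟩ := hψc.exists_bound_of_continuous hψ.continuous
  obtain ⟨C₁, hC₁⟩ := hψ.lipschitzWith_of_hasCompactSupport hψc two_ne_zero
  obtain ⟨C₂, hC₂⟩ := (hψ.fderiv_right (m := 1) (by norm_num)).lipschitzWith_of_hasCompactSupport
    (hψc.fderiv ℝ) one_ne_zero
  have hC₀' : 0 ≤ C₀ := (norm_nonneg _).trans (hC₀ 0)
  refine ⟨C₀ + C₁ + 2 * C₂, by positivity, fun x y => ⟨?_, ?_, ?_⟩⟩
  · have := hC₀ x
    rw [Real.norm_eq_abs] at this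
    linarith [C₁.coe_nonneg, C₂.coe_nonneg]
  · have := hC₁.dist_le_mul (x + y) x
    rw [Real.dist_eq, dist_eq_norm, add_sub_cancel_left] at this
    nlinarith [norm_nonneg y, C₂.coe_nonneg]
  · have := abs_symmSecondDiff_le (x := x) (y := y) C₂.coe_nonneg
      (fun z _ => (hψ.differentiable two_ne_zero z).hasFDerivAt)
      (fun z _ w _ => by simpa [dist_eq_norm] using hC₂.dist_le_mul z w)
    nlinarith [sq_nonneg ‖y‖, C₁.coe_nonneg]

theorem integrable_indicator_ball_norm_rpow (n : ℕ) {ε : ℝ} (hε : 0 < ε) :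
    Integrable ((Metric.ball (0 : EuclideanSpace ℝ (Fin (n + 1))) 1).indicator
      fun y => ‖y‖ ^ (ε - (n + 1))) := by
  rw [integrable_indicator_iff measurableSet_ball,
    integrableOn_fun_norm_addHaar volume (f := fun r : ℝ => r ^ (ε - (n + 1)))]
  have h := (intervalIntegral.integrableOn_Ioo_rpow_iff (s := ε - 1) zero_lt_one).2 (by linarith)
  refine h.congr_fun (fun r hr => ?_) measurableSet_Ioo
  simp only [finrank_euclideanSpace, Fintype.card_fin, Nat.add_sub_cancel, smul_eq_mul]
  rw [← Real.rpow_natCast, ← Real.rpow_add hr.1]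
  congr 1
  ring

theorem integrable_indicator_compl_ball_norm_rpow (n : ℕ) {τ : ℝ} (hτ : 0 < τ) :
    Integrable ((Metric.ball (0 : EuclideanSpace ℝ (Fin (n + 1))) 1)ᶜ.indicator
      fun y => ‖y‖ ^ (-(n + 1 + τ))) := by
  have h := (integrable_one_add_norm (E := EuclideanSpace ℝ (Fin (n + 1))) (μ := volume)
    (r := n + 1 + τ) (by simp [hτ])).const_mul (2 ^ ((n : ℝ) + 1 + τ))
  refine h.mono' (Measurable.aestronglyMeasurable ?_) (.of_forall fun y => ?_)
  · exact Measurable.indicator (by fun_prop) measurableSet_ball.compl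
  · by_cases hy : y ∈ Metric.ball (0 : EuclideanSpace ℝ (Fin (n + 1))) 1
    · simp only [Set.mem_compl_iff, hy, not_true_eq_false, not_false_eq_true,
        Set.indicator_of_notMem, norm_zero]
      positivity
    · rw [Set.indicator_of_mem (by exact hy), Real.norm_of_nonneg (by positivity)]
      have hy1 : 1 ≤ ‖y‖ := by simpa using hy
      have hp : 0 < (n : ℝ) + 1 + τ := by positivity
      rw [Real.rpow_neg (by positivity), Real.rpow_neg (by positivity), ← div_eq_mul_inv,
        inv_eq_one_div, div_le_div_iff₀ (by positivity) (by positivity), one_mul,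
        ← Real.mul_rpow (by positivity) (by positivity)]
      exact Real.rpow_le_rpow (by positivity) (by linarith) hp.le

theorem integrable_indicator_halfBall_rpow (n : ℕ) {γ : ℝ} (hγ : γ < 1) (R : ℝ) :
    Integrable ({x : EuclideanSpace ℝ (Fin (n + 1)) | 0 < x (Fin.last n) ∧ ‖x‖ ≤ R}.indicator
      fun x => x (Fin.last n) ^ (-γ)) := by
  classical
  let f : Fin (n + 1) → ℝ → ℝ := fun i =>
    if i = Fin.last n then (Set.Ioc 0 R).indicator (fun t => t ^ (-γ))
    else (Set.Icc (-R) R).indicator 1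
  have hf0 : ∀ i t, 0 ≤ f i t := by
    intro i t
    by_cases hi : i = Fin.last n
    · simp only [f, hi, if_true]
      exact Set.indicator_nonneg (fun t ht => Real.rpow_nonneg ht.1.le _) t
    · simp only [f, hi, if_false]
      exact Set.indicator_nonneg (fun _ _ => zero_le_one) t
  have hf : ∀ i, Integrable (f i) := by
    intro i
    by_cases hi : i = Fin.last n
    · simp only [f, hi, if_true]
      rw [integrable_indicator_iff measurableSet_Ioc]
      rcases le_or_gt R 0 with hR | hR
      · simp [Set.Ioc_eq_empty hR.not_gt]
      · rw [integrableOn_Ioc_iff_integrableOn_Ioo]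
        exact (intervalIntegral.integrableOn_Ioo_rpow_iff hR).2 (by linarith)
    · simp only [f, hi, if_false]
      rw [integrable_indicator_iff measurableSet_Icc]
      exact integrableOn_const (by simp)
  have hg := (PiLp.volume_preserving_ofLp (Fin (n + 1))).integrable_comp_of_integrable
    (Integrable.fintype_prod hf)
  refine hg.mono' (Measurable.aestronglyMeasurable ?_) (.of_forall fun x => ?_)
  · refine Measurable.indicator (by fun_prop) ?_
    have hlast : Measurable fun x : EuclideanSpace ℝ (Fin (n + 1)) => x (Fin.last n) := by fun_prop
    exact (measurableSet_lt measurable_const hlast).inter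
      (measurableSet_le measurable_norm measurable_const)
  · by_cases hx : 0 < x (Fin.last n) ∧ ‖x‖ ≤ R
    · rw [Set.indicator_of_mem (by exact hx), Real.norm_of_nonneg (Real.rpow_nonneg hx.1.le _)]
      have hc : ∀ i, |x i| ≤ R := fun i => (PiLp.norm_apply_le x i).trans hx.2
      have hval : ∀ i, f i (x i) = if i = Fin.last n then x (Fin.last n) ^ (-γ) else 1 := by
        intro i
        by_cases hi : i = Fin.last n
        · subst hi
          simp [f, hx.1, (abs_le.1 (hc _)).2]
        · simp [f, hi, (abs_le.1 (hc i)).1, (abs_le.1 (hc i)).2]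
      simp [hval]
    · rw [Set.indicator_of_notMem (by exact hx), norm_zero]
      exact Finset.prod_nonneg fun i _ => hf0 i _

theorem exists_symmSecondDiff_bound_halfSpace {n : ℕ} {u : EuclideanSpace ℝ (Fin (n + 1)) → ℝ}
    (huC2 : ContDiffOn ℝ 2 u {x : EuclideanSpace ℝ (Fin (n + 1)) | 0 < x (Fin.last n)})
    (huC2bd : ∀ K : Set (EuclideanSpace ℝ (Fin (n + 1))), IsCompact K →
      ∃ M : ℝ, ∀ x ∈ K, 0 < x (Fin.last n) →
        |u x| + ‖fderiv ℝ u x‖ + ‖fderiv ℝ (fderiv ℝ u) x‖ ≤ M) (R : ℝ) :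
    ∃ M, 0 ≤ M ∧ ∀ x y : EuclideanSpace ℝ (Fin (n + 1)), 0 < x (Fin.last n) → ‖x‖ ≤ R →
      ‖y‖ ≤ 1 → ‖y‖ ≤ x (Fin.last n) / 2 → |symmSecondDiff u x y| ≤ M * ‖y‖ ^ 2 := by
  obtain ⟨M, hM⟩ := huC2bd (Metric.closedBall 0 (R + 1)) (isCompact_closedBall _ _)
  have hopen : IsOpen {x : EuclideanSpace ℝ (Fin (n + 1)) | 0 < x (Fin.last n)} :=
    isOpen_lt continuous_const (by fun_prop)
  refine ⟨2 * max M 0, by positivity, fun x y hx hxR hy hyx => ?_⟩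
  have hball : ∀ z ∈ Metric.closedBall x ‖y‖,
      0 < z (Fin.last n) ∧ z ∈ Metric.closedBall 0 (R + 1) := by
    intro z hz
    rw [Metric.mem_closedBall, dist_eq_norm] at hz
    constructor
    · have := (abs_le.1 ((PiLp.norm_apply_le (z - x) (Fin.last n)).trans hz)).1
      simp only [PiLp.sub_apply] at this
      linarith
    · rw [mem_closedBall_zero_iff]
      calc ‖z‖ = ‖(z - x) + x‖ := by rw [sub_add_cancel]
        _ ≤ ‖z - x‖ + ‖x‖ := norm_add_le _ _
        _ ≤ R + 1 := by linarith
  refine abs_symmSecondDiff_le (le_max_right M 0) (f' := fderiv ℝ u)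
    (fun z hz => ((huC2.contDiffAt (hopen.mem_nhds (hball z hz).1)).differentiableAt
      two_ne_zero).hasFDerivAt) (fun z hz w hw => ?_)
  refine (convex_closedBall x ‖y‖).norm_image_sub_le_of_norm_fderiv_le (𝕜 := ℝ)
    (fun p hp => ?_) (fun p hp => ?_) hw hz
  · exact ((huC2.contDiffAt (hopen.mem_nhds (hball p hp).1)).fderiv_right
      (m := 1) (by norm_num)).differentiableAt one_ne_zero
  · have := hM p (hball p hp).2 (hball p hp).1
    exact le_trans (by linarith [abs_nonneg (u p), norm_nonneg (fderiv ℝ u p)]) (le_max_left M 0)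

theorem exists_symmSecondDiff_bound_rpow_mul {n : ℕ} {α : ℝ}
    {ψ v : EuclideanSpace ℝ (Fin (n + 1)) → ℝ} (hψ : ContDiff ℝ 2 ψ) (hψc : HasCompactSupport ψ)
    (hv : ∀ x, v x = max (x (Fin.last n)) 0 ^ α * ψ x) (R : ℝ) :
    ∃ C, 0 ≤ C ∧ ∀ x y : EuclideanSpace ℝ (Fin (n + 1)), 0 < x (Fin.last n) → ‖x‖ ≤ R →
      ‖y‖ ≤ x (Fin.last n) / 2 →
      |symmSecondDiff v x y| ≤ C * (x (Fin.last n) ^ α * (‖y‖ / x (Fin.last n)) ^ 2) := by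
  obtain ⟨A, hA, hpow⟩ := exists_rpow_one_add_bounds α
  obtain ⟨B, hB, hψb⟩ := exists_bounds_of_contDiff_two hψ hψc
  refine ⟨B * A + B * R ^ 2 + 2 * (A * (B * |R|)), by positivity, fun x y hx hxR hyx => ?_⟩
  set d := x (Fin.last n) with hd
  set r := ‖y‖ / d with hr
  have hr0 : 0 ≤ r := by positivity
  have hdR : d ≤ R := (le_abs_self d).trans ((PiLp.norm_apply_le x (Fin.last n)).trans hxR)
  have hyr : ‖y‖ = d * r := by rw [hr]; field_simp
  set t := y (Fin.last n) / d with ht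
  have hyt : y (Fin.last n) = d * t := by rw [ht]; field_simp
  have htr : |t| ≤ r := by
    rw [ht, hr, abs_div, abs_of_pos hx]
    gcongr
    exact PiLp.norm_apply_le y (Fin.last n)
  have ht2 : |t| ≤ 1 / 2 := htr.trans (by rw [hr, div_le_iff₀ hx]; linarith)
  have habs := abs_le.1 ht2
  have hp : ∀ z : ℝ, |z| ≤ 1 / 2 → max (d * (1 + z)) 0 ^ α = d ^ α * (1 + z) ^ α := by
    intro z hz
    have := (abs_le.1 hz).1
    rw [max_eq_left (by nlinarith), Real.mul_rpow hx.le (by linarith)]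
  have hv0 : v x = d ^ α * ψ x := by rw [hv, max_eq_left hx.le]
  have hvp : v (x + y) = d ^ α * (1 + t) ^ α * ψ (x + y) := by
    rw [hv, ← hp t ht2, PiLp.add_apply, hyt, ← hd, mul_add, mul_one]
  have hvm : v (x - y) = d ^ α * (1 - t) ^ α * ψ (x - y) := by
    rw [hv, sub_eq_add_neg 1 t, ← hp (-t) (by rwa [abs_neg]), PiLp.sub_apply, hyt, ← hd]
    ring_nf
  have hsplit : symmSecondDiff v x y = d ^ α * (ψ x * ((1 + t) ^ α + (1 - t) ^ α - 2) +
      symmSecondDiff ψ x y + (((1 + t) ^ α - 1) * (ψ (x + y) - ψ x) +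
        ((1 - t) ^ α - 1) * (ψ (x - y) - ψ x))) := by
    simp only [symmSecondDiff, hv0, hvp, hvm]
    ring
  have hda : 0 ≤ d ^ α := Real.rpow_nonneg hx.le _
  have hRabs : d ≤ |R| := hdR.trans (le_abs_self R)
  have e1 : |ψ x * ((1 + t) ^ α + (1 - t) ^ α - 2)| ≤ B * A * r ^ 2 := by
    rw [abs_mul, mul_assoc]
    have : t ^ 2 ≤ r ^ 2 := by rw [← sq_abs t]; gcongr
    gcongr
    · exact (hψb x 0).1
    · exact (hpow t ht2).1.trans (by gcongr)
  have e2 : |symmSecondDiff ψ x y| ≤ B * R ^ 2 * r ^ 2 := by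
    refine (hψb x y).2.2.trans ?_
    rw [hyr, mul_pow, mul_assoc]
    gcongr
  have e3 : |((1 + t) ^ α - 1) * (ψ (x + y) - ψ x)| ≤ A * (B * |R|) * r ^ 2 := by
    rw [abs_mul]
    calc _ ≤ (A * r) * (B * (|R| * r)) := by
          gcongr
          · exact (hpow t ht2).2.trans (by gcongr)
          · exact (hψb x y).2.1.trans (by rw [hyr]; gcongr)
      _ = _ := by ring
  have e4 : |((1 - t) ^ α - 1) * (ψ (x - y) - ψ x)| ≤ A * (B * |R|) * r ^ 2 := by
    rw [abs_mul]
    calc _ ≤ (A * r) * (B * (|R| * r)) := by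
          gcongr
          · have := (hpow (-t) (by rwa [abs_neg])).2
            rw [abs_neg, ← sub_eq_add_neg] at this
            exact this.trans (by gcongr)
          · have := (hψb x (-y)).2.1
            rw [norm_neg, ← sub_eq_add_neg] at this
            exact this.trans (by rw [hyr]; gcongr)
      _ = _ := by ring
  rw [hsplit, abs_mul, abs_of_nonneg hda, mul_left_comm]
  refine mul_le_mul_of_nonneg_left ?_ hda
  refine ((abs_add_le _ _).trans (add_le_add (abs_add_le _ _) (abs_add_le _ _))).trans ?_
  linarith

/-- A kernel dominated by `‖y‖ ^ (-(n + 1 + 2 s))` is integrable near `y = 0` against a function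
vanishing to second order in `y` and having a power type degeneration at the boundary. -/
theorem integrable_mul_indicator_ball {n : ℕ} {s α κ C D R : ℝ} (hα : α ≤ κ) (hκα : κ - α < 1)
    (hs : 2 * s < κ) (hκ0 : 0 < κ) (hκ2 : κ ≤ 2) (hC : 0 ≤ C) (hD : 0 ≤ D)
    {G : EuclideanSpace ℝ (Fin (n + 1)) → EuclideanSpace ℝ (Fin (n + 1)) → ℝ}
    (hGm : Measurable (Function.uncurry G)) {K : EuclideanSpace ℝ (Fin (n + 1)) → ℝ}
    (hKm : Measurable K) (hK : ∀ y, |K y| ≤ D * ‖y‖ ^ (-((n + 1 : ℝ) + 2 * s)))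
    (hzero : ∀ x y, ‖y‖ < 1 → ¬(0 < x (Fin.last n) ∧ ‖x‖ ≤ R) → G x y = 0)
    (hint : ∀ x y, ‖y‖ < 1 → 0 < x (Fin.last n) → ‖x‖ ≤ R → ‖y‖ ≤ x (Fin.last n) / 2 →
      |G x y| ≤ C * (x (Fin.last n) ^ α * (‖y‖ / x (Fin.last n)) ^ 2))
    (hbdry : ∀ x y, ‖y‖ < 1 → 0 < x (Fin.last n) → ‖x‖ ≤ R → x (Fin.last n) ≤ 2 * ‖y‖ →
      |G x y| ≤ C * ‖y‖ ^ α) :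
    Integrable (fun p : EuclideanSpace ℝ (Fin (n + 1)) × EuclideanSpace ℝ (Fin (n + 1)) =>
      G p.1 p.2 * (Metric.ball 0 1).indicator K p.2) (volume.prod volume) := by
  have hprod := ((integrable_indicator_halfBall_rpow n hκα R).mul_prod
    (integrable_indicator_ball_norm_rpow n (sub_pos.2 hs))).const_mul (C * 2 ^ (κ - α) * D)
  refine hprod.mono' (Measurable.aestronglyMeasurable ?_) (.of_forall fun ⟨x, y⟩ => ?_)
  · exact hGm.mul ((hKm.indicator measurableSet_ball).comp measurable_snd)
  have h2 : (1 : ℝ) ≤ 2 ^ (κ - α) := Real.one_le_rpow (by norm_num) (by linarith)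
  dsimp only
  by_cases hy : y ∈ Metric.ball (0 : EuclideanSpace ℝ (Fin (n + 1))) 1
  swap
  · simp [hy]
  have hy1 : ‖y‖ < 1 := by simpa using hy
  by_cases hx : 0 < x (Fin.last n) ∧ ‖x‖ ≤ R
  swap
  · rw [Set.indicator_of_notMem (a := x) (by exact hx), hzero x y hy1 hx]
    simp
  rw [Set.indicator_of_mem hy, Set.indicator_of_mem hy, Set.indicator_of_mem (by exact hx),
    norm_mul, Real.norm_eq_abs, Real.norm_eq_abs]
  set d := x (Fin.last n) with hd
  have hd0 : 0 < d := hx.1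
  have hG : |G x y| ≤ C * 2 ^ (κ - α) * (d ^ (-(κ - α)) * ‖y‖ ^ κ) := by
    rcases le_total ‖y‖ (d / 2) with h | h
    · have hr0 : 0 ≤ ‖y‖ / d := by positivity
      have hr1 : ‖y‖ / d ≤ 1 := by rw [div_le_one hd0]; linarith
      have hsq : (‖y‖ / d) ^ 2 ≤ (‖y‖ / d) ^ κ := by
        rw [← Real.rpow_natCast]
        exact Real.rpow_le_rpow_of_exponent_ge_of_imp hr0 hr1 (by simpa using hκ2)
          (fun _ h => absurd h (by norm_num))
      calc |G x y| ≤ C * (d ^ α * (‖y‖ / d) ^ 2) := hint x y hy1 hd0 hx.2 h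
        _ ≤ C * (d ^ α * (‖y‖ / d) ^ κ) := by gcongr
        _ = C * 1 * (d ^ (-(κ - α)) * ‖y‖ ^ κ) := by
          rw [Real.div_rpow (norm_nonneg _) hd0.le, neg_sub, Real.rpow_sub hd0]
          ring
        _ ≤ _ := by gcongr
    · have hy0 : 0 < ‖y‖ := by linarith
      have hneg : ‖y‖ ^ (-(κ - α)) ≤ (d / 2) ^ (-(κ - α)) :=
        Real.rpow_le_rpow_of_nonpos (by linarith) h (by linarith)
      calc |G x y| ≤ C * ‖y‖ ^ α := hbdry x y hy1 hd0 hx.2 (by linarith)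
        _ = C * (‖y‖ ^ (-(κ - α)) * ‖y‖ ^ κ) := by
          rw [← Real.rpow_add hy0]
          ring_nf
        _ ≤ C * ((d / 2) ^ (-(κ - α)) * ‖y‖ ^ κ) := by gcongr
        _ = _ := by
          rw [Real.div_rpow hd0.le (by norm_num), Real.rpow_neg (by norm_num : (0 : ℝ) ≤ 2)]
          field_simp
  calc |G x y| * |K y|
      ≤ C * 2 ^ (κ - α) * (d ^ (-(κ - α)) * ‖y‖ ^ κ) * (D * ‖y‖ ^ (-((n + 1 : ℝ) + 2 * s))) :=
        mul_le_mul hG (hK y) (abs_nonneg _) (by positivity)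
    _ = C * 2 ^ (κ - α) * D * (d ^ (-(κ - α)) * (‖y‖ ^ κ * ‖y‖ ^ (-((n + 1 : ℝ) + 2 * s)))) := by
        ring
    _ ≤ _ := by
        gcongr
        rcases (norm_nonneg y).eq_or_lt with h | h
        · rw [← h, Real.zero_rpow hκ0.ne', zero_mul]
          exact Real.rpow_nonneg le_rfl _
        · rw [← Real.rpow_add h]
          apply le_of_eq
          ring_nf

theorem norm_add_smul_le_mul {F : Type*} [NormedAddCommGroup F] [NormedSpace ℝ F] {x y : F}
    {c R : ℝ} (hc : |c| ≤ 1) (hx : ‖x‖ ≤ R) : ‖x + c • y‖ ≤ R + ‖y‖ := by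
  refine (norm_add_le _ _).trans (add_le_add hx ?_)
  rw [norm_smul, Real.norm_eq_abs]
  exact mul_le_of_le_one_left (norm_nonneg _) hc

theorem integrable_mul_indicator_compl_ball {n : ℕ} {s δ β D R : ℝ} (hδ0 : 0 < δ)
    (hδ2 : δ ≤ 2 * s) (hβ : 0 ≤ β) (hR : 0 ≤ R)
    {u v : EuclideanSpace ℝ (Fin (n + 1)) → ℝ} (hu : Measurable u) (hvm : Measurable v)
    (hv : Integrable v) (hvR : ∀ x, ¬‖x‖ ≤ R → v x = 0)
    (hugrowth : ∀ x, |u x| ≤ β * (1 + ‖x‖ ^ (2 * s - δ)))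
    {K : EuclideanSpace ℝ (Fin (n + 1)) → ℝ} (hKm : Measurable K)
    (hK : ∀ y, |K y| ≤ D * ‖y‖ ^ (-((n + 1 : ℝ) + 2 * s))) {c : ℝ} (hc : |c| ≤ 1) :
    Integrable (fun p : EuclideanSpace ℝ (Fin (n + 1)) × EuclideanSpace ℝ (Fin (n + 1)) =>
      v p.1 * u (p.1 + c • p.2) * (Metric.ball 0 1)ᶜ.indicator K p.2) (volume.prod volume) := by
  have hprod := (hv.norm.mul_prod
    (integrable_indicator_compl_ball_norm_rpow n hδ0)).const_mul
      (β * (1 + (R + 1) ^ (2 * s - δ)) * D)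
  refine hprod.mono' (Measurable.aestronglyMeasurable ?_) (.of_forall fun ⟨x, y⟩ => ?_)
  · exact ((hvm.comp measurable_fst).mul (hu.comp (by fun_prop))).mul
      ((hKm.indicator measurableSet_ball.compl).comp measurable_snd)
  dsimp only
  by_cases hy : y ∈ (Metric.ball (0 : EuclideanSpace ℝ (Fin (n + 1))) 1)ᶜ
  swap
  · simp [Set.indicator_of_notMem hy]
  by_cases hx : ‖x‖ ≤ R
  swap
  · simp [hvR x hx]
  have hy1 : 1 ≤ ‖y‖ := by simpa using hy
  have hy0 : 0 < ‖y‖ := by linarith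
  have hq : 0 ≤ 2 * s - δ := by linarith
  rw [Set.indicator_of_mem hy, Set.indicator_of_mem hy]
  simp only [norm_mul, Real.norm_eq_abs]
  have hu1 : |u (x + c • y)| ≤ β * (1 + (R + 1) ^ (2 * s - δ)) * ‖y‖ ^ (2 * s - δ) := by
    have h1 : ‖x + c • y‖ ≤ (R + 1) * ‖y‖ :=
      (norm_add_smul_le_mul hc hx).trans (by nlinarith)
    have h2 : ‖x + c • y‖ ^ (2 * s - δ) ≤ (R + 1) ^ (2 * s - δ) * ‖y‖ ^ (2 * s - δ) := by
      rw [← Real.mul_rpow (by positivity) hy0.le]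
      exact Real.rpow_le_rpow (norm_nonneg _) h1 hq
    have h3 : 1 ≤ ‖y‖ ^ (2 * s - δ) := Real.one_le_rpow hy1 hq
    refine (hugrowth _).trans ?_
    rw [mul_assoc, add_mul, one_mul]
    gcongr
  calc |v x| * |u (x + c • y)| * |K y|
      ≤ |v x| * (β * (1 + (R + 1) ^ (2 * s - δ)) * ‖y‖ ^ (2 * s - δ)) *
          (D * ‖y‖ ^ (-((n + 1 : ℝ) + 2 * s))) := by
        gcongr
        exact hK y
    _ = β * (1 + (R + 1) ^ (2 * s - δ)) * D *
          (|v x| * (‖y‖ ^ (2 * s - δ) * ‖y‖ ^ (-((n + 1 : ℝ) + 2 * s)))) := by ring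
    _ = _ := by
        rw [← Real.rpow_add hy0]
        congr 4
        ring

theorem integral_mul_symmSecondDiff_comm {F : Type*} [AddGroup F] [MeasurableSpace F]
    [MeasurableAdd F] {μ : Measure F} [μ.IsAddRightInvariant] {u v : F → ℝ} (y : F)
    (hadd : Integrable (fun x => v x * u (x + y)) μ)
    (hsub : Integrable (fun x => v x * u (x - y)) μ) (h0 : Integrable (fun x => v x * u x) μ) :
    ∫ x, u x * symmSecondDiff v x y ∂μ = ∫ x, v x * symmSecondDiff u x y ∂μ := by
  have hadd' : Integrable (fun x => v (x - y) * u x) μ := by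
    simpa using hadd.comp_sub_right y
  have hsub' : Integrable (fun x => v (x + y) * u x) μ := by
    simpa using hsub.comp_add_right y
  have hs1 : Integrable (fun x => v (x + y) * u x + v (x - y) * u x) μ := hsub'.add hadd'
  have hs2 : Integrable (fun x => v x * u (x + y) + v x * u (x - y)) μ := hadd.add hsub
  have e1 : ∫ x, v (x - y) * u x ∂μ = ∫ x, v x * u (x + y) ∂μ := by
    simpa using integral_sub_right_eq_self (μ := μ) (fun x => v x * u (x + y)) y
  have e2 : ∫ x, v (x + y) * u x ∂μ = ∫ x, v x * u (x - y) ∂μ := by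
    simpa using integral_add_right_eq_self (μ := μ) (fun x => v x * u (x - y)) y
  calc ∫ x, u x * symmSecondDiff v x y ∂μ
      = ∫ x, (v (x + y) * u x + v (x - y) * u x) - 2 * (v x * u x) ∂μ := by
        congr with x
        simp only [symmSecondDiff]
        ring
    _ = ∫ x, (v x * u (x + y) + v x * u (x - y)) - 2 * (v x * u x) ∂μ := by
        rw [integral_sub hs1 (h0.const_mul 2), integral_add hsub' hadd', e1, e2,
          integral_sub hs2 (h0.const_mul 2), integral_add hadd hsub, add_comm]
    _ = _ := by
        congr with x
        simp only [symmSecondDiff]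
        ring

theorem abs_symmSecondDiff_le_four_mul {F : Type*} [AddGroup F] {f : F → ℝ} {x y : F} {m : ℝ}
    (hadd : |f (x + y)| ≤ m) (hsub : |f (x - y)| ≤ m) (h0 : |f x| ≤ m) :
    |symmSecondDiff f x y| ≤ 4 * m := by
  rw [abs_le] at *
  unfold symmSecondDiff
  constructor <;> linarith

/-- Integration by parts (self-adjointness of `L` against the non-smooth test function
`v_α(x) = (x_N)₊^α ψ(x)`): `∫ u L v_α = ∫ v_α L u`, both integrals being absolutely
convergent. -/
theorem stmt10 (n : ℕ) (s α δ β : ℝ) (hs0 : 0 < s) (hs1 : s < 1)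
    (hα1 : max (2 * s - 1) 0 < α) (hα2 : α < 2 * s) (hδ0 : 0 < δ) (hδ2 : δ ≤ 2 * s)
    (hβ : 0 < β)
    (a : EuclideanSpace ℝ (Fin (n + 1)) → ℝ) (ha : Measurable a)
    (hanonneg : ∀ θ, 0 ≤ a θ) (D : ℝ) (habd : ∀ θ, a θ ≤ D)
    (haeven : ∀ θ, a (-θ) = a θ)
    (ψ : EuclideanSpace ℝ (Fin (n + 1)) → ℝ) (hψ : ContDiff ℝ 2 ψ)
    (hψc : HasCompactSupport ψ)
    (v : EuclideanSpace ℝ (Fin (n + 1)) → ℝ)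
    (hv : ∀ x, v x = max (x (Fin.last n)) 0 ^ α * ψ x)
    (u : EuclideanSpace ℝ (Fin (n + 1)) → ℝ)
    (huC2 : ContDiffOn ℝ 2 u {x : EuclideanSpace ℝ (Fin (n + 1)) | 0 < x (Fin.last n)})
    (huC2bd : ∀ K : Set (EuclideanSpace ℝ (Fin (n + 1))), IsCompact K →
      ∃ M : ℝ, ∀ x ∈ K, 0 < x (Fin.last n) →
        |u x| + ‖fderiv ℝ u x‖ + ‖fderiv ℝ (fderiv ℝ u) x‖ ≤ M)
    (huzero : ∀ x : EuclideanSpace ℝ (Fin (n + 1)), x (Fin.last n) ≤ 0 → u x = 0)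
    (hugrowth : ∀ x, |u x| ≤ β * (1 + ‖x‖ ^ (2 * s - δ)))
    (L : (EuclideanSpace ℝ (Fin (n + 1)) → ℝ) → EuclideanSpace ℝ (Fin (n + 1)) → ℝ)
    (hL : ∀ w z, L w z =
      ∫ y, (w (z + y) + w (z - y) - 2 * w z) * ‖y‖ ^ (-((n + 1 : ℝ) + 2 * s)) *
        a (‖y‖⁻¹ • y)) :
    Integrable (fun x => u x * L v x) ∧ Integrable (fun x => v x * L u x) ∧
      (∫ x, u x * L v x) = ∫ x, v x * L u x := by
  have hαpos : 0 < α := (le_max_right _ _).trans_lt hα1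
  have hα2s : 2 * s - 1 < α := (le_max_left _ _).trans_lt hα1
  have hD : 0 ≤ D := (hanonneg 0).trans (habd 0)
  set K : EuclideanSpace ℝ (Fin (n + 1)) → ℝ :=
    fun y => ‖y‖ ^ (-((n + 1 : ℝ) + 2 * s)) * a (‖y‖⁻¹ • y) with hKdef
  have hKm : Measurable K := by
    refine Measurable.mul (by fun_prop) (ha.comp ?_)
    exact measurable_norm.inv.smul measurable_id
  have hK : ∀ y, |K y| ≤ D * ‖y‖ ^ (-((n + 1 : ℝ) + 2 * s)) := by
    intro y
    rw [abs_mul, abs_of_nonneg (by positivity), abs_of_nonneg (hanonneg _), mul_comm]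
    gcongr
    exact habd _
  have hlast : Continuous fun x : EuclideanSpace ℝ (Fin (n + 1)) => x (Fin.last n) := by fun_prop
  have hum : Measurable u := by
    classical
    have hs : MeasurableSet {x : EuclideanSpace ℝ (Fin (n + 1)) | 0 < x (Fin.last n)} :=
      measurableSet_lt measurable_const hlast.measurable
    have := huC2.continuousOn.measurable_piecewise (continuousOn_const (c := (0 : ℝ))) hs
    convert this using 1
    ext x
    by_cases hx : 0 < x (Fin.last n)
    · simp [Set.piecewise, hx]
    · simp [Set.piecewise, hx, huzero x (not_lt.1 hx)]
  have hvc : Continuous v := by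
    rw [funext hv]
    exact ((hlast.max continuous_const).rpow_const fun _ => .inr hαpos.le).mul hψ.continuous
  have hvs : HasCompactSupport v := by
    rw [funext hv]
    exact hψc.mul_left
  have hvi : Integrable v := hvc.integrable_of_hasCompactSupport hvs
  obtain ⟨R, hR0, hR⟩ : ∃ R : ℝ, 0 ≤ R ∧ ∀ x, ¬‖x‖ ≤ R → v x = 0 := by
    obtain ⟨R, hR⟩ := hvs.isCompact.isBounded.subset_closedBall 0
    refine ⟨max R 0, le_max_right _ _, fun x hx => ?_⟩
    refine image_eq_zero_of_notMem_tsupport fun h => hx ?_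
    exact (mem_closedBall_zero_iff.1 (hR h)).trans (le_max_left _ _)
  obtain ⟨B, hB, hψb⟩ := exists_bounds_of_contDiff_two hψ hψc
  have hub : ∀ r x, ‖x‖ ≤ r → |u x| ≤ β * (1 + r ^ (2 * s - δ)) := by
    intro r x hx
    refine (hugrowth x).trans ?_
    have := Real.rpow_le_rpow (norm_nonneg x) hx (by linarith : 0 ≤ 2 * s - δ)
    gcongr
  have hvb : ∀ (r : ℝ) z, z (Fin.last n) ≤ r → 0 ≤ r → |v z| ≤ B * r ^ α := by
    intro r z hz hr
    rw [hv, abs_mul, abs_of_nonneg (by positivity), mul_comm]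
    gcongr
    · exact (hψb z 0).1
    · exact max_le hz hr
  obtain ⟨κ, hκs, hκα, hκ2⟩ : ∃ κ, 2 * s < κ ∧ κ - α < 1 ∧ κ ≤ 2 :=
    ⟨min 2 ((1 + α + 2 * s) / 2), lt_min (by linarith) (by linarith),
      by linarith [min_le_right 2 ((1 + α + 2 * s) / 2)], min_le_left _ _⟩
  obtain ⟨M, hM, hMu⟩ := exists_symmSecondDiff_bound_halfSpace huC2 huC2bd R
  obtain ⟨Cv, hCv, hCvb⟩ := exists_symmSecondDiff_bound_rpow_mul hψ hψc hv (R + 1)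
  set m := β * (1 + (R + 1) ^ (2 * s - δ)) with hm
  have hm0 : 0 ≤ m := by positivity
  have hfar : ∀ c : ℝ, |c| ≤ 1 → Integrable
      (fun p : EuclideanSpace ℝ (Fin (n + 1)) × EuclideanSpace ℝ (Fin (n + 1)) =>
        v p.1 * u (p.1 + c • p.2) * (Metric.ball 0 1)ᶜ.indicator K p.2) (volume.prod volume) :=
    fun c hc => integrable_mul_indicator_compl_ball hδ0 hδ2 hβ.le hR0 hum hvc.measurable hvi hR
      hugrowth hKm hK hc
  have hfar0 := hfar 0 (by simp)
  have hfar1 := hfar 1 (by simp)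
  have hfar2 := hfar (-1) (by simp)
  simp only [zero_smul, add_zero, one_smul, neg_smul, ← sub_eq_add_neg] at hfar0 hfar1 hfar2
  have hcoord : ∀ y : EuclideanSpace ℝ (Fin (n + 1)), |y (Fin.last n)| ≤ ‖y‖ :=
    fun y => PiLp.norm_apply_le y (Fin.last n)
  have hnear_u : Integrable
      (fun p : EuclideanSpace ℝ (Fin (n + 1)) × EuclideanSpace ℝ (Fin (n + 1)) =>
        v p.1 * symmSecondDiff u p.1 p.2 * (Metric.ball 0 1).indicator K p.2)
      (volume.prod volume) := by
    refine integrable_mul_indicator_ball (G := fun x y => v x * symmSecondDiff u x y)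
      (α := α) (κ := κ) (R := R) (C := B * (M * R ^ 2) + B * 2 ^ α * (4 * m)) (by linarith) hκα hκs
      (by linarith) hκ2 (by positivity) hD ?_ hKm hK ?_ ?_ ?_
    · have hv' := hvc.measurable
      unfold symmSecondDiff Function.uncurry
      fun_prop
    · intro x y _ hx
      by_cases h : ‖x‖ ≤ R
      · have hx0 : x (Fin.last n) ≤ 0 := not_lt.1 fun h' => hx ⟨h', h⟩
        simp [hv x, max_eq_right hx0, Real.zero_rpow hαpos.ne']
      · simp [hR x h]
    · intro x y hy hx hxR hyx
      have h1 := hvb _ x le_rfl hx.le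
      have h2 := hMu x y hx hxR hy.le hyx
      have hd : x (Fin.last n) ≤ R := (le_abs_self _).trans ((hcoord x).trans hxR)
      have h3 : ‖y‖ ^ 2 ≤ R ^ 2 * (‖y‖ / x (Fin.last n)) ^ 2 := by
        rw [← mul_pow]
        gcongr
        rw [mul_div_assoc', le_div_iff₀ hx, mul_comm]
        gcongr
      have hxα : 0 ≤ x (Fin.last n) ^ α := Real.rpow_nonneg hx.le _
      rw [abs_mul]
      calc _ ≤ B * x (Fin.last n) ^ α * (M * (R ^ 2 * (‖y‖ / x (Fin.last n)) ^ 2)) := by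
            gcongr
            exact h2.trans (by gcongr)
        _ = B * (M * R ^ 2) * (x (Fin.last n) ^ α * (‖y‖ / x (Fin.last n)) ^ 2) := by ring
        _ ≤ _ := by
            gcongr
            exact le_add_of_nonneg_right (by positivity)
    · intro x y hy hx hxR hxy
      have h1 := hvb (2 * ‖y‖) x hxy (by positivity)
      have hnorm : ∀ c : ℝ, |c| ≤ 1 → ‖x + c • y‖ ≤ R + 1 := fun c hc =>
        (norm_add_smul_le_mul hc hxR).trans (by linarith)
      have h2 : |symmSecondDiff u x y| ≤ 4 * m := by
        refine abs_symmSecondDiff_le_four_mul (hub _ _ ?_) (hub _ _ ?_) (hub _ _ (by linarith))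
        · simpa using hnorm 1 (by simp)
        · simpa [← sub_eq_add_neg] using hnorm (-1) (by simp)
      rw [abs_mul]
      rw [Real.mul_rpow (by norm_num) (norm_nonneg y)] at h1
      calc _ ≤ B * (2 ^ α * ‖y‖ ^ α) * (4 * m) := by gcongr
        _ = B * 2 ^ α * (4 * m) * ‖y‖ ^ α := by ring
        _ ≤ _ := by
            gcongr
            exact le_add_of_nonneg_left (by positivity)
  have hnear_v : Integrable
      (fun p : EuclideanSpace ℝ (Fin (n + 1)) × EuclideanSpace ℝ (Fin (n + 1)) =>
        u p.1 * symmSecondDiff v p.1 p.2 * (Metric.ball 0 1).indicator K p.2)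
      (volume.prod volume) := by
    refine integrable_mul_indicator_ball (G := fun x y => u x * symmSecondDiff v x y)
      (α := α) (κ := κ) (R := R + 1) (C := m * Cv + m * (4 * (B * 3 ^ α))) (by linarith) hκα hκs
      (by linarith) hκ2 (by positivity) hD ?_ hKm hK ?_ ?_ ?_
    · have hv' := hvc.measurable
      unfold symmSecondDiff Function.uncurry
      fun_prop
    · intro x y hy hx
      by_cases h : ‖x‖ ≤ R + 1
      · simp [huzero x (not_lt.1 fun h' => hx ⟨h', h⟩)]
      · have h0 : ∀ z, ‖z - x‖ < 1 → v z = 0 := fun z hz => hR z fun hzR => h <| by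
          calc ‖x‖ = ‖z - (z - x)‖ := by rw [sub_sub_cancel]
            _ ≤ ‖z‖ + ‖z - x‖ := norm_sub_le _ _
            _ ≤ R + 1 := by linarith
        simp [symmSecondDiff, h0 x (by simp), h0 (x + y) (by simpa using hy),
          h0 (x - y) (by simpa using hy)]
    · intro x y hy hx hxR hyx
      have h1 := hub _ x hxR
      have hxα : 0 ≤ x (Fin.last n) ^ α := Real.rpow_nonneg hx.le _
      rw [abs_mul]
      calc _ ≤ m * (Cv * (x (Fin.last n) ^ α * (‖y‖ / x (Fin.last n)) ^ 2)) := by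
            gcongr
            exact hCvb x y hx hxR hyx
        _ = m * Cv * (x (Fin.last n) ^ α * (‖y‖ / x (Fin.last n)) ^ 2) := by ring
        _ ≤ _ := by
            gcongr
            exact le_add_of_nonneg_right (by positivity)
    · intro x y hy hx hxR hxy
      have h1 := hub _ x hxR
      have hy' := abs_le.1 (hcoord y)
      have h2 : |symmSecondDiff v x y| ≤ 4 * (B * (3 * ‖y‖) ^ α) := by
        refine abs_symmSecondDiff_le_four_mul (hvb _ _ ?_ (by positivity))
          (hvb _ _ ?_ (by positivity)) (hvb _ _ (by linarith [norm_nonneg y]) (by positivity))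
        · rw [PiLp.add_apply]
          linarith
        · rw [PiLp.sub_apply]
          linarith
      rw [abs_mul]
      rw [Real.mul_rpow (by norm_num) (norm_nonneg y)] at h2
      calc _ ≤ m * (4 * (B * (3 ^ α * ‖y‖ ^ α))) := by gcongr
        _ = m * (4 * (B * 3 ^ α)) * ‖y‖ ^ α := by ring
        _ ≤ _ := by
            gcongr
            exact le_add_of_nonneg_left (by positivity)
  have hsplit : ∀ y, K y = (Metric.ball 0 1).indicator K y + (Metric.ball 0 1)ᶜ.indicator K y :=
    fun y => (Set.indicator_self_add_compl_apply _ K y).symm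
  have hint_u : Integrable
      (fun p : EuclideanSpace ℝ (Fin (n + 1)) × EuclideanSpace ℝ (Fin (n + 1)) =>
        v p.1 * symmSecondDiff u p.1 p.2 * K p.2) (volume.prod volume) := by
    refine (hnear_u.add ((hfar1.add hfar2).sub (hfar0.const_mul 2))).congr (.of_forall fun p => ?_)
    simp only [Pi.add_apply, Pi.sub_apply]
    rw [hsplit p.2, symmSecondDiff]
    ring
  have hint_v : Integrable
      (fun p : EuclideanSpace ℝ (Fin (n + 1)) × EuclideanSpace ℝ (Fin (n + 1)) =>
        u p.1 * symmSecondDiff v p.1 p.2 * K p.2) (volume.prod volume) := by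
    have hshift_add := (measurePreserving_add_prod
      (volume : Measure (EuclideanSpace ℝ (Fin (n + 1)))) volume).integrable_comp_of_integrable hfar2
    have hshift_sub := (measurePreserving_sub_prod
      (volume : Measure (EuclideanSpace ℝ (Fin (n + 1)))) volume).integrable_comp_of_integrable hfar1
    refine (hnear_v.add ((hshift_add.add hshift_sub).sub (hfar0.const_mul 2))).congr
      (.of_forall fun p => ?_)
    simp only [Pi.add_apply, Pi.sub_apply, Function.comp_apply, add_sub_cancel_right,
      sub_add_cancel]
    rw [hsplit p.2, symmSecondDiff]
    ring
  have hL_mul : ∀ f w : EuclideanSpace ℝ (Fin (n + 1)) → ℝ,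
      (fun x => f x * L w x) = fun x => ∫ y, f x * symmSecondDiff w x y * K y := by
    intro f w
    ext x
    rw [hL, ← integral_const_mul]
    congr with y
    simp only [symmSecondDiff, hKdef]
    ring
  rw [hL_mul u v, hL_mul v u]
  refine ⟨hint_v.integral_prod_left, hint_u.integral_prod_left, ?_⟩
  rw [integral_integral_swap hint_v,
    integral_integral_swap (f := fun x y => v x * symmSecondDiff u x y * K y) hint_u]
  congr with y
  rw [integral_mul_const, integral_mul_const]
  congr 1
  have hprod : ∀ c : ℝ, |c| ≤ 1 → Integrable fun x => v x * u (x + c • y) := by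
    intro c hc
    refine (hvi.norm.const_mul (β * (1 + (R + ‖y‖) ^ (2 * s - δ)))).mono'
      (hvc.measurable.mul (hum.comp (by fun_prop))).aestronglyMeasurable (.of_forall fun x => ?_)
    rw [norm_mul, mul_comm]
    by_cases hx : ‖x‖ ≤ R
    · gcongr
      exact hub _ _ (norm_add_smul_le_mul hc hx)
    · simp [hR x hx]
  refine integral_mul_symmSecondDiff_comm y ?_ ?_ ?_
  · simpa using hprod 1 (by simp)
  · simpa [← sub_eq_add_neg] using hprod (-1) (by simp)
  · simpa using hprod 0 (by simp)
end

section
/- Let N ≥ 2, 0 < s < 1, 1 ≤ p ≤ N/(N-2s), and let L be a stable operator of the form Lu(x) = ∫[u(x+y)+u(x-y)-2u(x)]|y|^{-(N+2s)}a(y/|y|)dy with 0 ≤ a ≤ D on 𝕊^{N-1}, a even, and a ≥ d > 0 on Σ_{ν₀,τ₀}(0) ∩ 𝕊^{N-1} for some cone of positive aperture. If u ∈ C²(ℝ^N) is nonnegative, satisfies the growth bound limsup_{|x|→∞} |u(x)|/|x|^{2s-δ} < ∞ for some δ ∈ (0,2s], and -Lu ≥ u^p in ℝ^N, then u ≡ 0.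 -/
open MeasureTheory
open scoped RealInnerProductSpace

section

variable {E : Type*} [NormedAddCommGroup E]

/-- The size of a second difference of step `y` for a `C²` function of growth `β`. -/
noncomputable def stepWeight (β : ℝ) (y : E) : ℝ := if ‖y‖ ≤ 1 then ‖y‖ ^ 2 else ‖y‖ ^ β

lemma stepWeight_nonneg (β : ℝ) (y : E) : 0 ≤ stepWeight β y := by
  unfold stepWeight; split_ifs <;> positivity

variable [InnerProductSpace ℝ E]

lemma two_mul_gaussian_mul_le (b : ℝ) (x y : E) :
    2 * Real.exp (-b * ‖x‖ ^ 2) * Real.exp (-b * ‖y‖ ^ 2) ≤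
      Real.exp (-b * ‖x + y‖ ^ 2) + Real.exp (-b * ‖x - y‖ ^ 2) := by
  have h1 : Real.exp (-b * ‖x + y‖ ^ 2) = Real.exp (-b * ‖x‖ ^ 2) * Real.exp (-b * ‖y‖ ^ 2) *
      Real.exp (-(2 * b * ⟪x, y⟫)) := by
    rw [norm_add_sq_real, ← Real.exp_add, ← Real.exp_add]; ring_nf
  have h2 : Real.exp (-b * ‖x - y‖ ^ 2) = Real.exp (-b * ‖x‖ ^ 2) * Real.exp (-b * ‖y‖ ^ 2) *
      Real.exp (2 * b * ⟪x, y⟫) := by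
    rw [norm_sub_sq_real, ← Real.exp_add, ← Real.exp_add]; ring_nf
  have h3 := Real.one_le_cosh (2 * b * ⟪x, y⟫)
  rw [Real.cosh_eq] at h3
  have h4 : 0 < Real.exp (-b * ‖x‖ ^ 2) * Real.exp (-b * ‖y‖ ^ 2) := by positivity
  rw [h1, h2]
  nlinarith

/-- Truncated Gaussians `(e^{-b|x|²} - ε)₊` inherit the lower bound on second differences. -/
lemma secondDiff_truncatedGaussian_ge {b : ℝ} (hb : 0 ≤ b) (ε : ℝ) (x y : E) :
    -(2 * (1 - Real.exp (-b * ‖y‖ ^ 2)) * Real.exp (-b * ‖x‖ ^ 2)) ≤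
      max (Real.exp (-b * ‖x + y‖ ^ 2) - ε) 0 + max (Real.exp (-b * ‖x - y‖ ^ 2) - ε) 0
        - 2 * max (Real.exp (-b * ‖x‖ ^ 2) - ε) 0 := by
  have h1 := two_mul_gaussian_mul_le b x y
  have h2 : Real.exp (-b * ‖y‖ ^ 2) ≤ 1 := Real.exp_le_one_iff.2 (by nlinarith [sq_nonneg ‖y‖])
  have h3 := le_max_left (Real.exp (-b * ‖x + y‖ ^ 2) - ε) 0
  have h4 := le_max_left (Real.exp (-b * ‖x - y‖ ^ 2) - ε) 0
  have h5 := le_max_right (Real.exp (-b * ‖x + y‖ ^ 2) - ε) 0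
  have h6 := le_max_right (Real.exp (-b * ‖x - y‖ ^ 2) - ε) 0
  have h7 := Real.exp_pos (-b * ‖x‖ ^ 2)
  rcases max_cases (Real.exp (-b * ‖x‖ ^ 2) - ε) 0 with ⟨h, _⟩ | ⟨h, _⟩ <;> rw [h] <;> nlinarith

variable [FiniteDimensional ℝ E]

lemma exists_abs_secondDiff_le_sq {u : E → ℝ} (hu : ContDiff ℝ 2 u) (ρ : ℝ) :
    ∃ K : ℝ, 0 ≤ K ∧ ∀ x y : E, ‖x‖ ≤ ρ → ‖y‖ ≤ 1 →
      |u (x + y) + u (x - y) - 2 * u x| ≤ K * ‖y‖ ^ 2 := by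
  have hdu : ContDiff ℝ 1 (fderiv ℝ u) := hu.fderiv_right (by norm_num)
  have hddu : Continuous (fderiv ℝ (fderiv ℝ u)) := hdu.continuous_fderiv (by norm_num)
  obtain ⟨K, hK⟩ := (isCompact_closedBall (0 : E) (ρ + 1)).exists_bound_of_continuousOn
    (f := fderiv ℝ (fderiv ℝ u)) hddu.continuousOn
  have hlip : ∀ z w : E, ‖z‖ ≤ ρ + 1 → ‖w‖ ≤ ρ + 1 →
      ‖fderiv ℝ u z - fderiv ℝ u w‖ ≤ max K 0 * ‖z - w‖ := fun z w hz hw =>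
    (convex_closedBall (0 : E) (ρ + 1)).norm_image_sub_le_of_norm_fderiv_le
      (fun x _ => (hdu.differentiable (by norm_num)) x)
      (fun x hx => (hK x hx).trans (le_max_left _ _)) (by simpa using hw) (by simpa using hz)
  refine ⟨max K 0, le_max_right _ _, fun x y hx hy => ?_⟩
  have hud : Differentiable ℝ u := hu.differentiable (by norm_num)
  have hderiv : ∀ z, HasFDerivAt (fun z => u (z + y) - u z)
      (fderiv ℝ u (z + y) - fderiv ℝ u z) z := fun z => by
    refine HasFDerivAt.sub ?_ (hud z).hasFDerivAt
    exact (hasFDerivAt_comp_add_right y).2 (hud (z + y)).hasFDerivAt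
  have hseg : ∀ z ∈ segment ℝ (x - y) x, ‖z‖ ≤ ρ + 1 ∧ ‖z + y‖ ≤ ρ + 1 := by
    rintro z ⟨α, β, hα, hβ, hαβ, rfl⟩
    obtain rfl : β = 1 - α := by linarith
    have h1 : α • (x - y) + (1 - α) • x = x - α • y := by module
    have h2 : x - α • y + y = x + (1 - α) • y := by module
    rw [h1, h2]
    have h3 : ‖α • y‖ ≤ 1 := by
      rw [norm_smul, Real.norm_of_nonneg hα]; nlinarith [norm_nonneg y]
    have h4 : ‖(1 - α) • y‖ ≤ 1 := by
      rw [norm_smul, Real.norm_of_nonneg hβ]; nlinarith [norm_nonneg y]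
    exact ⟨(norm_sub_le _ _).trans (add_le_add hx h3), (norm_add_le _ _).trans (add_le_add hx h4)⟩
  have h := (convex_segment (x - y) x).norm_image_sub_le_of_norm_hasFDerivWithin_le
    (f := fun z => u (z + y) - u z) (C := max K 0 * ‖y‖)
    (fun z _ => (hderiv z).hasFDerivWithinAt)
    (fun z hz => by simpa using hlip (z + y) z (hseg z hz).2 (hseg z hz).1)
    (left_mem_segment ℝ (x - y) x) (right_mem_segment ℝ (x - y) x)
  simp only [sub_add_cancel, sub_sub_cancel, Real.norm_eq_abs] at h
  calc _ = |u (x + y) - u x - (u x - u (x - y))| := by ring_nf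
    _ ≤ _ := h
    _ = _ := by ring

lemma exists_abs_le_one_add_norm_rpow {u : E → ℝ} (hu : Continuous u) {β C R : ℝ} (hβ : 0 ≤ β)
    (h : ∀ x, R ≤ ‖x‖ → |u x| ≤ C * ‖x‖ ^ β) :
    ∃ K : ℝ, 0 ≤ K ∧ ∀ x, |u x| ≤ K * (1 + ‖x‖) ^ β := by
  obtain ⟨M, hM⟩ := (isCompact_closedBall (0 : E) R).exists_bound_of_continuousOn hu.continuousOn
  refine ⟨max (max C M) 0, le_max_right _ _, fun x => ?_⟩
  have h1 : 1 ≤ (1 + ‖x‖) ^ β := Real.one_le_rpow (by linarith [norm_nonneg x]) hβ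
  have h0 : 0 ≤ max (max C M) 0 := le_max_right _ _
  rcases le_total R ‖x‖ with hx | hx
  · calc |u x| ≤ C * ‖x‖ ^ β := h x hx
      _ ≤ max (max C M) 0 * (1 + ‖x‖) ^ β := by
        refine mul_le_mul (le_max_of_le_left (le_max_left _ _)) ?_ (by positivity) h0
        exact Real.rpow_le_rpow (norm_nonneg x) (by linarith) hβ
  · calc |u x| ≤ M := hM x (by simpa using hx)
      _ ≤ max (max C M) 0 := le_max_of_le_left (le_max_right _ _)
      _ ≤ max (max C M) 0 * (1 + ‖x‖) ^ β := le_mul_of_one_le_right h0 h1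

lemma exists_abs_secondDiff_le_stepWeight {u : E → ℝ} (hu : ContDiff ℝ 2 u) {β C : ℝ}
    (hβ : 0 ≤ β) (hC : 0 ≤ C) (hgrowth : ∀ x, |u x| ≤ C * (1 + ‖x‖) ^ β) {ρ : ℝ} (hρ : 0 ≤ ρ) :
    ∃ K : ℝ, 0 ≤ K ∧ ∀ x y : E, ‖x‖ ≤ ρ →
      |u (x + y) + u (x - y) - 2 * u x| ≤ K * stepWeight β y := by
  obtain ⟨K, hK0, hK⟩ := exists_abs_secondDiff_le_sq hu ρ
  refine ⟨max K (4 * (C * (2 + ρ) ^ β)), le_max_of_le_left hK0, fun x y hx => ?_⟩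
  unfold stepWeight
  split_ifs with hy
  · exact (hK x y hx hy).trans (by gcongr; exact le_max_left _ _)
  · push Not at hy
    have hz : ∀ z : E, ‖z‖ ≤ ρ + ‖y‖ → |u z| ≤ C * (2 + ρ) ^ β * ‖y‖ ^ β := fun z hz => by
      refine (hgrowth z).trans ?_
      rw [mul_assoc, ← Real.mul_rpow (by positivity) (by positivity)]
      gcongr
      nlinarith
    have h1 := hz (x + y) ((norm_add_le _ _).trans (by linarith))
    have h2 := hz (x - y) ((norm_sub_le _ _).trans (by linarith))
    have h3 := hz x (by linarith)
    refine le_trans ?_ (mul_le_mul_of_nonneg_right (le_max_right K _) (by positivity))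
    rw [abs_le] at *
    constructor <;> linarith

lemma hasCompactSupport_truncatedGaussian {b ε : ℝ} (hb : 0 < b) (hε : 0 < ε) :
    HasCompactSupport fun x : E => max (Real.exp (-b * ‖x‖ ^ 2) - ε) 0 := by
  refine HasCompactSupport.intro (isCompact_closedBall (0 : E) (1 + 1 / (b * ε))) fun x hx => ?_
  rw [mem_closedBall_zero_iff, not_le] at hx
  refine max_eq_right (sub_nonpos.2 ?_)
  have h0 : 0 < 1 / (b * ε) := by positivity
  have h1 : 1 / (b * ε) ≤ ‖x‖ ^ 2 := by nlinarith
  have h2 : 1 / ε ≤ b * ‖x‖ ^ 2 := by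
    calc 1 / ε = b * (1 / (b * ε)) := by field_simp
      _ ≤ _ := by gcongr
  have h3 := Real.add_one_le_exp (b * ‖x‖ ^ 2)
  rw [neg_mul, Real.exp_neg, inv_le_comm₀ (Real.exp_pos _) hε, inv_eq_one_div]
  linarith

variable [MeasurableSpace E] [BorelSpace E]

lemma integrable_gaussian {b : ℝ} (hb : 0 < b) :
    Integrable (fun x : E => Real.exp (-b * ‖x‖ ^ 2)) := by
  by_contra h
  have := GaussianFourier.integral_rexp_neg_mul_sq_norm (V := E) hb
  rw [integral_undef h] at this
  have : 0 < (Real.pi / b) ^ (Module.finrank ℝ E / 2 : ℝ) := by positivity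
  linarith

lemma integrable_one_add_norm_rpow_mul_gaussian {b : ℝ} (hb : 0 < b) (m : ℝ) :
    Integrable (fun x : E => (1 + ‖x‖) ^ m * Real.exp (-b * ‖x‖ ^ 2)) := by
  obtain ⟨n, hn⟩ := exists_nat_ge m
  set K : ℝ := 2 ^ n * (n.factorial * (2 / b) ^ n * Real.exp (b / 2))
  refine ((integrable_gaussian (E := E) (half_pos hb)).const_mul K).mono' ?_ (.of_forall fun x => ?_)
  · refine Continuous.aestronglyMeasurable ?_
    refine Continuous.mul (Continuous.rpow_const (by fun_prop) fun x => Or.inl ?_) (by fun_prop)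
    positivity
  · rw [Real.norm_of_nonneg (by positivity)]
    have h1 : (1 + ‖x‖) ^ m ≤ (2 * (1 + ‖x‖ ^ 2)) ^ n := by
      calc (1 + ‖x‖) ^ m ≤ (1 + ‖x‖) ^ (n : ℝ) :=
            Real.rpow_le_rpow_of_exponent_le (by linarith [norm_nonneg x]) hn
        _ = (1 + ‖x‖) ^ n := Real.rpow_natCast _ _
        _ ≤ _ := by gcongr; nlinarith [sq_nonneg (‖x‖ - 1), sq_nonneg ‖x‖]
    have h2 := Real.pow_div_factorial_le_exp (b / 2 * (1 + ‖x‖ ^ 2)) (by positivity) n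
    rw [div_le_iff₀ (by positivity), mul_pow] at h2
    have h3 : (1 + ‖x‖ ^ 2) ^ n ≤
        n.factorial * (2 / b) ^ n * Real.exp (b / 2 * (1 + ‖x‖ ^ 2)) := by
      have h4 : (2 / b) ^ n * (b / 2) ^ n = 1 := by
        rw [← mul_pow, div_mul_div_cancel₀ hb.ne', div_self two_ne_zero, one_pow]
      calc (1 + ‖x‖ ^ 2) ^ n = (2 / b) ^ n * ((b / 2) ^ n * (1 + ‖x‖ ^ 2) ^ n) := by
            rw [← mul_assoc, h4, one_mul]
        _ ≤ (2 / b) ^ n * (Real.exp (b / 2 * (1 + ‖x‖ ^ 2)) * n.factorial) := by gcongr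
        _ = _ := by ring
    calc (1 + ‖x‖) ^ m * Real.exp (-b * ‖x‖ ^ 2)
        ≤ (2 ^ n * (n.factorial * (2 / b) ^ n * Real.exp (b / 2 * (1 + ‖x‖ ^ 2))))
            * Real.exp (-b * ‖x‖ ^ 2) := by
          gcongr
          rw [mul_pow] at h1
          exact h1.trans (by gcongr)
      _ = 2 ^ n * (n.factorial * (2 / b) ^ n) *
            (Real.exp (b / 2 * (1 + ‖x‖ ^ 2)) * Real.exp (-b * ‖x‖ ^ 2)) := by ring
      _ = 2 ^ n * (n.factorial * (2 / b) ^ n) *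
            (Real.exp (b / 2) * Real.exp (-(b / 2) * ‖x‖ ^ 2)) := by
          rw [← Real.exp_add, ← Real.exp_add]; ring_nf
      _ = K * Real.exp (-(b / 2) * ‖x‖ ^ 2) := by simp only [K]; ring

lemma integrable_one_sub_gaussian_mul {k : E → ℝ} (hkm : Measurable k) (hk0 : ∀ y, 0 ≤ k y)
    {β : ℝ} (hβ : 0 ≤ β) (hk : Integrable fun y => stepWeight β y * k y) {b : ℝ} (hb : 0 ≤ b) :
    Integrable fun y : E => (1 - Real.exp (-b * ‖y‖ ^ 2)) * k y := by
  refine (hk.const_mul (b + 1)).mono' ?_ (.of_forall fun y => ?_)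
  · exact ((Continuous.measurable (by fun_prop)).mul hkm).aestronglyMeasurable
  · have h1 : Real.exp (-b * ‖y‖ ^ 2) ≤ 1 :=
      Real.exp_le_one_iff.2 (by nlinarith [sq_nonneg ‖y‖])
    have h2 := Real.add_one_le_exp (-b * ‖y‖ ^ 2)
    rw [Real.norm_of_nonneg (mul_nonneg (by linarith) (hk0 y)), ← mul_assoc]
    refine mul_le_mul_of_nonneg_right ?_ (hk0 y)
    unfold stepWeight
    split_ifs with hy
    · nlinarith [sq_nonneg ‖y‖]
    · have := Real.one_le_rpow (not_le.1 hy).le hβ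
      nlinarith [Real.exp_pos (-b * ‖y‖ ^ 2)]

/-- The nonlocal operator with kernel `k` is symmetric when tested against compactly supported
functions. -/
lemma integral_mul_integral_secondDiff {k : E → ℝ} (hkm : Measurable k) (hk0 : ∀ y, 0 ≤ k y)
    {β : ℝ} (hβ : 0 ≤ β) (hk : Integrable fun y => stepWeight β y * k y)
    {u : E → ℝ} (hu : ContDiff ℝ 2 u) {C : ℝ} (hC : 0 ≤ C)
    (hgrowth : ∀ x, |u x| ≤ C * (1 + ‖x‖) ^ β)
    {ψ : E → ℝ} (hψ : Continuous ψ) (hψc : HasCompactSupport ψ) :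
    Integrable (fun x => ψ x * ∫ y, (u (x + y) + u (x - y) - 2 * u x) * k y) ∧
    Integrable (fun y => (∫ x, u x * (ψ (x + y) + ψ (x - y) - 2 * ψ x)) * k y) ∧
    ∫ x, ψ x * ∫ y, (u (x + y) + u (x - y) - 2 * u x) * k y =
      ∫ y, (∫ x, u x * (ψ (x + y) + ψ (x - y) - 2 * ψ x)) * k y := by
  have huc : Continuous u := hu.continuous
  obtain ⟨ρ, hρ0, hρ⟩ : ∃ ρ : ℝ, 0 ≤ ρ ∧ ∀ x, ρ < ‖x‖ → ψ x = 0 := by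
    obtain ⟨r, hr⟩ := hψc.isCompact.isBounded.subset_closedBall (0 : E)
    refine ⟨max r 0, le_max_right _ _, fun x hx => image_eq_zero_of_notMem_tsupport fun h => ?_⟩
    have := hr h
    rw [mem_closedBall_zero_iff] at this
    exact absurd (this.trans (le_max_left r 0)) (not_le.2 hx)
  obtain ⟨K, hK0, hK⟩ := exists_abs_secondDiff_le_stepWeight hu hβ hC hgrowth hρ0
  have hψi : Integrable ψ := hψ.integrable_of_hasCompactSupport hψc
  have hint : Integrable (Function.uncurry fun (x y : E) =>
      ψ x * ((u (x + y) + u (x - y) - 2 * u x) * k y)) (volume.prod volume) := by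
    refine (hψi.norm.mul_prod (hk.const_mul K)).mono' ?_ (.of_forall fun ⟨x, y⟩ => ?_)
    · refine Measurable.aestronglyMeasurable ?_
      refine Measurable.mul (Continuous.measurable (by fun_prop)) (Measurable.mul ?_ (by fun_prop))
      exact Continuous.measurable (by fun_prop)
    · simp only [Function.uncurry_apply_pair]
      by_cases hx : ρ < ‖x‖
      · simp [hρ x hx]
      · rw [norm_mul, norm_mul, Real.norm_of_nonneg (hk0 y), ← mul_assoc K]
        gcongr
        · exact hk0 y
        · exact hK x y (not_lt.1 hx)
  have hswap := integral_integral_swap hint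
  have hinner : ∀ y, ∫ x, ψ x * ((u (x + y) + u (x - y) - 2 * u x) * k y) =
      (∫ x, u x * (ψ (x + y) + ψ (x - y) - 2 * ψ x)) * k y := by
    intro y
    have hi : ∀ z : E, Integrable (fun x => ψ x * u (x + z)) := fun z =>
      (hψ.mul (by fun_prop)).integrable_of_hasCompactSupport hψc.mul_right
    have hi' : ∀ z : E, Integrable (fun x => u x * ψ (x + z)) := fun z =>
      (huc.mul (by fun_prop)).integrable_of_hasCompactSupport
        (hψc.comp_homeomorph (Homeomorph.addRight z)).mul_left
    have he : ∀ z : E, ∫ x, ψ x * u (x + z) = ∫ x, u x * ψ (x + -z) := fun z => by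
      rw [← integral_add_right_eq_self (fun x => u x * ψ (x + -z)) z]
      simp only [add_neg_cancel_right, mul_comm]
    have e1 : ∀ x, ψ x * ((u (x + y) + u (x - y) - 2 * u x) * k y) =
        (ψ x * u (x + y) + ψ x * u (x + -y) - 2 * (ψ x * u (x + 0))) * k y := fun x => by
      rw [add_zero, sub_eq_add_neg x y]; ring
    have e2 : ∀ x, u x * (ψ (x + y) + ψ (x - y) - 2 * ψ x) =
        u x * ψ (x + - -y) + u x * ψ (x + -y) - 2 * (u x * ψ (x + -0)) := fun x => by
      rw [neg_zero, add_zero, neg_neg, sub_eq_add_neg x y]; ring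
    have hlin : ∀ F G H : E → ℝ, Integrable F → Integrable G → Integrable H →
        ∫ x, (F x + G x - 2 * H x) = (∫ x, F x) + (∫ x, G x) - 2 * ∫ x, H x :=
      fun F G H hF hG hH => by
        rw [← integral_const_mul, ← integral_add hF hG]
        exact integral_sub (hF.add hG) (hH.const_mul 2)
    simp only [e1, e2]
    rw [integral_mul_const, hlin _ _ _ (hi _) (hi _) (hi _), hlin _ _ _ (hi' _) (hi' _) (hi' _),
      he, he, he]
    ring
  refine ⟨?_, ?_, ?_⟩
  · have := hint.integral_prod_left
    simpa only [Function.uncurry_apply_pair, integral_const_mul] using this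
  · have := hint.integral_prod_right
    simpa only [Function.uncurry_apply_pair, hinner] using this
  · simpa only [integral_const_mul, hinner] using hswap

lemma integrable_mul_gaussian_of_growth {u : E → ℝ} (hu : Continuous u) {C m : ℝ}
    (hgrowth : ∀ x, |u x| ≤ C * (1 + ‖x‖) ^ m) {b : ℝ} (hb : 0 < b) :
    Integrable fun x => u x * Real.exp (-b * ‖x‖ ^ 2) := by
  refine ((integrable_one_add_norm_rpow_mul_gaussian hb m).const_mul C).mono'
    (Continuous.aestronglyMeasurable (by fun_prop)) (.of_forall fun x => ?_)
  rw [norm_mul, Real.norm_of_nonneg (Real.exp_pos _).le, ← mul_assoc]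
  gcongr
  exact hgrowth x

/-- Testing a supersolution of growth `β` against a Gaussian. -/
lemma integral_mul_gaussian_le {k : E → ℝ} (hkm : Measurable k) (hk0 : ∀ y, 0 ≤ k y)
    {β : ℝ} (hβ : 0 ≤ β) (hk : Integrable fun y => stepWeight β y * k y)
    {u : E → ℝ} (hu : ContDiff ℝ 2 u) (hu0 : ∀ x, 0 ≤ u x) {C : ℝ} (hC : 0 ≤ C)
    (hgrowth : ∀ x, |u x| ≤ C * (1 + ‖x‖) ^ β) {f : E → ℝ} (hf : Continuous f)
    (hf0 : ∀ x, 0 ≤ f x) {b : ℝ} (hb : 0 < b)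
    (hfb : Integrable fun x => f x * Real.exp (-b * ‖x‖ ^ 2))
    (hsup : ∀ x, f x ≤ -∫ y, (u (x + y) + u (x - y) - 2 * u x) * k y) :
    ∫ x, f x * Real.exp (-b * ‖x‖ ^ 2) ≤
      2 * (∫ y, (1 - Real.exp (-b * ‖y‖ ^ 2)) * k y) * ∫ x, u x * Real.exp (-b * ‖x‖ ^ 2) := by
  set J := ∫ x, u x * Real.exp (-b * ‖x‖ ^ 2)
  have huc : Continuous u := hu.continuous
  have huw := integrable_mul_gaussian_of_growth huc hgrowth hb
  have htrunc : ∀ ε : ℝ, 0 < ε → ∫ x, f x * max (Real.exp (-b * ‖x‖ ^ 2) - ε) 0 ≤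
      2 * (∫ y, (1 - Real.exp (-b * ‖y‖ ^ 2)) * k y) * J := by
    intro ε hε
    set ψ : E → ℝ := fun x => max (Real.exp (-b * ‖x‖ ^ 2) - ε) 0
    have hψ : Continuous ψ := by fun_prop
    have hψc : HasCompactSupport ψ := hasCompactSupport_truncatedGaussian hb hε
    obtain ⟨hi1, hi2, heq⟩ := integral_mul_integral_secondDiff hkm hk0 hβ hk hu hC hgrowth hψ hψc
    have h1 : ∫ x, f x * ψ x ≤ -∫ x, ψ x * ∫ y, (u (x + y) + u (x - y) - 2 * u x) * k y := by
      rw [← integral_neg]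
      refine integral_mono ((hf.mul hψ).integrable_of_hasCompactSupport hψc.mul_left) hi1.neg
        fun x => ?_
      have := mul_le_mul_of_nonneg_left (hsup x) (le_max_right _ _ : 0 ≤ ψ x)
      simp only
      linarith
    have h2 : ∀ y, -(2 * (1 - Real.exp (-b * ‖y‖ ^ 2)) * J) ≤
        ∫ x, u x * (ψ (x + y) + ψ (x - y) - 2 * ψ x) := fun y => by
      rw [← integral_const_mul, ← integral_neg]
      refine integral_mono (huw.const_mul _).neg ?_ fun x => ?_
      · refine Continuous.integrable_of_hasCompactSupport (by fun_prop) (HasCompactSupport.mul_left ?_)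
        exact (((hψc.comp_homeomorph (Homeomorph.addRight y))).add
          ((hψc.comp_homeomorph (Homeomorph.subRight y)))).sub hψc.mul_left
      · have := mul_le_mul_of_nonneg_left (secondDiff_truncatedGaussian_ge hb.le ε x y) (hu0 x)
        simp only [ψ]
        linarith
    have h3 : ∫ y, -(2 * J) * ((1 - Real.exp (-b * ‖y‖ ^ 2)) * k y) ≤
        ∫ y, (∫ x, u x * (ψ (x + y) + ψ (x - y) - 2 * ψ x)) * k y := by
      refine integral_mono ((integrable_one_sub_gaussian_mul hkm hk0 hβ hk hb.le).const_mul _) hi2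
        fun y => ?_
      have := mul_le_mul_of_nonneg_right (h2 y) (hk0 y)
      simp only
      linarith
    rw [integral_const_mul, ← heq] at h3
    linarith
  have hlim : Filter.Tendsto (fun n : ℕ => ∫ x, f x *
      max (Real.exp (-b * ‖x‖ ^ 2) - 1 / ((n : ℝ) + 1)) 0) Filter.atTop
      (nhds (∫ x, f x * Real.exp (-b * ‖x‖ ^ 2))) := by
    refine tendsto_integral_of_dominated_convergence _
      (fun n => Continuous.aestronglyMeasurable (by fun_prop)) hfb
      (fun n => .of_forall fun x => ?_) (.of_forall fun x => ?_)
    · rw [norm_mul, Real.norm_of_nonneg (hf0 x), Real.norm_of_nonneg (le_max_right _ _)]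
      refine mul_le_mul_of_nonneg_left (max_le ?_ (Real.exp_pos _).le) (hf0 x)
      have : 0 < 1 / ((n : ℝ) + 1) := by positivity
      linarith
    · have h := (((tendsto_const_nhds (x := Real.exp (-b * ‖x‖ ^ 2))).sub
        tendsto_one_div_add_atTop_nhds_zero_nat).max (tendsto_const_nhds (x := (0 : ℝ)))).const_mul
        (f x)
      rwa [sub_zero, max_eq_left (Real.exp_pos _).le] at h
  exact le_of_tendsto' hlim fun n => htrunc _ (by positivity)

lemma integral_gaussian_scale {r : ℝ} (hr : 0 < r) :
    r ^ Module.finrank ℝ E * ∫ x : E, Real.exp (-r ^ 2 * ‖x‖ ^ 2) =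
      ∫ x : E, Real.exp (-1 * ‖x‖ ^ 2) := by
  have h := Measure.integral_comp_smul volume (fun x : E => Real.exp (-1 * ‖x‖ ^ 2)) r
  have h1 : ∀ x : E, Real.exp (-1 * ‖r • x‖ ^ 2) = Real.exp (-r ^ 2 * ‖x‖ ^ 2) := fun x => by
    rw [norm_smul, Real.norm_of_nonneg hr.le]; ring_nf
  simp only [h1] at h
  rw [h, abs_of_pos (by positivity), smul_eq_mul, mul_inv_cancel_left₀ (by positivity)]

lemma integral_one_sub_gaussian_mul_scale {k : E → ℝ} {σ : ℝ}
    (hk : ∀ r : ℝ, 0 < r → ∀ y, k (r • y) = r ^ (-(Module.finrank ℝ E + σ)) * k y)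
    {r : ℝ} (hr : 0 < r) :
    ∫ y : E, (1 - Real.exp (-r ^ 2 * ‖y‖ ^ 2)) * k y =
      r ^ σ * ∫ y : E, (1 - Real.exp (-1 * ‖y‖ ^ 2)) * k y := by
  have h := Measure.integral_comp_smul volume
    (fun y : E => (1 - Real.exp (-1 * ‖y‖ ^ 2)) * k y) r
  have h1 : ∀ y : E, (1 - Real.exp (-1 * ‖r • y‖ ^ 2)) * k (r • y) =
      r ^ (-(Module.finrank ℝ E + σ)) * ((1 - Real.exp (-r ^ 2 * ‖y‖ ^ 2)) * k y) := fun y => by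
    rw [norm_smul, Real.norm_of_nonneg hr.le, hk r hr]; ring_nf
  simp only [h1] at h
  rw [integral_const_mul, abs_of_pos (by positivity), smul_eq_mul, neg_add, Real.rpow_add hr,
    Real.rpow_neg hr.le, Real.rpow_neg hr.le, Real.rpow_natCast, mul_assoc] at h
  have h2 := mul_left_cancel₀ (by positivity) h
  rw [← h2, mul_inv_cancel_left₀ (by positivity)]

lemma le_add_rpow_mul_rpow {p t η : ℝ} (hp : 1 ≤ p) (ht : 0 ≤ t) (hη : 0 < η) :
    t ≤ η + η ^ (1 - p) * t ^ p := by
  rcases le_total t η with h | h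
  · have : 0 ≤ η ^ (1 - p) * t ^ p := by positivity
    linarith
  · have ht' : 0 < t := hη.trans_le h
    have h1 : t ^ (1 - p) ≤ η ^ (1 - p) :=
      Real.rpow_le_rpow_of_nonpos hη h (by linarith)
    have h2 : t ^ (1 - p) * t ^ p = t := by
      rw [← Real.rpow_add ht', sub_add_cancel, Real.rpow_one]
    have h3 : t ^ (1 - p) * t ^ p ≤ η ^ (1 - p) * t ^ p := by gcongr
    linarith

/-- Scaled Young inequality at or below the critical exponent `n / (n - σ)`. -/
lemma rpow_mul_le_add_min {p σ n t A r : ℝ} (hp : 1 ≤ p) (hpn : p * (n - σ) ≤ n) (ht : 0 ≤ t)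
    (hA : 0 < A) (hr : 0 < r) (hr1 : r ≤ 1) :
    r ^ σ * t ≤ A * r ^ n + min (r ^ σ * t) (A ^ (1 - p) * t ^ p) ∧
    r ^ σ * t ≤ A * r ^ n + A ^ (1 - p) * r ^ (σ - (n - σ) * (p - 1)) * t ^ p := by
  have hη : 0 < A * r ^ (n - σ) := by positivity
  have h := mul_le_mul_of_nonneg_left (le_add_rpow_mul_rpow hp ht hη)
    (by positivity : 0 ≤ r ^ σ)
  have e1 : r ^ σ * (A * r ^ (n - σ)) = A * r ^ n := by
    rw [mul_left_comm, ← Real.rpow_add hr, add_sub_cancel]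
  have e2 : r ^ σ * ((A * r ^ (n - σ)) ^ (1 - p) * t ^ p) =
      A ^ (1 - p) * r ^ (σ - (n - σ) * (p - 1)) * t ^ p := by
    rw [Real.mul_rpow hA.le (by positivity), ← Real.rpow_mul hr.le,
      show σ - (n - σ) * (p - 1) = σ + (n - σ) * (1 - p) by ring, Real.rpow_add hr]
    ring
  rw [mul_add, e1, e2] at h
  refine ⟨?_, h⟩
  have h0 : 0 ≤ A * r ^ n := by positivity
  have h3 : r ^ (σ - (n - σ) * (p - 1)) ≤ 1 := Real.rpow_le_one hr.le hr1 (by linarith)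
  have h4 : A ^ (1 - p) * r ^ (σ - (n - σ) * (p - 1)) * t ^ p ≤ A ^ (1 - p) * t ^ p := by
    rw [mul_right_comm]
    exact mul_le_of_le_one_right (by positivity) h3
  rw [← min_add_add_left]
  exact le_min (by linarith) (by linarith)

lemma exists_small_coefficient {p σ n κ : ℝ} (hp : 1 ≤ p) (hσ : 0 < σ)
    (hpn : p * (n - σ) ≤ n) (hκ : 0 ≤ κ) :
    ∃ A r₀ : ℝ, 0 < A ∧ 0 < r₀ ∧ r₀ ≤ 1 ∧ ∀ r, 0 < r → r ≤ r₀ →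
      κ * (A ^ (1 - p) * r ^ (σ - (n - σ) * (p - 1))) ≤ 1 / 2 := by
  have hB : 0 < 2 * κ + 1 := by positivity
  rcases hp.eq_or_lt with rfl | hp
  · refine ⟨1, (2 * κ + 1) ^ (-(1 / σ)), one_pos, by positivity,
      Real.rpow_le_one_of_one_le_of_nonpos (by linarith) (by simp [hσ.le]), fun r hr hr0 => ?_⟩
    have h1 : r ^ σ ≤ ((2 * κ + 1) ^ (-(1 / σ))) ^ σ := by gcongr
    rw [← Real.rpow_mul hB.le, show -(1 / σ) * σ = -1 by field_simp, Real.rpow_neg_one] at h1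
    simp only [sub_self, mul_zero, sub_zero, Real.rpow_zero, one_mul]
    calc κ * r ^ σ ≤ κ * (2 * κ + 1)⁻¹ := by gcongr
      _ ≤ 1 / 2 := by rw [← div_eq_mul_inv, div_le_div_iff₀ hB two_pos]; linarith
  · refine ⟨(2 * κ + 1) ^ (1 / (p - 1)), 1, by positivity, one_pos, le_rfl, fun r hr hr0 => ?_⟩
    have hp' : p - 1 ≠ 0 := by linarith
    rw [← Real.rpow_mul hB.le, show 1 / (p - 1) * (1 - p) = -1 by field_simp; ring,
      Real.rpow_neg_one]
    have h3 : r ^ (σ - (n - σ) * (p - 1)) ≤ 1 := Real.rpow_le_one hr.le hr0 (by linarith)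
    calc κ * ((2 * κ + 1)⁻¹ * r ^ (σ - (n - σ) * (p - 1))) ≤ κ * ((2 * κ + 1)⁻¹ * 1) := by gcongr
      _ ≤ 1 / 2 := by
        rw [mul_one, ← div_eq_mul_inv, div_le_div_iff₀ hB two_pos]; linarith

lemma integrable_of_integral_mul_gaussian_le {g : E → ℝ} (hg : Continuous g) (hg0 : ∀ x, 0 ≤ g x)
    {r₀ M : ℝ} (hr₀ : 0 < r₀) (hr₀1 : r₀ ≤ 1)
    (hint : ∀ r, 0 < r → Integrable fun x => g x * Real.exp (-r ^ 2 * ‖x‖ ^ 2))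
    (hM : ∀ r, 0 < r → r ≤ r₀ → ∫ x, g x * Real.exp (-r ^ 2 * ‖x‖ ^ 2) ≤ M) :
    Integrable g := by
  have hcov : AECover (volume : Measure E) Filter.atTop
      fun n : ℕ => Metric.closedBall (0 : E) n :=
    aecover_closedBall tendsto_natCast_atTop_atTop
  refine hcov.integrable_of_integral_bounded_of_nonneg_ae (Real.exp 1 * M)
    (fun n => hg.continuousOn.integrableOn_compact (isCompact_closedBall _ _))
    (.of_forall hg0) (.of_forall fun n => ?_)
  set r : ℝ := r₀ / (n + 1)
  have hr : 0 < r := by positivity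
  have hr1 : r ≤ r₀ := div_le_self hr₀.le (by linarith [n.cast_nonneg (α := ℝ)])
  have hrn : r * n ≤ 1 := by
    rw [div_mul_eq_mul_div, div_le_one (by positivity)]
    nlinarith [n.cast_nonneg (α := ℝ)]
  calc ∫ x in Metric.closedBall (0 : E) n, g x
      ≤ ∫ x in Metric.closedBall (0 : E) n,
          Real.exp 1 * (g x * Real.exp (-r ^ 2 * ‖x‖ ^ 2)) := by
        refine setIntegral_mono_on
          (hg.continuousOn.integrableOn_compact (isCompact_closedBall _ _))
          ((hint r hr).const_mul _).integrableOn Metric.isClosed_closedBall.measurableSet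
          fun x hx => ?_
        rw [mem_closedBall_zero_iff] at hx
        have h1 : r * ‖x‖ ≤ 1 := (mul_le_mul_of_nonneg_left hx hr.le).trans hrn
        have h2 : 1 ≤ Real.exp 1 * Real.exp (-r ^ 2 * ‖x‖ ^ 2) := by
          rw [← Real.exp_add]
          exact Real.one_le_exp (by nlinarith [mul_nonneg hr.le (norm_nonneg x)])
        rw [mul_left_comm]
        exact le_mul_of_one_le_right (hg0 x) h2
    _ ≤ ∫ x, Real.exp 1 * (g x * Real.exp (-r ^ 2 * ‖x‖ ^ 2)) :=
        setIntegral_le_integral ((hint r hr).const_mul _)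
          (.of_forall fun x => by have := hg0 x; positivity)
    _ ≤ _ := by
        rw [integral_const_mul]
        exact mul_le_mul_of_nonneg_left (hM r hr hr1) (Real.exp_pos 1).le

/-- Liouville theorem for homogeneous kernels. -/
theorem eq_zero_of_rpow_le_neg_integral {k : E → ℝ} (hkm : Measurable k) (hk0 : ∀ y, 0 ≤ k y)
    {σ p β C : ℝ} (hσ : 0 < σ) (hp : 1 ≤ p)
    (hpn : p * (Module.finrank ℝ E - σ) ≤ Module.finrank ℝ E)
    (hkhom : ∀ r : ℝ, 0 < r → ∀ y, k (r • y) = r ^ (-(Module.finrank ℝ E + σ)) * k y)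
    (hβ : 0 ≤ β) (hk : Integrable fun y => stepWeight β y * k y)
    {u : E → ℝ} (hu : ContDiff ℝ 2 u) (hu0 : ∀ x, 0 ≤ u x) (hC : 0 ≤ C)
    (hgrowth : ∀ x, |u x| ≤ C * (1 + ‖x‖) ^ β)
    (hsup : ∀ x, u x ^ p ≤ -∫ y, (u (x + y) + u (x - y) - 2 * u x) * k y) (x : E) :
    u x = 0 := by
  set n : ℝ := (Module.finrank ℝ E : ℝ)
  set κ := 2 * ∫ y : E, (1 - Real.exp (-1 * ‖y‖ ^ 2)) * k y
  set J := ∫ x : E, Real.exp (-1 * ‖x‖ ^ 2)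
  have hκ : 0 ≤ κ := mul_nonneg two_pos.le <| integral_nonneg fun y =>
    mul_nonneg (sub_nonneg.2 (Real.exp_le_one_iff.2 (by nlinarith [sq_nonneg ‖y‖]))) (hk0 y)
  have hJ : 0 ≤ J := integral_nonneg fun y => (Real.exp_pos _).le
  have hf : Continuous fun x => u x ^ p :=
    hu.continuous.rpow_const fun x => Or.inr (by linarith)
  have hf0 : ∀ x, 0 ≤ u x ^ p := fun x => Real.rpow_nonneg (hu0 x) p
  have huw : ∀ r : ℝ, 0 < r → Integrable fun x => u x * Real.exp (-r ^ 2 * ‖x‖ ^ 2) :=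
    fun r hr => integrable_mul_gaussian_of_growth hu.continuous hgrowth (by positivity)
  have hfw : ∀ r : ℝ, 0 < r → Integrable fun x => u x ^ p * Real.exp (-r ^ 2 * ‖x‖ ^ 2) := by
    intro r hr
    refine integrable_mul_gaussian_of_growth hf (C := C ^ p) (m := β * p) (fun x => ?_)
      (by positivity)
    have h1 : 0 ≤ 1 + ‖x‖ := by positivity
    rw [abs_of_nonneg (hf0 x), Real.rpow_mul h1, ← Real.mul_rpow hC (by positivity)]
    exact Real.rpow_le_rpow (hu0 x) ((le_abs_self _).trans (hgrowth x)) (by linarith)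
  have hJr : ∀ r : ℝ, 0 < r → r ^ n * ∫ x : E, Real.exp (-r ^ 2 * ‖x‖ ^ 2) = J := fun r hr => by
    rw [Real.rpow_natCast]; exact integral_gaussian_scale hr
  have htest : ∀ r : ℝ, 0 < r → ∫ x, u x ^ p * Real.exp (-r ^ 2 * ‖x‖ ^ 2) ≤
      κ * ∫ x, r ^ σ * u x * Real.exp (-r ^ 2 * ‖x‖ ^ 2) := fun r hr => by
    have h := integral_mul_gaussian_le hkm hk0 hβ hk hu hu0 hC hgrowth hf hf0
      (by positivity : 0 < r ^ 2) (hfw r hr) hsup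
    rw [integral_one_sub_gaussian_mul_scale hkhom hr] at h
    refine h.trans_eq ?_
    simp only [mul_assoc (r ^ σ)]
    rw [integral_const_mul]
    ring
  have hgi : ∀ r : ℝ, 0 < r → Integrable fun x : E => Real.exp (-r ^ 2 * ‖x‖ ^ 2) :=
    fun r hr => integrable_gaussian (by positivity)
  obtain ⟨A₀, r₀, hA₀, hr₀, hr₀1, hsmall⟩ := exists_small_coefficient hp hσ hpn hκ
  have hbound : ∀ r, 0 < r → r ≤ r₀ →
      ∫ x, u x ^ p * Real.exp (-r ^ 2 * ‖x‖ ^ 2) ≤ 2 * (κ * (A₀ * J)) := by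
    intro r hr hr1
    set c := A₀ ^ (1 - p) * r ^ (σ - (n - σ) * (p - 1))
    have h1 : ∫ x, r ^ σ * u x * Real.exp (-r ^ 2 * ‖x‖ ^ 2) ≤
        ∫ x, (A₀ * r ^ n * Real.exp (-r ^ 2 * ‖x‖ ^ 2) +
          c * (u x ^ p * Real.exp (-r ^ 2 * ‖x‖ ^ 2))) := by
      refine integral_mono ?_ (((hgi r hr).const_mul _).add ((hfw r hr).const_mul _)) fun x => ?_
      · simpa only [mul_assoc] using (huw r hr).const_mul (r ^ σ)
      · have := mul_le_mul_of_nonneg_right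
          (rpow_mul_le_add_min hp hpn (hu0 x) hA₀ hr (hr1.trans hr₀1)).2
          (Real.exp_pos (-r ^ 2 * ‖x‖ ^ 2)).le
        refine this.trans_eq ?_
        simp only [c]
        ring
    rw [integral_add ((hgi r hr).const_mul _) ((hfw r hr).const_mul _), integral_const_mul,
      integral_const_mul, mul_assoc, hJr r hr] at h1
    have h2 := (htest r hr).trans (mul_le_mul_of_nonneg_left h1 hκ)
    have h3 : 0 ≤ ∫ x, u x ^ p * Real.exp (-r ^ 2 * ‖x‖ ^ 2) :=
      integral_nonneg fun x => mul_nonneg (hf0 x) (Real.exp_pos _).le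
    have h4 := mul_le_mul_of_nonneg_right (hsmall r hr hr1) h3
    linarith
  have hfi : Integrable fun x => u x ^ p :=
    integrable_of_integral_mul_gaussian_le hf hf0 hr₀ hr₀1 hfw hbound
  set r : ℕ → ℝ := fun m => 1 / ((m : ℝ) + 1)
  have hr : ∀ m, 0 < r m := fun m => by positivity
  have hr1 : ∀ m, r m ≤ 1 := fun m => div_le_self one_pos.le (by linarith [m.cast_nonneg (α := ℝ)])
  have hrlim : Filter.Tendsto r Filter.atTop (nhds 0) := tendsto_one_div_add_atTop_nhds_zero_nat
  have hlim : Filter.Tendsto (fun m => ∫ x, u x ^ p * Real.exp (-r m ^ 2 * ‖x‖ ^ 2)) Filter.atTop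
      (nhds (∫ x, u x ^ p)) := by
    refine tendsto_integral_of_dominated_convergence _ (fun m => (hfw _ (hr m)).1) hfi
      (fun m => .of_forall fun x => ?_) (.of_forall fun x => ?_)
    · rw [norm_mul, Real.norm_of_nonneg (hf0 x), Real.norm_of_nonneg (Real.exp_pos _).le]
      exact mul_le_of_le_one_right (hf0 x) (Real.exp_le_one_iff.2 (by
        nlinarith [mul_nonneg (sq_nonneg (r m)) (sq_nonneg ‖x‖)]))
    · have h : Continuous fun t : ℝ => u x ^ p * Real.exp (-t ^ 2 * ‖x‖ ^ 2) := by fun_prop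
      have h1 := (h.tendsto 0).comp hrlim
      simpa [Function.comp_def] using h1
  have hle : ∀ A : ℝ, 0 < A → ∫ x, u x ^ p ≤ κ * (A * J) := by
    intro A hA
    have hmin0 : ∀ m x, 0 ≤ min (r m ^ σ * u x) (A ^ (1 - p) * u x ^ p) := fun m x =>
      le_min (mul_nonneg (Real.rpow_nonneg (hr m).le _) (hu0 x))
        (mul_nonneg (Real.rpow_nonneg hA.le _) (hf0 x))
    have hminc : ∀ m, Continuous fun x => min (r m ^ σ * u x) (A ^ (1 - p) * u x ^ p) := fun m =>
      (continuous_const.mul hu.continuous).min (continuous_const.mul hf)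
    have hmini : ∀ m, Integrable fun x => min (r m ^ σ * u x) (A ^ (1 - p) * u x ^ p) := fun m =>
      (hfi.const_mul (A ^ (1 - p))).mono' (hminc m).aestronglyMeasurable (.of_forall fun x => by
        rw [Real.norm_of_nonneg (hmin0 m x)]; exact min_le_right _ _)
    have hminlim : Filter.Tendsto (fun m => ∫ x, min (r m ^ σ * u x) (A ^ (1 - p) * u x ^ p))
        Filter.atTop (nhds (∫ _ : E, (0 : ℝ))) := by
      refine tendsto_integral_of_dominated_convergence (fun x => A ^ (1 - p) * u x ^ p)
        (fun m => (hmini m).1) (hfi.const_mul _)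
        (fun m => .of_forall fun x => ?_) (.of_forall fun x => ?_)
      · rw [Real.norm_of_nonneg (hmin0 m x)]; exact min_le_right _ _
      · have h1 : Filter.Tendsto (fun m => r m ^ σ * u x) Filter.atTop (nhds 0) := by
          have := (hrlim.rpow_const (Or.inr hσ.le)).mul_const (u x)
          rwa [Real.zero_rpow hσ.ne', zero_mul] at this
        exact squeeze_zero (fun m => hmin0 m x) (fun m => min_le_left _ _) h1
    have hstep : ∀ m, ∫ x, u x ^ p * Real.exp (-r m ^ 2 * ‖x‖ ^ 2) ≤
        κ * (A * J + ∫ x, min (r m ^ σ * u x) (A ^ (1 - p) * u x ^ p)) := by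
      intro m
      refine (htest _ (hr m)).trans (mul_le_mul_of_nonneg_left ?_ hκ)
      rw [← hJr _ (hr m), ← mul_assoc, ← integral_const_mul,
        ← integral_add ((hgi _ (hr m)).const_mul _) (hmini m)]
      refine integral_mono ?_ (((hgi _ (hr m)).const_mul _).add (hmini m)) fun x => ?_
      · simpa only [mul_assoc] using (huw _ (hr m)).const_mul (r m ^ σ)
      · have h1 := mul_le_mul_of_nonneg_right
          (rpow_mul_le_add_min hp hpn (hu0 x) hA (hr m) (hr1 m)).1
          (Real.exp_pos (-r m ^ 2 * ‖x‖ ^ 2)).le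
        refine h1.trans ?_
        rw [add_mul]
        refine add_le_add le_rfl (mul_le_of_le_one_right (hmin0 m x) (Real.exp_le_one_iff.2 ?_))
        nlinarith [mul_nonneg (sq_nonneg (r m)) (sq_nonneg ‖x‖)]
    have h := le_of_tendsto_of_tendsto' hlim ((hminlim.const_add (A * J)).const_mul κ) hstep
    simpa using h
  have hzero : ∫ x, u x ^ p = 0 := by
    refine le_antisymm (le_of_forall_pos_le_add fun ε hε => ?_) (integral_nonneg hf0)
    refine (hle (ε / (κ * J + 1)) (by positivity)).trans ?_
    rw [zero_add, show κ * (ε / (κ * J + 1) * J) = ε * (κ * J) / (κ * J + 1) by ring,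
      div_le_iff₀ (by positivity)]
    nlinarith
  have h1 := (integral_eq_zero_iff_of_nonneg hf0 hfi).1 hzero
  have h2 := congrFun ((hf.ae_eq_iff_eq volume continuous_zero).1 h1) x
  exact (Real.rpow_eq_zero (hu0 x) (by linarith)).1 h2

lemma integrable_stepWeight_mul_norm_rpow [Nontrivial E] {β σ : ℝ} (hσ : σ < 2) (hβσ : β < σ) :
    Integrable fun y : E => stepWeight β y * ‖y‖ ^ (-(Module.finrank ℝ E + σ)) := by
  have hn : 1 ≤ Module.finrank ℝ E := Module.finrank_pos
  refine (integrable_fun_norm_addHaar (E := E) volume (f := fun t : ℝ =>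
    (if t ≤ 1 then t ^ 2 else t ^ β) * t ^ (-(Module.finrank ℝ E + σ)))).2 ?_
  have hpow : ∀ t : ℝ, 0 < t → t ^ (Module.finrank ℝ E - 1) * t ^ (-(Module.finrank ℝ E + σ)) =
      t ^ (-1 - σ) := fun t ht => by
    rw [← Real.rpow_natCast, ← Real.rpow_add ht]
    push_cast [hn]
    ring_nf
  rw [← Set.Ioc_union_Ioi_eq_Ioi zero_le_one, integrableOn_union]
  constructor
  · have h := (intervalIntegral.intervalIntegrable_rpow' (a := 0) (b := 1)
      (by linarith : -1 < 1 - σ)).1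
    refine h.congr_fun (fun t ht => ?_) measurableSet_Ioc
    simp only [smul_eq_mul, if_pos ht.2]
    rw [mul_left_comm, hpow t ht.1, ← Real.rpow_natCast, ← Real.rpow_add ht.1]
    push_cast
    ring_nf
  · refine (integrableOn_Ioi_rpow_of_lt (by linarith : β - 1 - σ < -1) one_pos).congr_fun
      (fun t ht => ?_) measurableSet_Ioi
    have ht0 : 0 < t := one_pos.trans ht
    simp only [smul_eq_mul, if_neg (not_le.2 (Set.mem_Ioi.1 ht))]
    rw [mul_left_comm, hpow t ht0, ← Real.rpow_add ht0]
    ring_nf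

end

/-- Liouville theorem in the whole space: for `N ≥ 2`, `1 ≤ p ≤ N/(N-2s)`, a stable
operator `L` with bounded even spectral density `a ≥ 0` that is bounded below on a cone,
any nonnegative `u ∈ C²(ℝ^N) ∩ 𝓛_s` with `-Lu ≥ u^p` in `ℝ^N` vanishes identically. -/
theorem stmt18 (N : ℕ) (hN : 2 ≤ N) (s p : ℝ) (hs0 : 0 < s) (hs1 : s < 1)
    (hp1 : 1 ≤ p) (hp2 : p ≤ (N : ℝ) / ((N : ℝ) - 2 * s))
    (a : EuclideanSpace ℝ (Fin N) → ℝ) (ha : Measurable a)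
    (hanonneg : ∀ θ, 0 ≤ a θ) (D : ℝ) (habd : ∀ θ, a θ ≤ D)
    (haeven : ∀ θ, a (-θ) = a θ)
    (ν₀ : EuclideanSpace ℝ (Fin N)) (hν₀ : ‖ν₀‖ = 1)
    (τ₀ : ℝ) (hτ₀0 : 0 < τ₀) (hτ₀1 : τ₀ ≤ 1)
    (d : ℝ) (hd : 0 < d)
    (hacone : ∀ θ : EuclideanSpace ℝ (Fin N), ‖θ‖ = 1 →
      (1 - τ₀) * ‖θ‖ ≤ abs ⟪θ, ν₀⟫ → d ≤ a θ)
    (u : EuclideanSpace ℝ (Fin N) → ℝ) (huC2 : ContDiff ℝ 2 u) (hu0 : ∀ x, 0 ≤ u x)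
    (hugrowth : ∃ δ C R₀ : ℝ, 0 < δ ∧ δ ≤ 2 * s ∧
      ∀ x : EuclideanSpace ℝ (Fin N), R₀ ≤ ‖x‖ → |u x| ≤ C * ‖x‖ ^ (2 * s - δ))
    (hsup : ∀ x : EuclideanSpace ℝ (Fin N),
      u x ^ p ≤ -∫ y : EuclideanSpace ℝ (Fin N),
        (u (x + y) + u (x - y) - 2 * u x) * ‖y‖ ^ (-((N : ℝ) + 2 * s)) * a (‖y‖⁻¹ • y)) :
    ∀ x, u x = 0 := by
  have : Nontrivial (EuclideanSpace ℝ (Fin N)) := by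
    refine ⟨ν₀, 0, fun h => ?_⟩
    simp [h] at hν₀
  have hfin : (Module.finrank ℝ (EuclideanSpace ℝ (Fin N)) : ℝ) = N := by
    rw [finrank_euclideanSpace_fin]
  have hN' : (2 : ℝ) ≤ N := by exact_mod_cast hN
  obtain ⟨δ, C, R₀, hδ0, hδ, hgrowth⟩ := hugrowth
  obtain ⟨K, hK0, hK⟩ := exists_abs_le_one_add_norm_rpow huC2.continuous
    (sub_nonneg.2 hδ) hgrowth
  set k : EuclideanSpace ℝ (Fin N) → ℝ :=
    fun y => ‖y‖ ^ (-((N : ℝ) + 2 * s)) * a (‖y‖⁻¹ • y)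
  have hkm : Measurable k := by
    refine Measurable.mul (by fun_prop) (ha.comp ?_)
    exact (measurable_norm.inv).smul measurable_id
  have hk0 : ∀ y, 0 ≤ k y := fun y => mul_nonneg (by positivity) (hanonneg _)
  refine eq_zero_of_rpow_le_neg_integral hkm hk0 (σ := 2 * s) (p := p) (β := 2 * s - δ) (C := K)
    (by positivity) hp1 ?_ ?_ (sub_nonneg.2 hδ) ?_ huC2 hu0 hK0 hK ?_
  · rw [hfin]
    exact (le_div_iff₀ (by linarith)).1 hp2
  · intro r hr y
    simp only [k]
    rw [hfin, norm_smul, Real.norm_of_nonneg hr.le, Real.mul_rpow hr.le (norm_nonneg y), mul_inv,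
      smul_smul, mul_right_comm r⁻¹, inv_mul_cancel₀ hr.ne', one_mul, mul_assoc]
  · have h := integrable_stepWeight_mul_norm_rpow (E := EuclideanSpace ℝ (Fin N))
      (by linarith : 2 * s < 2) (by linarith : 2 * s - δ < 2 * s)
    rw [hfin] at h
    refine (h.const_mul D).mono' ?_ (.of_forall fun y => ?_)
    · refine (Measurable.mul ?_ hkm).aestronglyMeasurable
      exact Measurable.ite (measurableSet_le measurable_norm measurable_const) (by fun_prop)
        (by fun_prop)
    · rw [Real.norm_of_nonneg (mul_nonneg (stepWeight_nonneg _ y) (hk0 y))]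
      calc _ = stepWeight (2 * s - δ) y * ‖y‖ ^ (-((N : ℝ) + 2 * s)) * a (‖y‖⁻¹ • y) :=
            (mul_assoc _ _ _).symm
        _ ≤ stepWeight (2 * s - δ) y * ‖y‖ ^ (-((N : ℝ) + 2 * s)) * D :=
            mul_le_mul_of_nonneg_left (habd _)
              (mul_nonneg (stepWeight_nonneg _ y) (by positivity))
        _ = _ := mul_comm _ _
  · intro x
    simpa only [k, mul_assoc] using hsup x
end
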